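/- Let ψ : ℝ_{>0} → ℝ_{>0} be a decreasing function. Then γ(ψ) ≥ 0, and the Hausdorff dimension of the set of non-ψ-Diophantine l-dimensional subspaces for approximation by k-dimensional rational subspaces equals dim_H E_{l,k}(ψ)^c = (l − k)(n − l) + n/(n/(k(n − l)) + γ(ψ)), valid for every value 0 ≤ γ(ψ) ≤ ∞ (the second summand being interpreted as 0 when γ(ψ) = ∞). -/

import Mathlib

open Filter
open scoped ENNReal NNReal

noncomputable section

/-! ### Distances between linear subspaces of `ℝ^n` -/

/-- The Euclidean norm on `ι → ℝ`. -/
def eucNorm {ι : Type*} [Fintype ι] (v : ι → ℝ) : ℝ := Real.sqrt (∑ i, (v i) ^ 2)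

/-- The Euclidean norm of `v ∧ w` in `⋀² ℝ^n` (standard wedge basis orthonormal). -/
def wedge2Norm {n : ℕ} (v w : Fin n → ℝ) : ℝ :=
  Real.sqrt (∑ i, ∑ j, if i < j then (v i * w j - v j * w i) ^ 2 else 0)

/-- The distance between the lines spanned by the nonzero vectors `v` and `w`:
`d(ℝv, ℝw) = ‖v ∧ w‖ / (‖v‖·‖w‖)`. -/
def dLL {n : ℕ} (v w : Fin n → ℝ) : ℝ := wedge2Norm v w / (eucNorm v * eucNorm w)

/-- The distance from the line spanned by `v` to the subspace `P`: the infimum of the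
distances from the line of `v` to the one-dimensional subspaces of `P`. -/
def dLP {n : ℕ} (v : Fin n → ℝ) (P : Submodule ℝ (Fin n → ℝ)) : ℝ :=
  sInf {r | ∃ w ∈ P, w ≠ 0 ∧ dLL v w = r}

/-- The distance between two subspaces `P, Q` of `ℝ^n`: the maximum, over the
one-dimensional subspaces of the one of smaller dimension, of the distance to the other. -/
def dPP {n : ℕ} (P Q : Submodule ℝ (Fin n → ℝ)) : ℝ :=
  if Module.finrank ℝ P ≤ Module.finrank ℝ Q then
    sSup {r | ∃ v ∈ P, v ≠ 0 ∧ dLP v Q = r}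
  else
    sSup {r | ∃ v ∈ Q, v ≠ 0 ∧ dLP v P = r}

/-- The Grassmannian `X_l(ℝ)` of `l`-dimensional subspaces of `ℝ^n`. -/
abbrev Grass (n l : ℕ) := {P : Submodule ℝ (Fin n → ℝ) // Module.finrank ℝ P = l}

/-- The distance on the Grassmannian `X_l(ℝ)`. -/
def dGr {n l : ℕ} (x y : Grass n l) : ℝ := dPP x.1 y.1

/-! ### Hausdorff dimension with respect to a distance function -/

/-- The (extended) diameter of a set with respect to a distance function. -/
def ediamD {X : Type*} (d : X → X → ℝ) (A : Set X) : ℝ≥0∞ :=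
  ⨆ (x) (_ : x ∈ A) (y) (_ : y ∈ A), ENNReal.ofReal (d x y)

/-- The `s`-dimensional Hausdorff measure with respect to a distance function: the limit
as `δ → 0` of the infimum, over countable covers of mesh at most `δ`, of the sum of the
`s`-th powers of the diameters. -/
def hMeasD {X : Type*} (d : X → X → ℝ) (s : ℝ) (E : Set X) : ℝ≥0∞ :=
  ⨆ (δ : ℝ≥0∞) (_ : 0 < δ),
    ⨅ (t : ℕ → Set X) (_ : E ⊆ ⋃ i, t i) (_ : ∀ i, ediamD d (t i) ≤ δ),
      ∑' i, ediamD d (t i) ^ s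

/-- The Hausdorff dimension of a set with respect to a distance function. -/
def hDimD {X : Type*} (d : X → X → ℝ) (E : Set X) : ℝ≥0∞ :=
  ⨆ (s : ℝ≥0) (_ : hMeasD d s E = ⊤), (s : ℝ≥0∞)

/-! ### Heights of rational subspaces -/

/-- `k`-element subsets of `Fin n`, indexing the wedge basis of `⋀^k ℝ^n`. -/
abbrev WedgeIdx (n k : ℕ) := {s : Finset (Fin n) // s.card = k}

/-- The increasing enumeration of a `k`-element subset of `Fin n`. -/
def subsetEmb {n k : ℕ} (I : WedgeIdx n k) : Fin k → Fin n :=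
  fun a => ((I.1.orderIsoOfFin I.2) a : Fin n)

/-- The coordinates, in the wedge basis of `⋀^k ℤ^n`, of the pure tensor
`f 0 ∧ ⋯ ∧ f (k-1)` of integer vectors. -/
def wedgeCoordsZ {n k : ℕ} (f : Fin k → Fin n → ℤ) : WedgeIdx n k → ℤ :=
  fun I => (Matrix.of fun a b : Fin k => f b (subsetEmb I a)).det

/-- The height `H(P) = ‖v₁ ∧ ⋯ ∧ v_k‖` of the rational subspace with ℤ-basis `f`. -/
def heightB {n k : ℕ} (f : Fin k → Fin n → ℤ) : ℝ :=
  Real.sqrt (∑ I : WedgeIdx n k, ((wedgeCoordsZ f I : ℝ)) ^ 2)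

/-- Cast an integer vector to a real vector. -/
def castVec {n : ℕ} (m : Fin n → ℤ) : Fin n → ℝ := fun i => (m i : ℝ)

/-! ### The Diophantine set and the lower order at infinity -/

/-- The set `E_{l,k}(ψ)` of `ψ`-Diophantine `l`-dimensional subspaces of `ℝ^n`, for
approximation by `k`-dimensional rational subspaces.  Rational subspaces are represented by
tuples `f` of integer vectors that are linearly independent and form a ℤ-basis of
`(span f) ∩ ℤ^n`; the height and distance are then those of the subspace `span f`. -/
def Elk (n k l : ℕ) (ψ : ℝ → ℝ) : Set (Grass n l) :=
  {x | ∃ C > 0, ∀ f : Fin k → Fin n → ℤ,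
    LinearIndependent ℝ (fun i => castVec (f i)) →
    (∀ m : Fin n → ℤ,
        castVec m ∈ Submodule.span ℝ (Set.range fun i => castVec (f i)) →
          ∃ c : Fin k → ℤ, m = fun j => ∑ i, c i * f i j) →
    C * (heightB f) ^ (-(n : ℝ) / ((k : ℝ) * ((n : ℝ) - (l : ℝ)))) * ψ (heightB f) ≤
      dPP (Submodule.span ℝ (Set.range fun i => castVec (f i))) x.1}

/-- `γ(ψ) = liminf_{t → ∞} (-ln ψ(t))/(ln t)`, the lower order of `ψ` at infinity, as an
extended real number. -/
def gammaE (ψ : ℝ → ℝ) : EReal :=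
  liminf (fun t : ℝ => ((-Real.log (ψ t) / Real.log t : ℝ) : EReal)) atTop

/-! ### Elementary properties of the distances -/

theorem eucNorm_nonneg {ι : Type*} [Fintype ι] (v : ι → ℝ) : 0 ≤ eucNorm v := Real.sqrt_nonneg _

theorem eucNorm_sq {ι : Type*} [Fintype ι] (v : ι → ℝ) : eucNorm v ^ 2 = ∑ i, v i ^ 2 :=
  Real.sq_sqrt (Finset.sum_nonneg fun _ _ => sq_nonneg _)

theorem abs_le_eucNorm {ι : Type*} [Fintype ι] (v : ι → ℝ) (i : ι) : |v i| ≤ eucNorm v := by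
  apply Real.abs_le_sqrt
  exact Finset.single_le_sum (f := fun i => v i ^ 2) (fun _ _ => sq_nonneg _) (Finset.mem_univ i)

theorem eucNorm_pos {ι : Type*} [Fintype ι] {v : ι → ℝ} (hv : v ≠ 0) : 0 < eucNorm v := by
  obtain ⟨i, hi⟩ := Function.ne_iff.mp hv
  exact (abs_pos.mpr hi).trans_le (abs_le_eucNorm v i)

theorem eucNorm_zero {ι : Type*} [Fintype ι] : eucNorm (0 : ι → ℝ) = 0 := by
  simp [eucNorm]

theorem eucNorm_le_of_forall_abs_le {n : ℕ} {v : Fin n → ℝ} {c : ℝ} (hc : 0 ≤ c)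
    (h : ∀ i, |v i| ≤ c) : eucNorm v ≤ n * c := by
  refine Real.sqrt_le_iff.mpr ⟨by positivity, ?_⟩
  calc ∑ i, v i ^ 2 ≤ ∑ _i : Fin n, c ^ 2 :=
        Finset.sum_le_sum fun i _ => sq_le_sq' (abs_le.mp (h i)).1 (abs_le.mp (h i)).2
    _ = n * c ^ 2 := by simp
    _ ≤ (n * c) ^ 2 := by
        rw [mul_pow]
        have : (n : ℝ) ≤ n ^ 2 := by exact_mod_cast Nat.le_self_pow two_ne_zero n
        gcongr

/-- Lagrange's identity. -/
theorem wedge2Norm_sq {n : ℕ} (v w : Fin n → ℝ) :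
    wedge2Norm v w ^ 2 = eucNorm v ^ 2 * eucNorm w ^ 2 - (∑ i, v i * w i) ^ 2 := by
  have hs : wedge2Norm v w ^ 2
      = ∑ i, ∑ j, if i < j then (v i * w j - v j * w i) ^ 2 else 0 := by
    refine Real.sq_sqrt (Finset.sum_nonneg fun i _ => Finset.sum_nonneg fun j _ => ?_)
    split_ifs <;> positivity
  have hswap : ∑ i, ∑ j, (if j < i then (v i * w j - v j * w i) ^ 2 else 0)
      = ∑ i, ∑ j, if i < j then (v i * w j - v j * w i) ^ 2 else 0 := by
    rw [Finset.sum_comm]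
    refine Finset.sum_congr rfl fun i _ => Finset.sum_congr rfl fun j _ => ?_
    split_ifs <;> ring
  have hall : ∑ i, ∑ j, (v i * w j - v j * w i) ^ 2
      = ∑ i, ∑ j, (if i < j then (v i * w j - v j * w i) ^ 2 else 0)
        + ∑ i, ∑ j, (if j < i then (v i * w j - v j * w i) ^ 2 else 0) := by
    simp only [← Finset.sum_add_distrib]
    refine Finset.sum_congr rfl fun i _ => Finset.sum_congr rfl fun j _ => ?_
    rcases lt_trichotomy i j with h | h | h
    · simp [h, h.not_gt]
    · subst h; simp
    · simp [h, h.not_gt]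
  have hexp : ∑ i, ∑ j, (v i * w j - v j * w i) ^ 2
      = 2 * ((∑ i, v i ^ 2) * (∑ i, w i ^ 2) - (∑ i, v i * w i) ^ 2) := by
    have h1 : ∑ i, ∑ j, (v i * w j - v j * w i) ^ 2
        = ∑ i, ∑ j, (v i ^ 2 * w j ^ 2 + w i ^ 2 * v j ^ 2
          - 2 * ((v i * w i) * (v j * w j))) := by
      refine Finset.sum_congr rfl fun i _ => Finset.sum_congr rfl fun j _ => by ring
    rw [h1]
    simp only [Finset.sum_sub_distrib, Finset.sum_add_distrib, ← Finset.mul_sum,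
      ← Finset.sum_mul]
    ring
  rw [hs, eucNorm_sq, eucNorm_sq]
  linarith

theorem eucNorm_sub_smul_sq {n : ℕ} (v w : Fin n → ℝ) (s : ℝ) :
    eucNorm (v - s • w) ^ 2
      = eucNorm v ^ 2 - 2 * s * (∑ i, v i * w i) + s ^ 2 * eucNorm w ^ 2 := by
  simp only [eucNorm_sq, Pi.sub_apply, Pi.smul_apply, smul_eq_mul, Finset.mul_sum,
    ← Finset.sum_sub_distrib, ← Finset.sum_add_distrib]
  exact Finset.sum_congr rfl fun i _ => by ring

theorem wedge2Norm_nonneg {n : ℕ} (v w : Fin n → ℝ) : 0 ≤ wedge2Norm v w := Real.sqrt_nonneg _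

theorem dLL_nonneg {n : ℕ} (v w : Fin n → ℝ) : 0 ≤ dLL v w :=
  div_nonneg (wedge2Norm_nonneg _ _) (mul_nonneg (eucNorm_nonneg _) (eucNorm_nonneg _))

theorem wedge2Norm_le {n : ℕ} (v w : Fin n → ℝ) (s : ℝ) :
    wedge2Norm v w ≤ eucNorm (v - s • w) * eucNorm w := by
  refine abs_le_of_sq_le_sq' ?_ (mul_nonneg (eucNorm_nonneg _) (eucNorm_nonneg _)) |>.2
  rw [mul_pow, wedge2Norm_sq, eucNorm_sub_smul_sq]
  nlinarith [sq_nonneg ((∑ i, v i * w i) - s * eucNorm w ^ 2)]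

theorem dLL_le {n : ℕ} {v w : Fin n → ℝ} (hw : w ≠ 0) (s : ℝ) :
    dLL v w ≤ eucNorm (v - s • w) / eucNorm v := by
  have h := eucNorm_pos hw
  rcases (eucNorm_nonneg v).eq_or_lt with h0 | h0
  · simp [dLL, ← h0]
  · rw [dLL, div_le_div_iff₀ (by positivity) h0]
    nlinarith [wedge2Norm_le v w s]

theorem exists_smul_dLL_eq {n : ℕ} {v w : Fin n → ℝ} (hv : v ≠ 0) (hw : w ≠ 0) :
    ∃ s : ℝ, eucNorm (v - s • w) = dLL v w * eucNorm v := by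
  have hv' := eucNorm_pos hv
  have hw' := eucNorm_pos hw
  refine ⟨(∑ i, v i * w i) / eucNorm w ^ 2, ?_⟩
  rw [← sq_eq_sq₀ (eucNorm_nonneg _) (mul_nonneg (dLL_nonneg v w) hv'.le), dLL, mul_pow, div_pow,
    wedge2Norm_sq, eucNorm_sub_smul_sq]
  field_simp
  ring

theorem dLL_le_one {n : ℕ} {v w : Fin n → ℝ} (hw : w ≠ 0) : dLL v w ≤ 1 := by
  refine (dLL_le hw 0).trans ?_
  simpa using div_self_le_one _

theorem dLP_bddBelow {n : ℕ} (v : Fin n → ℝ) (P : Submodule ℝ (Fin n → ℝ)) :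
    BddBelow {r | ∃ w ∈ P, w ≠ 0 ∧ dLL v w = r} :=
  ⟨0, by rintro _ ⟨w, -, -, rfl⟩; exact dLL_nonneg v w⟩

theorem dLP_le_one {n : ℕ} (v : Fin n → ℝ) (P : Submodule ℝ (Fin n → ℝ)) : dLP v P ≤ 1 := by
  by_cases h : ∃ w ∈ P, w ≠ 0
  · obtain ⟨w, hw, hw0⟩ := h
    exact (csInf_le (dLP_bddBelow v P) ⟨w, hw, hw0, rfl⟩).trans (dLL_le_one hw0)
  · have : {r | ∃ w ∈ P, w ≠ 0 ∧ dLL v w = r} = ∅ := by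
      ext r; simp only [Set.mem_ofPred_eq, Set.mem_empty_iff_false, iff_false]
      rintro ⟨w, hw, hw0, -⟩; exact h ⟨w, hw, hw0⟩
    simp [dLP, this]

theorem dPP_bddAbove {n : ℕ} (P Q : Submodule ℝ (Fin n → ℝ)) :
    BddAbove {r | ∃ v ∈ P, v ≠ 0 ∧ dLP v Q = r} :=
  ⟨1, by rintro _ ⟨w, -, -, rfl⟩; exact dLP_le_one w Q⟩

theorem dPP_le_of_forall {n : ℕ} {P Q : Submodule ℝ (Fin n → ℝ)}
    (hPQ : Module.finrank ℝ P ≤ Module.finrank ℝ Q) {ε : ℝ} (hε : 0 ≤ ε)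
    (h : ∀ v ∈ P, ∃ w ∈ Q, eucNorm (v - w) ≤ ε * eucNorm v) : dPP P Q ≤ ε := by
  rw [dPP, if_pos hPQ]
  refine Real.sSup_le ?_ hε
  rintro _ ⟨v, hv, hv0, rfl⟩
  rcases lt_or_ge ε 1 with h1 | h1
  · obtain ⟨w, hw, hvw⟩ := h v hv
    have hvpos := eucNorm_pos hv0
    have hw0 : w ≠ 0 := by
      rintro rfl
      rw [sub_zero] at hvw
      nlinarith
    refine (csInf_le (dLP_bddBelow v Q) ⟨w, hw, hw0, rfl⟩).trans ?_
    refine (dLL_le hw0 1).trans ?_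
    rwa [one_smul, div_le_iff₀ hvpos]
  · exact (dLP_le_one v Q).trans h1

theorem exists_mem_eucNorm_sub_le {n : ℕ} {P Q : Submodule ℝ (Fin n → ℝ)}
    (hPQ : Module.finrank ℝ P ≤ Module.finrank ℝ Q) {η : ℝ} (h : dPP P Q < η)
    {v : Fin n → ℝ} (hv : v ∈ P) : ∃ w ∈ Q, eucNorm (v - w) ≤ η * eucNorm v := by
  by_cases hv0 : v = 0
  · subst hv0
    exact ⟨0, Q.zero_mem, by simp [eucNorm_zero]⟩
  have hQ : ∃ w ∈ Q, w ≠ 0 := by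
    have hP : P ≠ ⊥ := fun hb => hv0 (by simpa [hb] using hv)
    have : 0 < Module.finrank ℝ Q :=
      (Module.finrank_pos_iff (R := ℝ) (M := P)).mpr
        ((Submodule.nontrivial_iff_ne_bot).mpr hP) |>.trans_le hPQ
    refine Submodule.exists_mem_ne_zero_of_ne_bot fun hb => ?_
    rw [hb, finrank_bot] at this
    exact lt_irrefl 0 this
  rw [dPP, if_pos hPQ] at h
  have h1 : dLP v Q < η :=
    (le_csSup (dPP_bddAbove P Q) ⟨v, hv, hv0, rfl⟩).trans_lt h
  obtain ⟨w₀, hw₀, hw₀'⟩ := hQ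
  obtain ⟨_, ⟨w, hw, hw0, rfl⟩, hlt⟩ := exists_lt_of_csInf_lt
    (s := {r | ∃ w ∈ Q, w ≠ 0 ∧ dLL v w = r}) ⟨_, w₀, hw₀, hw₀', rfl⟩ h1
  obtain ⟨s, hs⟩ := exists_smul_dLL_eq hv0 hw0
  refine ⟨s • w, Q.smul_mem s hw, hs.le.trans ?_⟩
  have := eucNorm_nonneg v
  gcongr

/-! ### Graphs of linear maps between coordinate subspaces -/

/-- The graph, in the coordinates split by `e`, of the linear map with matrix `B`. -/
def graphSub {n : ℕ} {α β : Type*} [Fintype α] (e : α ⊕ β ≃ Fin n) (B : β → α → ℝ) :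
    Submodule ℝ (Fin n → ℝ) where
  carrier := {v | ∀ i, v (e (Sum.inr i)) = ∑ a, B i a * v (e (Sum.inl a))}
  add_mem' {v w} hv hw i := by
    simp only [Pi.add_apply, hv i, hw i, mul_add, Finset.sum_add_distrib]
  zero_mem' i := by simp
  smul_mem' c v hv i := by
    simp only [Pi.smul_apply, smul_eq_mul, hv i, Finset.mul_sum]
    exact Finset.sum_congr rfl fun a _ => by ring

theorem forall_fin_iff {n : ℕ} {α β : Type*} (e : α ⊕ β ≃ Fin n) {p : Fin n → Prop} :
    (∀ j, p j) ↔ (∀ a, p (e (Sum.inl a))) ∧ ∀ i, p (e (Sum.inr i)) := by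
  rw [← e.forall_congr_right, Sum.forall]

theorem eucNorm_le_of_split {n : ℕ} {α β : Type*} (e : α ⊕ β ≃ Fin n) {v : Fin n → ℝ} {c : ℝ} (hc : 0 ≤ c)
    (h1 : ∀ a, |v (e (Sum.inl a))| ≤ c) (h2 : ∀ i, |v (e (Sum.inr i))| ≤ c) :
    eucNorm v ≤ n * c :=
  eucNorm_le_of_forall_abs_le hc ((forall_fin_iff e).mpr ⟨h1, h2⟩)

section Graph

variable {n : ℕ} {α β : Type*} [Fintype α] (e : α ⊕ β ≃ Fin n)

theorem mem_graphSub {B : β → α → ℝ} {v : Fin n → ℝ} :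
    v ∈ graphSub e B ↔ ∀ i, v (e (Sum.inr i)) = ∑ a, B i a * v (e (Sum.inl a)) := Iff.rfl

/-- The point of the graph of `B` above `y`. -/
def graphPt (B : β → α → ℝ) (y : α → ℝ) : Fin n → ℝ :=
  fun j => Sum.elim y (fun i => ∑ a, B i a * y a) (e.symm j)

@[simp] theorem graphPt_inl (B : β → α → ℝ) (y : α → ℝ) (a : α) :
    graphPt e B y (e (Sum.inl a)) = y a := by simp [graphPt]

@[simp] theorem graphPt_inr (B : β → α → ℝ) (y : α → ℝ) (i : β) :
    graphPt e B y (e (Sum.inr i)) = ∑ a, B i a * y a := by simp [graphPt]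

theorem graphPt_mem (B : β → α → ℝ) (y : α → ℝ) : graphPt e B y ∈ graphSub e B :=
  fun i => by simp

theorem finrank_graphSub (B : β → α → ℝ) :
    Module.finrank ℝ (graphSub e B) = Fintype.card α := by
  let f : graphSub e B ≃ₗ[ℝ] (α → ℝ) :=
    { toFun := fun v a => v.1 (e (Sum.inl a))
      map_add' := fun _ _ => rfl
      map_smul' := fun _ _ => rfl
      invFun := fun y => ⟨graphPt e B y, graphPt_mem e B y⟩
      left_inv := fun v => by
        refine Subtype.ext (funext ?_)
        rw [forall_fin_iff e]
        exact ⟨fun a => by simp, fun i => by simp [v.2 i]⟩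
      right_inv := fun y => by ext; simp }
  rw [f.finrank_eq, Module.finrank_fintype_fun_eq_card]

theorem abs_sum_mul_le {B y : α → ℝ} {b c : ℝ} (hb : ∀ a, |B a| ≤ b) (hy : ∀ a, |y a| ≤ c)
    (hb0 : 0 ≤ b) : |∑ a, B a * y a| ≤ Fintype.card α * (b * c) := by
  calc |∑ a, B a * y a| ≤ ∑ a, |B a * y a| := Finset.abs_sum_le_sum_abs _ _
    _ ≤ ∑ _a : α, b * c := Finset.sum_le_sum fun a _ => by
        rw [abs_mul]; exact mul_le_mul (hb a) (hy a) (abs_nonneg _) hb0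
    _ = _ := by simp

/-- A subspace is close to a graph if its points almost satisfy the equations of the graph. -/
theorem dPP_graphSub_le {P : Submodule ℝ (Fin n → ℝ)} {B : β → α → ℝ}
    (hP : Module.finrank ℝ P ≤ Fintype.card α) {c : ℝ} (hc : 0 ≤ c)
    (h : ∀ v ∈ P, ∀ i, |v (e (Sum.inr i)) - ∑ a, B i a * v (e (Sum.inl a))| ≤ c * eucNorm v) :
    dPP P (graphSub e B) ≤ n * c := by
  refine dPP_le_of_forall (by rwa [finrank_graphSub]) (by positivity) fun v hv => ?_
  refine ⟨graphPt e B fun a => v (e (Sum.inl a)), graphPt_mem e B _, ?_⟩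
  have := eucNorm_nonneg v
  rw [mul_assoc]
  refine eucNorm_le_of_split e (by positivity) (fun a => ?_) fun i => ?_
  · simp; positivity
  · simpa using h v hv i

/-- The points of a subspace close to a graph almost satisfy the equations of the graph. -/
theorem abs_sub_le_of_dPP_graphSub_lt {P : Submodule ℝ (Fin n → ℝ)} {B : β → α → ℝ}
    (hP : Module.finrank ℝ P ≤ Fintype.card α) (hB : ∀ i a, |B i a| ≤ 1) {η : ℝ}
    (h : dPP P (graphSub e B) < η) {v : Fin n → ℝ} (hv : v ∈ P) (i : β) :
    |v (e (Sum.inr i)) - ∑ a, B i a * v (e (Sum.inl a))|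
      ≤ (Fintype.card α + 1) * (η * eucNorm v) := by
  obtain ⟨w, hw, hvw⟩ := exists_mem_eucNorm_sub_le (by rwa [finrank_graphSub]) h hv
  have hd : ∀ j, |v j - w j| ≤ η * eucNorm v := fun j => (abs_le_eucNorm (v - w) j).trans hvw
  have heq : v (e (Sum.inr i)) - ∑ a, B i a * v (e (Sum.inl a))
      = (v (e (Sum.inr i)) - w (e (Sum.inr i)))
        - ∑ a, B i a * (v (e (Sum.inl a)) - w (e (Sum.inl a))) := by
    simp only [mul_sub, Finset.sum_sub_distrib, hw i]; ring
  rw [heq]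
  refine (abs_sub _ _).trans ?_
  have h2 := abs_sum_mul_le (B := B i) (y := fun a => v (e (Sum.inl a)) - w (e (Sum.inl a)))
    (hB i) (fun a => hd _) zero_le_one
  have h1 := hd (e (Sum.inr i))
  linarith

end Graph

/-! ### Maximal minors -/

section MaxMinor

variable {α ι : Type*} [Fintype α] [DecidableEq α] [Fintype ι]

theorem exists_minor_ne_zero {M : α → ι → ℝ} (hM : LinearIndependent ℝ M) :
    ∃ s : α → ι, (Matrix.of fun a b => M a (s b)).det ≠ 0 := by
  have hr : (Matrix.of M).rank = Fintype.card α := LinearIndependent.rank_matrix hM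
  rw [Matrix.rank_eq_finrank_span_cols] at hr
  obtain ⟨f, hf, -, hfi⟩ := Submodule.exists_fun_fin_finrank_span_eq ℝ (Set.range (Matrix.of M).col)
  let σ : α ≃ Fin (Module.finrank ℝ (Submodule.span ℝ (Set.range (Matrix.of M).col))) :=
    (Fintype.equivFin α).trans (finCongr hr.symm)
  choose t ht using hf
  refine ⟨fun a => t (σ a), ?_⟩
  have hind : LinearIndependent ℝ (Matrix.of fun a b => M a (t (σ b))).col := by
    have : (Matrix.of fun a b => M a (t (σ b))).col = f ∘ σ := by
      funext b
      simp only [Function.comp, ← ht]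
      rfl
    rw [this]
    exact hfi.comp _ σ.injective
  rw [Matrix.linearIndependent_cols_iff_isUnit, Matrix.isUnit_iff_isUnit_det] at hind
  exact hind.ne_zero

/-- Choosing a maximal minor, all coordinates on a subspace are linear combinations, with
coefficients in `[-1, 1]`, of the coordinates of that minor. -/
theorem exists_max_minor {M : α → ι → ℝ} (hM : LinearIndependent ℝ M) :
    ∃ (s : α → ι) (W : ι → α → ℝ), (Matrix.of fun a b => M a (s b)).det ≠ 0 ∧
      (∀ j a, |W j a| ≤ 1) ∧
      ∀ v ∈ Submodule.span ℝ (Set.range M), ∀ j, v j = ∑ a, W j a * v (s a) := by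
  obtain ⟨s₀, hs₀⟩ := exists_minor_ne_zero hM
  have : Nonempty (α → ι) := ⟨s₀⟩
  obtain ⟨s, hs⟩ := Finite.exists_max fun s : α → ι => |(Matrix.of fun a b => M a (s b)).det|
  set D := Matrix.of fun a b => M a (s b) with hD
  have hD0 : D.det ≠ 0 := abs_pos.mp ((abs_pos.mpr hs₀).trans_le (hs s₀))
  refine ⟨s, fun j a => D.cramer (fun i => M i j) a / D.det, hD0, fun j a => ?_, fun v hv j => ?_⟩
  · classical
    rw [abs_div, div_le_one (abs_pos.mpr hD0), Matrix.cramer_apply]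
    have : D.updateCol a (fun i => M i j)
        = Matrix.of fun i b => M i (Function.update s a j b) := by
      ext i b
      by_cases hb : b = a
      · subst hb; simp
      · simp [hb, hD]
    rw [this]
    exact hs _
  · have hbasis : ∀ i, M i j = ∑ a, D.cramer (fun i => M i j) a / D.det * M i (s a) := by
      intro i
      have h1 := congrFun (D.mulVec_cramer fun i => M i j) i
      simp only [Matrix.mulVec, dotProduct, Pi.smul_apply, smul_eq_mul] at h1
      have h2 : M i j = (∑ a, D i a * D.cramer (fun i => M i j) a) / D.det := by
        rw [h1]; field_simp
      rw [h2, Finset.sum_div]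
      refine Finset.sum_congr rfl fun a _ => ?_
      simp only [hD, Matrix.of_apply]
      ring
    induction hv using Submodule.span_induction with
    | mem x hx => obtain ⟨i, rfl⟩ := hx; exact hbasis i
    | zero => simp
    | add x y _ _ hx hy =>
      simp only [Pi.add_apply, mul_add, Finset.sum_add_distrib, ← hx, ← hy]
    | smul c x _ hx =>
      simp only [Pi.smul_apply, smul_eq_mul]
      rw [hx, Finset.mul_sum]
      exact Finset.sum_congr rfl fun a _ => by ring

theorem exists_equiv_extending {α β ι : Type*} [Fintype α] [Fintype β] [Fintype ι] {s : α → ι}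
    (hs : Function.Injective s) (hcard : Fintype.card ι = Fintype.card α + Fintype.card β) :
    ∃ e : α ⊕ β ≃ ι, ∀ a, e (Sum.inl a) = s a := by
  classical
  have hc : Fintype.card β = Fintype.card ((Set.range s)ᶜ : Set ι) := by
    rw [Fintype.card_compl_set, Set.card_range_of_injective hs, hcard]; omega
  exact ⟨(Equiv.sumCongr (Equiv.ofInjective s hs) (Fintype.equivOfCardEq hc)).trans
    (Equiv.Set.sumCompl (Set.range s)), fun a => by simp⟩

/-- Every subspace is, after a permutation of the coordinates, the graph of a linear map with
coefficients in `[-1, 1]`. -/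
theorem exists_equiv_coeff_le_one {β : Type*} [Fintype β] [DecidableEq ι]
    (V : Submodule ℝ (ι → ℝ)) (hV : Module.finrank ℝ V = Fintype.card α)
    (hcard : Fintype.card ι = Fintype.card α + Fintype.card β) :
    ∃ (e : α ⊕ β ≃ ι) (B : β → α → ℝ), (∀ i a, |B i a| ≤ 1) ∧
      ∀ v ∈ V, ∀ i, v (e (Sum.inr i)) = ∑ a, B i a * v (e (Sum.inl a)) := by
  let b := (Module.finBasisOfFinrankEq ℝ V hV).reindex (Fintype.equivFin α).symm
  have hind : LinearIndependent ℝ fun a => (b a : ι → ℝ) :=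
    b.linearIndependent.map' V.subtype (Submodule.ker_subtype V)
  obtain ⟨s, W, hdet, hW, hrep⟩ := exists_max_minor hind
  have hs : Function.Injective s := by
    intro a a' haa
    by_contra hne
    refine hdet (Matrix.det_zero_of_column_eq hne fun i => ?_)
    simp [haa]
  obtain ⟨e, he⟩ := exists_equiv_extending (β := β) hs hcard
  refine ⟨e, fun i a => W (e (Sum.inr i)) a, fun i a => hW _ _, fun v hv i => ?_⟩
  have hspan : v ∈ Submodule.span ℝ (Set.range fun a => (b a : ι → ℝ)) := by
    have : (Set.range fun a => (b a : ι → ℝ)) = V.subtype '' Set.range b := by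
      rw [← Set.range_comp]; rfl
    rw [this, Submodule.span_image, b.span_eq, Submodule.map_top, Submodule.range_subtype]
    exact hv
  simpa only [he] using hrep v hspan (e (Sum.inr i))

end MaxMinor

theorem exists_eq_graphSub {n : ℕ} {α β : Type*} [Fintype α] [DecidableEq α] [Fintype β]
    (V : Submodule ℝ (Fin n → ℝ)) (hV : Module.finrank ℝ V = Fintype.card α)
    (hcard : n = Fintype.card α + Fintype.card β) :
    ∃ (e : α ⊕ β ≃ Fin n) (B : β → α → ℝ), (∀ i a, |B i a| ≤ 1) ∧ V = graphSub e B := by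
  obtain ⟨e, B, hB, h⟩ := exists_equiv_coeff_le_one (β := β) V hV (by simpa using hcard)
  refine ⟨e, B, hB, Submodule.eq_of_le_of_finrank_eq (fun v hv => h v hv) ?_⟩
  rw [hV, finrank_graphSub]

/-! ### Successive minima of integral lattices -/

theorem castVec_eq_zero {n : ℕ} {m : Fin n → ℤ} : castVec m = 0 ↔ m = 0 := by
  simp [funext_iff, castVec]

open MeasureTheory in
/-- Minkowski's theorem on linear forms. -/
theorem exists_int_abs_mulVec_lt {k : ℕ} (A : Matrix (Fin k) (Fin k) ℝ) (hA : A.det ≠ 0)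
    (r : Fin k → ℝ) (hr : ∀ j, 0 < r j) (hlt : |A.det| < ∏ j, r j) :
    ∃ d : Fin k → ℤ, d ≠ 0 ∧ ∀ j, |A.mulVec (castVec d) j| < r j := by
  set s : Set (Fin k → ℝ) :=
    (Matrix.toLin' A) ⁻¹' (Set.pi Set.univ fun j => Set.Ioo (-r j) (r j)) with hs
  have hmem : ∀ x, x ∈ s ↔ ∀ j, |A.mulVec x j| < r j := by
    intro x
    simp [hs, abs_lt]
  have hdet : LinearMap.det (Matrix.toLin' A) ≠ 0 := by rwa [LinearMap.det_toLin']
  have hvol : volume s = ENNReal.ofReal (|A.det|⁻¹ * ∏ j, (2 * r j)) := by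
    rw [hs, Measure.addHaar_preimage_linearMap _ hdet, Real.volume_pi_Ioo, LinearMap.det_toLin',
      abs_inv, ENNReal.ofReal_mul (by positivity),
      ← ENNReal.ofReal_prod_of_nonneg (fun j _ => by have := hr j; linarith)]
    congr 3
    funext j; ring
  have hconv : Convex ℝ s :=
    (convex_pi fun j _ => convex_Ioo _ _).linear_preimage _
  have hsymm : ∀ x ∈ s, -x ∈ s := by
    intro x hx
    rw [hmem] at hx ⊢
    intro j
    rw [Matrix.mulVec_neg, Pi.neg_apply, abs_neg]
    exact hx j
  have hfd := ZSpan.isAddFundamentalDomain' (Pi.basisFun ℝ (Fin k)) (volume : Measure (Fin k → ℝ))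
  have hlt' : volume (ZSpan.fundamentalDomain (Pi.basisFun ℝ (Fin k)))
      * 2 ^ Module.finrank ℝ (Fin k → ℝ) < volume s := by
    rw [hvol, ZSpan.fundamentalDomain_pi_basisFun, Real.volume_pi_Ico]
    simp only [sub_zero, ENNReal.ofReal_one, Finset.prod_const_one, one_mul,
      Module.finrank_fin_fun]
    rw [show (2 : ℝ≥0∞) ^ k = ENNReal.ofReal (2 ^ k) by
      rw [ENNReal.ofReal_pow (by norm_num)]; norm_num]
    have hA' : 0 < |A.det| := abs_pos.mpr hA
    refine (ENNReal.ofReal_lt_ofReal_iff_of_nonneg (by positivity)).mpr ?_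
    rw [Finset.prod_mul_distrib, Finset.prod_const, Finset.card_univ, Fintype.card_fin,
      inv_mul_eq_div, lt_div_iff₀ hA']
    exact mul_lt_mul_of_pos_left hlt (by positivity)
  have : Countable (Submodule.span ℤ (Set.range (Pi.basisFun ℝ (Fin k)))).toAddSubgroup :=
    inferInstanceAs (Countable (Submodule.span ℤ (Set.range (Pi.basisFun ℝ (Fin k)))))
  obtain ⟨⟨x, hx⟩, hx0, hxs⟩ :=
    exists_ne_zero_mem_lattice_of_measure_mul_two_pow_lt_measure hfd hsymm hconv hlt'
  have hx' : ∀ i, ∃ c : ℤ, (c : ℝ) = x i := by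
    have := (Pi.basisFun ℝ (Fin k)).mem_span_iff_repr_mem ℤ x |>.mp hx
    intro i
    obtain ⟨c, hc⟩ := this i
    exact ⟨c, by simpa using hc⟩
  choose d hd using hx'
  have hdx : castVec d = x := funext hd
  refine ⟨d, fun h0 => hx0 ?_, (hmem _).mp (by rw [hdx]; exact hxs)⟩
  apply Subtype.ext
  change x = 0
  rw [← hdx, h0]
  exact castVec_eq_zero.mpr rfl

/-- Greedy choice of integer vectors realising the successive minima of `ν`. -/
theorem exists_successive_minima {k : ℕ} (ν : (Fin k → ℤ) → ℕ) (j : ℕ) (hj : j ≤ k) :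
    ∃ c : Fin j → Fin k → ℤ, LinearIndependent ℝ (fun i => castVec (c i)) ∧
      ∀ i d, castVec d ∉ Submodule.span ℝ ((fun i => castVec (c i)) '' Set.Iio i) →
        ν (c i) ≤ ν d := by
  induction j with
  | zero => exact ⟨Fin.elim0, linearIndependent_empty_type, fun i => i.elim0⟩
  | succ j ih =>
    obtain ⟨c, hc, hmin⟩ := ih (by omega)
    set S := Submodule.span ℝ (Set.range fun i => castVec (c i)) with hS
    have hne : ∃ d : Fin k → ℤ, castVec d ∉ S := by
      by_contra! hall
      have htop : S = ⊤ := by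
        rw [eq_top_iff, ← (Pi.basisFun ℝ (Fin k)).span_eq, Submodule.span_le]
        rintro _ ⟨i, rfl⟩
        have := hall (Pi.single i 1)
        have hb : Pi.basisFun ℝ (Fin k) i = castVec (Pi.single i 1) := by
          ext a
          simp [castVec, Pi.single_apply]
        rw [hb]
        exact this
      have h1 : Module.finrank ℝ S = j := by rw [hS, finrank_span_eq_card hc, Fintype.card_fin]
      rw [htop, finrank_top, Module.finrank_fin_fun] at h1
      omega
    obtain ⟨d₀, hd₀, hd₀min⟩ :=
      exists_minimalFor_of_wellFoundedLT (fun d => castVec d ∉ S) ν hne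
    refine ⟨Fin.snoc c d₀, ?_, fun i d hd => ?_⟩
    · have : (fun i => castVec ((Fin.snoc c d₀ : Fin (j + 1) → Fin k → ℤ) i))
          = Fin.snoc (fun i => castVec (c i)) (castVec d₀) := by
        funext i
        refine Fin.lastCases ?_ (fun i => ?_) i <;> simp
      rw [this, linearIndependent_finSnoc]
      exact ⟨hc, hd₀⟩
    · induction i using Fin.lastCases with
      | last =>
        rw [Fin.snoc_last]
        have hdS : castVec d ∉ S := by
          refine fun h => hd (Submodule.span_mono ?_ h)
          rintro _ ⟨a, rfl⟩
          exact ⟨a.castSucc, Fin.castSucc_lt_last a, by simp⟩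
        rcases le_total (ν d₀) (ν d) with h | h
        · exact h
        · exact hd₀min hdS h
      | cast i =>
        rw [Fin.snoc_castSucc]
        refine hmin i d fun h => hd (Submodule.span_mono ?_ h)
        rintro _ ⟨a, ha, rfl⟩
        exact ⟨a.castSucc, by simpa using ha, by simp⟩

/-- Upper bound in Minkowski's second theorem for integral lattices. -/
theorem exists_prod_eucNorm_le {k : ℕ} (F : Matrix (Fin k) (Fin k) ℤ) (hF : F.det ≠ 0) :
    ∃ c : Fin k → Fin k → ℤ, LinearIndependent ℝ (fun i => castVec (c i)) ∧
      ∏ i, eucNorm (castVec (F.mulVec (c i))) ≤ (2 * k : ℝ) ^ k * |(F.det : ℝ)| := by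
  set Fr : Matrix (Fin k) (Fin k) ℝ := F.map (Int.cast : ℤ → ℝ) with hFr
  have hdetF : Fr.det = (F.det : ℝ) := by
    rw [hFr]; exact (Int.cast_det F).symm
  have hcast : ∀ d : Fin k → ℤ, castVec (F.mulVec d) = Fr.mulVec (castVec d) := by
    intro d; ext i; simp [castVec, Matrix.mulVec, dotProduct, hFr]
  obtain ⟨c, hc, hmin⟩ := exists_successive_minima
    (fun d => ∑ j, (F.mulVec d j).natAbs ^ 2) k le_rfl
  set g : (Fin k → ℝ) →ₗ[ℝ] EuclideanSpace ℝ (Fin k) :=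
    (WithLp.linearEquiv 2 ℝ (Fin k → ℝ)).symm.toLinearMap ∘ₗ Matrix.toLin' Fr with hg
  have hgap : ∀ x i, g x i = Fr.mulVec x i := fun x i => by simp [hg]
  have hnorm : ∀ d : Fin k → ℤ, ‖g (castVec d)‖ = eucNorm (castVec (F.mulVec d)) := by
    intro d
    rw [EuclideanSpace.norm_eq, eucNorm]
    simp [hgap, hcast]
  have hnu : ∀ d : Fin k → ℤ, eucNorm (castVec (F.mulVec d)) ^ 2
      = ((∑ j, (F.mulVec d j).natAbs ^ 2 : ℕ) : ℝ) := by
    intro d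
    rw [eucNorm_sq]
    push_cast
    refine Finset.sum_congr rfl fun j _ => ?_
    rw [castVec, Nat.cast_natAbs]
    push_cast
    rw [sq_abs]
  set lam : Fin k → ℝ := fun i => eucNorm (castVec (F.mulVec (c i))) with hlam
  have hlmin : ∀ i d, castVec d ∉ Submodule.span ℝ ((fun i => castVec (c i)) '' Set.Iio i) →
      lam i ≤ eucNorm (castVec (F.mulVec d)) := by
    intro i d hd
    refine abs_le_of_sq_le_sq' ?_ (eucNorm_nonneg _) |>.2
    rw [hlam]
    simp only
    rw [hnu, hnu]
    exact_mod_cast hmin i d hd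
  have hnotmem : ∀ i j : Fin k, i ≤ j →
      castVec (c j) ∉ Submodule.span ℝ ((fun i => castVec (c i)) '' Set.Iio i) := fun i j hij =>
    hc.notMem_span_image (by simpa using hij)
  have hlmono : ∀ i j : Fin k, i ≤ j → lam i ≤ lam j := fun i j hij =>
    hlmin i (c j) (hnotmem i j hij)
  have hcne : ∀ i, c i ≠ 0 := fun i h0 => hc.ne_zero i (castVec_eq_zero.mpr h0)
  have hFinj : ∀ x : Fin k → ℝ, Fr.mulVec x = 0 → x = 0 := fun x hx =>
    Matrix.eq_zero_of_mulVec_eq_zero (by rw [hdetF]; exact_mod_cast hF) hx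
  have hlpos : ∀ i, 0 < lam i := by
    intro i
    refine eucNorm_pos fun h0 => hcne i ?_
    rw [hcast] at h0
    exact castVec_eq_zero.mp (hFinj _ h0)
  refine ⟨c, hc, ?_⟩
  change ∏ i, lam i ≤ _
  by_contra! hbig
  set o := InnerProductSpace.gramSchmidtOrthonormalBasis (𝕜 := ℝ)
    (E := EuclideanSpace ℝ (Fin k)) (by simp) (fun i => g (castVec (c i))) with ho
  set O : Matrix (Fin k) (Fin k) ℝ := Matrix.of fun i j => o i j with hO
  have hOO : O * O.transpose = 1 := by
    ext i j
    rw [Matrix.mul_apply, Matrix.one_apply, ← orthonormal_iff_ite.mp o.orthonormal i j]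
    simp [hO, PiLp.inner_apply, mul_comm]
  have hOdet : |O.det| = 1 := by
    have := congrArg Matrix.det hOO
    rw [Matrix.det_mul, Matrix.det_transpose, Matrix.det_one] at this
    rw [← abs_one, ← sq_eq_sq_iff_abs_eq_abs, one_pow, sq, this]
  have hinner : ∀ x j, (O * Fr).mulVec x j = inner ℝ (o j) (g x) := by
    intro x j
    rw [← Matrix.mulVec_mulVec]
    simp [Matrix.mulVec, dotProduct, hO, PiLp.inner_apply, hgap, mul_comm]
  rcases Nat.eq_zero_or_pos k with rfl | hk
  · simp at hbig
  have hk' : (0 : ℝ) < k := by exact_mod_cast hk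
  have hdet : |(O * Fr).det| = |(F.det : ℝ)| := by
    rw [Matrix.det_mul, abs_mul, hOdet, one_mul, hdetF]
  have hFpos : (0 : ℝ) < |(F.det : ℝ)| := abs_pos.mpr (by exact_mod_cast hF)
  obtain ⟨d, hd0, hd⟩ := exists_int_abs_mulVec_lt (O * Fr)
    (abs_pos.mp (by rw [hdet]; exact hFpos)) (fun j => lam j / (2 * k))
    (fun j => div_pos (hlpos j) (by positivity)) (by
      rw [hdet, Finset.prod_div_distrib, Finset.prod_const, Finset.card_univ, Fintype.card_fin,
        lt_div_iff₀ (by positivity)]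
      linarith)
  have hspanall : castVec d ∈ Submodule.span ℝ (Set.range fun i => castVec (c i)) := by
    rw [hc.span_eq_top_of_card_eq_finrank' (by simp)]
    trivial
  -- the largest index whose preceding vectors do not span `d`
  obtain ⟨i, hi, himax⟩ : ∃ i : Fin k,
      castVec d ∉ Submodule.span ℝ ((fun i => castVec (c i)) '' Set.Iio i) ∧
      ∀ j, i < j → castVec d ∈ Submodule.span ℝ ((fun i => castVec (c i)) '' Set.Iio j) := by
    classical
    have hne : (Finset.univ.filter fun i : Fin k =>
        castVec d ∉ Submodule.span ℝ ((fun i => castVec (c i)) '' Set.Iio i)).Nonempty := by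
      refine ⟨⟨0, hk⟩, ?_⟩
      have : Set.Iio (⟨0, hk⟩ : Fin k) = ∅ := by
        ext a; simp [Fin.lt_def]
      simp [this, castVec_eq_zero, hd0]
    obtain ⟨i, hi, hmax⟩ := Finset.exists_max_image _ id hne
    refine ⟨i, (Finset.mem_filter.mp hi).2, fun j hij => ?_⟩
    by_contra hcon
    exact absurd (hmax j (Finset.mem_filter.mpr ⟨Finset.mem_univ _, hcon⟩)) (not_le.mpr hij)
  have hmem : castVec d ∈ Submodule.span ℝ ((fun i => castVec (c i)) '' Set.Iic i) := by
    by_cases hlast : (i : ℕ) + 1 < k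
    · have := himax ⟨i + 1, hlast⟩ (by simp [Fin.lt_def])
      have hIio : Set.Iio (⟨i + 1, hlast⟩ : Fin k) = Set.Iic i := by
        ext a
        rw [Set.mem_Iio, Set.mem_Iic, Fin.lt_def, Fin.le_def]
        exact Nat.lt_succ_iff
      rwa [hIio] at this
    · have huniv : Set.Iic i = Set.univ := by
        refine Set.eq_univ_of_forall fun a => ?_
        rw [Set.mem_Iic, Fin.le_def]
        omega
      rwa [huniv, Set.image_univ]
  have hzero : ∀ j, i < j → inner ℝ (o j) (g (castVec d)) = 0 := by
    intro j hij
    have hle : Submodule.span ℝ ((fun i => castVec (c i)) '' Set.Iic i)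
        ≤ LinearMap.ker ((innerₛₗ ℝ (o j)).comp g) := by
      rw [Submodule.span_le]
      rintro _ ⟨a, ha, rfl⟩
      simp only [SetLike.mem_coe, LinearMap.mem_ker, LinearMap.comp_apply, innerₛₗ_apply_apply]
      exact InnerProductSpace.gramSchmidtOrthonormalBasis_inv_triangular _ _
        (lt_of_le_of_lt ha hij)
    simpa using hle hmem
  have hsq : ∑ j, inner ℝ (o j) (g (castVec d)) ^ 2 = eucNorm (castVec (F.mulVec d)) ^ 2 := by
    rw [o.sum_sq_inner_right, hnorm]
  have hle : ∀ j, inner ℝ (o j) (g (castVec d)) ^ 2 ≤ (lam i / (2 * k)) ^ 2 := by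
    intro j
    rcases le_or_gt j i with hji | hij
    · have h1 := hd j
      rw [hinner] at h1
      have h2 : lam j / (2 * k) ≤ lam i / (2 * k) := by
        have := hlmono j i hji
        gcongr
      exact sq_le_sq' (by linarith [(abs_lt.mp h1).1]) (by linarith [(abs_lt.mp h1).2])
    · rw [hzero j hij, zero_pow two_ne_zero]; positivity
  have hsum : eucNorm (castVec (F.mulVec d)) ^ 2 ≤ k * (lam i / (2 * k)) ^ 2 := by
    rw [← hsq]
    refine (Finset.sum_le_sum fun j _ => hle j).trans ?_
    simp
  have hge : lam i ^ 2 ≤ eucNorm (castVec (F.mulVec d)) ^ 2 :=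
    pow_le_pow_left₀ (hlpos i).le (hlmin i d hi) 2
  have hk1 : (1 : ℝ) ≤ k := by exact_mod_cast hk
  have : k * (lam i / (2 * k)) ^ 2 = lam i ^ 2 / (4 * k) := by field_simp; norm_num
  have h4 : lam i ^ 2 / (4 * k) < lam i ^ 2 := by
    rw [div_lt_iff₀ (by positivity)]
    nlinarith [pow_pos (hlpos i) 2]
  linarith

/-! ### Heights and reduced bases -/

theorem heightB_nonneg {n k : ℕ} (f : Fin k → Fin n → ℤ) : 0 ≤ heightB f := Real.sqrt_nonneg _

theorem abs_det_le_heightB {n k : ℕ} (f : Fin k → Fin n → ℤ) (s : Fin k → Fin n) :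
    |((Matrix.of fun a b : Fin k => f b (s a)).det : ℝ)| ≤ heightB f := by
  by_cases hs : Function.Injective s
  · let I : WedgeIdx n k := ⟨Finset.univ.image s, by
      rw [Finset.card_image_of_injective _ hs, Finset.card_univ, Fintype.card_fin]⟩
    have hex : ∀ a, ∃ b, subsetEmb I b = s a := by
      intro a
      refine ⟨(I.1.orderIsoOfFin I.2).symm
        ⟨s a, Finset.mem_image_of_mem s (Finset.mem_univ a)⟩, ?_⟩
      simp [subsetEmb]
    choose σ hσ using hex
    have hσi : Function.Injective σ := fun a b hab => hs (by rw [← hσ a, ← hσ b, hab])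
    let σe : Equiv.Perm (Fin k) := Equiv.ofBijective σ (Finite.injective_iff_bijective.mp hσi)
    have hdet : |(Matrix.of fun a b : Fin k => f b (s a)).det| = |wedgeCoordsZ f I| := by
      have : (Matrix.of fun a b : Fin k => f b (s a))
          = (Matrix.of fun a b : Fin k => f b (subsetEmb I a)).submatrix σe (Equiv.refl _) := by
        ext a b
        simp [σe, hσ]
      rw [this, Matrix.abs_det_submatrix_equiv_equiv]
      rfl
    rw [← Int.cast_abs, hdet, Int.cast_abs]
    exact Real.abs_le_sqrt (Finset.single_le_sum
      (f := fun I => (wedgeCoordsZ f I : ℝ) ^ 2) (fun _ _ => sq_nonneg _) (Finset.mem_univ I))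
  · obtain ⟨a, b, hab, hne⟩ : ∃ a b, s a = s b ∧ a ≠ b := by
      simpa [Function.Injective] using hs
    rw [Matrix.det_zero_of_row_eq hne (by ext c; simp [hab])]
    simpa using heightB_nonneg f

theorem intCast_det_of {n k : ℕ} (f : Fin k → Fin n → ℤ) (s : Fin k → Fin n) :
    (Matrix.of fun a b => castVec (f a) (s b)).det
      = ((Matrix.of fun a b : Fin k => f b (s a)).det : ℝ) := by
  rw [Int.cast_det, ← Matrix.det_transpose]
  rfl

/-- A rational subspace has a basis of integer vectors whose norms have product bounded by
a multiple of the height. -/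
theorem exists_reduced_basis {n k : ℕ} {f : Fin k → Fin n → ℤ}
    (hf : LinearIndependent ℝ fun i => castVec (f i)) :
    1 ≤ heightB f ∧ ∃ b : Fin k → Fin n → ℤ, LinearIndependent ℝ (fun i => castVec (b i)) ∧
      Submodule.span ℝ (Set.range fun i => castVec (b i))
        = Submodule.span ℝ (Set.range fun i => castVec (f i)) ∧
      ∏ i, eucNorm (castVec (b i)) ≤ (n * k) ^ k * ((2 * k) ^ k * heightB f) := by
  obtain ⟨s, W, hdet, hW, hrep⟩ := exists_max_minor hf
  set F : Matrix (Fin k) (Fin k) ℤ := Matrix.of fun a b : Fin k => f b (s a) with hF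
  rw [intCast_det_of] at hdet
  have hF0 : F.det ≠ 0 := by exact_mod_cast hdet
  have hFH : |(F.det : ℝ)| ≤ heightB f := abs_det_le_heightB f s
  have hF1 : (1 : ℝ) ≤ |(F.det : ℝ)| := by exact_mod_cast Int.one_le_abs hF0
  refine ⟨hF1.trans hFH, ?_⟩
  obtain ⟨c, hc, hprod⟩ := exists_prod_eucNorm_le F hF0
  set b : Fin k → Fin n → ℤ := fun i j => ∑ a, c i a * f a j with hb
  have hbcast : ∀ i, castVec (b i) = ∑ a, castVec (c i) a • castVec (f a) := by
    intro i; ext j; simp [hb, castVec]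
  have hbmem : ∀ i, castVec (b i) ∈ Submodule.span ℝ (Set.range fun i => castVec (f i)) := by
    intro i
    rw [hbcast]
    exact Submodule.sum_mem _ fun a _ => Submodule.smul_mem _ _ (Submodule.subset_span ⟨a, rfl⟩)
  have hbind : LinearIndependent ℝ fun i => castVec (b i) := by
    have := hc.map' (Fintype.linearCombination ℝ fun a => castVec (f a))
      (LinearMap.ker_eq_bot.mpr hf.fintypeLinearCombination_injective)
    have hcomp : (fun i => castVec (b i))
        = (Fintype.linearCombination ℝ fun a => castVec (f a)) ∘ fun i => castVec (c i) := by
      funext i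
      rw [hbcast]
      rfl
    rw [hcomp]
    exact this
  have hbs : ∀ i a, castVec (b i) (s a) = castVec (F.mulVec (c i)) a := by
    intro i a
    simp [castVec, hb, F, Matrix.mulVec, dotProduct, mul_comm]
  refine ⟨b, hbind, ?_, ?_⟩
  · refine Submodule.eq_of_le_of_finrank_eq (Submodule.span_le.mpr ?_) ?_
    · rintro _ ⟨i, rfl⟩; exact hbmem i
    · rw [finrank_span_eq_card hbind, finrank_span_eq_card hf]
  · have hle : ∀ i, eucNorm (castVec (b i)) ≤ n * k * eucNorm (castVec (F.mulVec (c i))) := by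
      intro i
      rw [mul_assoc]
      refine eucNorm_le_of_forall_abs_le (by have := eucNorm_nonneg (castVec (F.mulVec (c i))); positivity) fun j => ?_
      rw [hrep _ (hbmem i) j]
      refine (abs_sum_mul_le (c := eucNorm (castVec (F.mulVec (c i)))) (hW j) (fun a => ?_)
        zero_le_one).trans (by simp)
      rw [hbs]
      exact abs_le_eucNorm _ a
    calc ∏ i, eucNorm (castVec (b i))
        ≤ ∏ i, (n * k * eucNorm (castVec (F.mulVec (c i)))) :=
          Finset.prod_le_prod (fun i _ => eucNorm_nonneg _) fun i _ => hle i
      _ = (n * k) ^ k * ∏ i, eucNorm (castVec (F.mulVec (c i))) := by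
          rw [Finset.prod_mul_distrib]; simp
      _ ≤ (n * k) ^ k * ((2 * k) ^ k * heightB f) := by
          gcongr
          exact hprod.trans (by gcongr)

theorem heightB_le_of_abs_le {n k : ℕ} {f : Fin k → Fin n → ℤ} {x : ℝ} (hx : 0 ≤ x)
    (h : ∀ i j, |(f i j : ℝ)| ≤ x) :
    heightB f ≤ Fintype.card (WedgeIdx n k) * (k.factorial * x ^ k) := by
  have hw : ∀ I, |(wedgeCoordsZ f I : ℝ)| ≤ k.factorial * x ^ k := by
    intro I
    rw [wedgeCoordsZ, Int.cast_det]
    have := Matrix.det_le (A := (Matrix.of fun a b : Fin k => f b (subsetEmb I a)).map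
      (Int.cast : ℤ → ℝ)) (abv := AbsoluteValue.abs) (x := x) (fun i j => by simpa using h _ _)
    simpa using this
  refine Real.sqrt_le_iff.mpr ⟨by positivity, ?_⟩
  set y : ℝ := k.factorial * x ^ k
  have hy : 0 ≤ y := by positivity
  have hcard : (Fintype.card (WedgeIdx n k) : ℝ) ≤ (Fintype.card (WedgeIdx n k) : ℝ) ^ 2 := by
    exact_mod_cast Nat.le_self_pow two_ne_zero _
  calc ∑ I, (wedgeCoordsZ f I : ℝ) ^ 2 ≤ ∑ _I : WedgeIdx n k, y ^ 2 :=
        Finset.sum_le_sum fun I _ => sq_le_sq' (abs_le.mp (hw I)).1 (abs_le.mp (hw I)).2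
    _ = Fintype.card (WedgeIdx n k) * y ^ 2 := by simp
    _ ≤ _ := by rw [mul_pow (Fintype.card (WedgeIdx n k) : ℝ)]; exact mul_le_mul_of_nonneg_right hcard (sq_nonneg y)

/-- A rational subspace has a `ℤ`-basis of its integer points, whose height is at most that of
any tuple of integer vectors spanning the subspace. -/
theorem exists_primitive_basis {n k : ℕ} {p : Fin k → Fin n → ℤ}
    (hp : LinearIndependent ℝ fun i => castVec (p i)) :
    ∃ f : Fin k → Fin n → ℤ, LinearIndependent ℝ (fun i => castVec (f i)) ∧
      Submodule.span ℝ (Set.range fun i => castVec (f i))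
        = Submodule.span ℝ (Set.range fun i => castVec (p i)) ∧
      (∀ m : Fin n → ℤ, castVec m ∈ Submodule.span ℝ (Set.range fun i => castVec (f i)) →
          ∃ c : Fin k → ℤ, m = fun j => ∑ i, c i * f i j) ∧
      heightB f ≤ heightB p := by
  set P := Submodule.span ℝ (Set.range fun i => castVec (p i)) with hP
  let φ : (Fin n → ℤ) →ₗ[ℤ] (Fin n → ℝ) :=
    { toFun := castVec
      map_add' := fun x y => by ext; simp [castVec]
      map_smul' := fun c x => by ext; simp [castVec] }
  let L : Submodule ℤ (Fin n → ℤ) := (P.restrictScalars ℤ).comap φ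
  have hL : ∀ m, m ∈ L ↔ castVec m ∈ P := fun m => Iff.rfl
  obtain ⟨r, b⟩ := Submodule.basisOfPid (Pi.basisFun ℤ (Fin n)) L
  have hrep : ∀ m ∈ L, ∃ c : Fin r → ℤ, m = fun j => ∑ i, c i * (b i : Fin n → ℤ) j := by
    intro m hm
    refine ⟨fun i => b.repr ⟨m, hm⟩ i, ?_⟩
    have := congrArg Subtype.val (b.sum_repr ⟨m, hm⟩)
    funext j
    refine (congrFun this j).symm.trans ?_
    simp only [Submodule.coe_sum, Submodule.coe_smul, Finset.sum_apply, Pi.smul_apply,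
      smul_eq_mul]
  have hspan : Submodule.span ℝ (Set.range fun i => castVec (b i : Fin n → ℤ)) = P := by
    apply le_antisymm
    · rw [Submodule.span_le]
      rintro _ ⟨i, rfl⟩
      exact (hL _).mp (b i).2
    · rw [hP, Submodule.span_le]
      rintro _ ⟨i, rfl⟩
      obtain ⟨c, hc⟩ := hrep (p i) ((hL _).mpr (Submodule.subset_span ⟨i, rfl⟩))
      have : castVec (p i) = ∑ a, (c a : ℝ) • castVec (b a : Fin n → ℤ) := by
        ext j; rw [hc]; simp [castVec]
      change castVec (p i) ∈ _
      rw [this]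
      exact Submodule.sum_mem _ fun a _ => Submodule.smul_mem _ _ (Submodule.subset_span ⟨a, rfl⟩)
  have hli : LinearIndependent ℤ fun i => (b i : Fin n → ℤ) :=
    b.linearIndependent.map' L.subtype (Submodule.ker_subtype L)
  have hliR : LinearIndependent ℝ fun i => castVec (b i : Fin n → ℤ) := by
    have := (linearIndependent_algebraMap_comp_iff (R := ℤ) (S := ℝ)
      (v := fun i => (b i : Fin n → ℤ))).mpr hli
    exact this
  have hr : r = k := by
    have h1 := finrank_span_eq_card hliR
    rw [hspan, hP, finrank_span_eq_card hp, Fintype.card_fin, Fintype.card_fin] at h1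
    exact h1.symm
  subst hr
  refine ⟨fun i => b i, hliR, hspan, fun m hm => hrep m ((hL m).mpr (hspan ▸ hm)), ?_⟩
  choose M hM using fun i => hrep (p i) ((hL _).mpr (Submodule.subset_span ⟨i, rfl⟩))
  have hwp : ∀ I, wedgeCoordsZ p I = wedgeCoordsZ (fun i => (b i : Fin n → ℤ)) I *
      (Matrix.of fun a c => M c a).det := by
    intro I
    rw [wedgeCoordsZ, wedgeCoordsZ, ← Matrix.det_mul]
    congr 1
    ext a c
    rw [Matrix.mul_apply]
    simp only [Matrix.of_apply]
    rw [hM c]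
    exact Finset.sum_congr rfl fun i _ => mul_comm _ _
  have hD0 : (Matrix.of fun a c => M c a).det ≠ 0 := by
    intro h0
    have hz : heightB p = 0 := by simp [heightB, hwp, h0]
    have := (exists_reduced_basis hp).1
    linarith
  have hD1 : (1 : ℝ) ≤ (((Matrix.of fun a c => M c a).det : ℤ) : ℝ) ^ 2 := by
    rw [← sq_abs, ← one_pow 2]
    gcongr
    exact_mod_cast Int.one_le_abs hD0
  refine Real.sqrt_le_sqrt (Finset.sum_le_sum fun I _ => ?_)
  rw [hwp, Int.cast_mul, mul_pow]
  exact le_mul_of_one_le_right (sq_nonneg _) hD1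

/-! ### Sums over integer vectors -/

theorem tsum_ofReal_eucNorm_rpow_ne_top {n : ℕ} {q : ℝ} (hq : (n : ℝ) < q) :
    ∑' v : Fin n → ℤ, ENNReal.ofReal (eucNorm (castVec v) ^ (-q)) ≠ ⊤ := by
  have hq0 : 0 < q := lt_of_le_of_lt (Nat.cast_nonneg n) hq
  let L : Submodule ℤ (Fin n → ℝ) := Submodule.span ℤ (Set.range (Pi.basisFun ℝ (Fin n)))
  have hrank : Module.finrank ℤ L = n := by
    rw [ZLattice.rank ℝ L, Module.finrank_fin_fun]
  have hL : ∀ v : Fin n → ℤ, castVec v ∈ L := fun v =>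
    (Pi.basisFun ℝ (Fin n)).mem_span_iff_repr_mem ℤ (castVec v) |>.mpr
      fun i => ⟨v i, by simp [castVec]⟩
  have hinj : Function.Injective fun v : Fin n → ℤ => (⟨castVec v, hL v⟩ : L) := by
    intro v w h
    funext i
    have := congrFun (congrArg Subtype.val h) i
    simpa [castVec] using this
  have hs := (ZLattice.summable_norm_rpow L (-q) (by rw [hrank]; linarith)).comp_injective hinj
  refine ne_top_of_le_ne_top hs.tsum_ofReal_ne_top (ENNReal.tsum_le_tsum fun v => ?_)
  refine ENNReal.ofReal_le_ofReal ?_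
  change eucNorm (castVec v) ^ (-q) ≤ ‖castVec v‖ ^ (-q)
  by_cases hv : castVec v = 0
  · rw [hv, eucNorm_zero, norm_zero]
  · refine Real.rpow_le_rpow_of_nonpos (norm_pos_iff.mpr hv) ?_ (by linarith)
    rw [pi_norm_le_iff_of_nonneg (eucNorm_nonneg _)]
    exact fun i => abs_le_eucNorm _ i

theorem tsum_prod_ne_top {V : Type*} {g : V → ℝ≥0∞} (hg : ∑' v, g v ≠ ⊤) (k : ℕ) :
    ∑' b : Fin k → V, ∏ i, g (b i) ≠ ⊤ := by
  induction k with
  | zero => simp [tsum_fintype]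
  | succ k ih =>
    rw [← (Fin.consEquiv fun _ : Fin (k + 1) => V).tsum_eq]
    simp only [Fin.consEquiv_apply, Fin.prod_univ_succ, Fin.cons_zero, Fin.cons_succ]
    rw [ENNReal.tsum_prod']
    simp only [ENNReal.tsum_mul_left, ENNReal.tsum_mul_right]
    exact ENNReal.mul_ne_top hg ih

/-! ### Hausdorff measures of covered sets -/

theorem ediamD_empty {X : Type*} (d : X → X → ℝ) : ediamD d ∅ = 0 := by simp [ediamD]

theorem ediamD_le {X : Type*} {d : X → X → ℝ} {A : Set X} {r : ℝ}
    (h : ∀ x ∈ A, ∀ y ∈ A, d x y ≤ r) : ediamD d A ≤ ENNReal.ofReal r :=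
  iSup₂_le fun x hx => iSup₂_le fun y hy => ENNReal.ofReal_le_ofReal (h x hx y hy)

theorem ofReal_le_ediamD {X : Type*} {d : X → X → ℝ} {A : Set X} {x y : X} (hx : x ∈ A)
    (hy : y ∈ A) : ENNReal.ofReal (d x y) ≤ ediamD d A :=
  le_iSup₂_of_le x hx (le_iSup₂_of_le y hy le_rfl)

theorem hMeasD_le_of_covers {X : Type*} {d : X → X → ℝ} {s : ℝ} (hs : 0 < s) {E : Set X}
    {M : ℝ≥0∞} (h : ∀ δ : ℝ≥0∞, 0 < δ → ∃ (ι : Type) (_ : Countable ι) (U : ι → Set X),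
      E ⊆ ⋃ i, U i ∧ (∀ i, ediamD d (U i) ≤ δ) ∧ ∑' i, ediamD d (U i) ^ s ≤ M) :
    hMeasD d s E ≤ M := by
  refine iSup₂_le fun δ hδ => ?_
  obtain ⟨ι, hι, U, hE, hU, hM⟩ := h δ hδ
  have := Encodable.ofCountable ι
  refine iInf_le_of_le (fun i => ⋃ b ∈ Encodable.decode₂ ι i, U b) <|
    iInf_le_of_le (by rwa [Encodable.iUnion_decode₂]) <| iInf_le_of_le (fun i => ?_) ?_
  · exact Encodable.iUnion_decode₂_cases (C := fun A => ediamD d A ≤ δ)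
      (by simp [ediamD_empty]) hU
  · rw [tsum_iUnion_decode₂ (fun A => ediamD d A ^ s) (by simp [ediamD_empty, hs])]
    exact hM

/-! ### Neighbourhoods of rational subspaces in the Grassmannian -/

/-- The subspaces near `P` that are graphs over the coordinates `e ∘ inl` whose second block of
coefficients lies in the cell `g` of mesh `ε`, when `P` projects isomorphically to the first
block of coordinates. -/
def nbhdCell {n k m N : ℕ} (P : Submodule ℝ (Fin n → ℝ)) (ε : ℝ)
    (e : (Fin k ⊕ Fin m) ⊕ Fin N ≃ Fin n) (g : Fin N → Fin m → ℕ) : Set (Grass n (k + m)) :=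
  {x | dPP P x.1 < ε ∧
    (∃ A : Fin m → Fin k → ℝ, (∀ j a, |A j a| ≤ 1) ∧ ∀ a, ∃ v ∈ P,
      (∀ a', v (e (Sum.inl (Sum.inl a'))) = if a' = a then 1 else 0) ∧
      ∀ j, v (e (Sum.inl (Sum.inr j))) = A j a) ∧
    ∃ B : Fin N → (Fin k ⊕ Fin m) → ℝ, (∀ i a, |B i a| ≤ 1) ∧ x.1 = graphSub e B ∧
      ∀ i j, ⌊(B i (Sum.inr j) + 1) / ε⌋₊ = g i j}

theorem graphSub_sumCongr {n : ℕ} {α β : Type*} [Fintype α] (e : α ⊕ β ≃ Fin n) (σ : α ≃ α)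
    (B : β → α → ℝ) :
    graphSub ((Equiv.sumCongr σ (Equiv.refl β)).trans e) (fun i a => B i (σ a)) = graphSub e B := by
  ext v
  simp only [mem_graphSub, Equiv.trans_apply, Equiv.sumCongr_apply, Sum.map_inr, Sum.map_inl,
    Equiv.refl_apply]
  refine forall_congr' fun i => ?_
  rw [Equiv.sum_comp σ fun a => B i a * v (e (Sum.inl a))]

theorem abs_sub_le_of_floor_eq {x y ε : ℝ} (hε : 0 < ε) (hx : 0 ≤ x) (hy : 0 ≤ y)
    (h : ⌊x / ε⌋₊ = ⌊y / ε⌋₊) : |x - y| ≤ ε := by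
  have h1 := Nat.floor_le (div_nonneg hx hε.le)
  have h2 := Nat.lt_floor_add_one (x / ε)
  have h3 := Nat.floor_le (div_nonneg hy hε.le)
  have h4 := Nat.lt_floor_add_one (y / ε)
  rw [h] at h1 h2
  have h5 : |x / ε - y / ε| ≤ 1 := abs_le.mpr ⟨by linarith, by linarith⟩
  rw [← sub_div, abs_div, abs_of_pos hε, div_le_one hε] at h5
  exact h5

theorem mem_nbhdCell {n k m N : ℕ} (hn : n = k + m + N) {P : Submodule ℝ (Fin n → ℝ)}
    (hP : Module.finrank ℝ P = k) {ε : ℝ} (hε : 0 < ε)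
    (hεs : n * ((k + m + 1) * ε) ≤ 1 / 2)
    {x : Grass n (k + m)} (hx : dPP P x.1 < ε) :
    ∃ e g, x ∈ nbhdCell (N := N) P ε e g ∧ ∀ i j, g i j < ⌊2 / ε⌋₊ + 1 := by
  obtain ⟨e₀, B₀, hB₀, hxB₀⟩ := exists_eq_graphSub (α := Fin k ⊕ Fin m) (β := Fin N) x.1
    (by simpa using x.2) (by simpa using hn)
  let pr : (Fin n → ℝ) →ₗ[ℝ] (Fin k ⊕ Fin m → ℝ) := LinearMap.funLeft ℝ ℝ fun a => e₀ (Sum.inl a)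
  have hpr : ∀ v a, pr v a = v (e₀ (Sum.inl a)) := fun _ _ => rfl
  have hinj : ∀ v ∈ P, pr v = 0 → v = 0 := by
    intro v hv h0
    have hbd : ∀ i, |v (e₀ (Sum.inr i))| ≤ (k + m + 1) * (ε * eucNorm v) := by
      intro i
      have := abs_sub_le_of_dPP_graphSub_lt e₀ (by simp [hP]) hB₀ (hxB₀ ▸ hx) hv i
      have hz : ∀ a, v (e₀ (Sum.inl a)) = 0 := fun a => congrFun h0 a
      simpa [hz] using this
    by_contra hv0
    have hvp := eucNorm_pos hv0
    have := eucNorm_le_of_split e₀ (v := v) (c := (k + m + 1) * (ε * eucNorm v)) (by positivity)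
      (fun a => by rw [show v (e₀ (Sum.inl a)) = 0 from congrFun h0 a]; simp; positivity) hbd
    nlinarith
  have hrank : Module.finrank ℝ (P.map pr) = k := by
    rw [← LinearMap.range_domRestrict]
    refine (LinearMap.finrank_range_of_inj ?_).trans hP
    rw [injective_iff_map_eq_zero]
    rintro ⟨v, hv⟩ h0
    exact Subtype.ext (hinj v hv h0)
  obtain ⟨σ, A, hA, hrep⟩ := exists_equiv_coeff_le_one (α := Fin k) (β := Fin m) (P.map pr)
    (by simpa using hrank) (by simp)
  let e := (Equiv.sumCongr σ (Equiv.refl (Fin N))).trans e₀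
  have he : ∀ a, e (Sum.inl a) = e₀ (Sum.inl (σ a)) := fun a => rfl
  have hA' : ∀ v ∈ P, ∀ j, v (e (Sum.inl (Sum.inr j))) = ∑ a, A j a * v (e (Sum.inl (Sum.inl a))) :=
    fun v hv j => hrep _ (Submodule.mem_map_of_mem hv) j
  let prK : P →ₗ[ℝ] (Fin k → ℝ) :=
    (LinearMap.funLeft ℝ ℝ fun a => e (Sum.inl (Sum.inl a))).comp P.subtype
  have hprK : Function.Surjective prK := by
    rw [← LinearMap.injective_iff_surjective_of_finrank_eq_finrank (by simp [hP]),
      injective_iff_map_eq_zero]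
    rintro ⟨v, hv⟩ h0
    have hz : ∀ a, v (e (Sum.inl (Sum.inl a))) = 0 := fun a => congrFun h0 a
    refine Subtype.ext (hinj v hv ?_)
    funext a
    obtain ⟨a, rfl⟩ := σ.surjective a
    rw [hpr, ← he]
    rcases a with a | j
    · exact hz a
    · rw [hA' v hv]; simp [hz]
  refine ⟨e, fun i j => ⌊(B₀ i (σ (Sum.inr j)) + 1) / ε⌋₊, ⟨hx, ⟨A, hA, fun a => ?_⟩,
    fun i a => B₀ i (σ a), fun i a => hB₀ i _, ?_, fun i j => rfl⟩, fun i j => ?_⟩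
  · obtain ⟨⟨v, hv⟩, hva⟩ := hprK (fun a' => if a' = a then 1 else 0)
    have hva' : ∀ a', v (e (Sum.inl (Sum.inl a'))) = if a' = a then 1 else 0 :=
      fun a' => congrFun hva a'
    exact ⟨v, hv, hva', fun j => by rw [hA' v hv]; simp [hva']⟩
  · rw [hxB₀]; exact (graphSub_sumCongr e₀ σ B₀).symm
  · refine Nat.lt_succ_of_le (Nat.floor_le_floor ?_)
    have := (abs_le.mp (hB₀ i (σ (Sum.inr j)))).2
    gcongr
    linarith

/-- A constant bounding the diameter of a cell in terms of its mesh. -/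
def cellConst (n l : ℕ) : ℝ := n * (l * (4 * n * (l + 1) ^ 2 + l + 1))

theorem cellConst_nonneg (n l : ℕ) : 0 ≤ cellConst n l := by unfold cellConst; positivity

theorem ediamD_nbhdCell_le {n k m N : ℕ} {P : Submodule ℝ (Fin n → ℝ)}
    (hP : Module.finrank ℝ P = k) {ε : ℝ} (hε : 0 < ε)
    (hεs : n * ((k + m + 1) * ε) ≤ 1 / 2)
    (e : (Fin k ⊕ Fin m) ⊕ Fin N ≃ Fin n) (g : Fin N → Fin m → ℕ) :
    ediamD dGr (nbhdCell P ε e g) ≤ ENNReal.ofReal (cellConst n (k + m) * ε) := by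
  refine ediamD_le ?_
  rintro x ⟨hx, ⟨A, hA, hPA⟩, B, hB, hxB, hg⟩ x' ⟨hx', -, B', hB', hxB', hg'⟩
  set l : ℝ := k + m with hl
  have hl0 : 0 ≤ l := by positivity
  have hl' : ((k + m : ℕ) : ℝ) = l := by push_cast; rfl
  have hlc : (Fintype.card (Fin k ⊕ Fin m) : ℝ) = l := by simp [hl]
  have h2 : ∀ i j, |B i (Sum.inr j) - B' i (Sum.inr j)| ≤ ε := by
    intro i j
    have := abs_sub_le_of_floor_eq hε
      (by linarith [(abs_le.mp (hB i (Sum.inr j))).1] : 0 ≤ B i (Sum.inr j) + 1)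
      (by linarith [(abs_le.mp (hB' i (Sum.inr j))).1] : 0 ≤ B' i (Sum.inr j) + 1)
      ((hg i j).trans (hg' i j).symm)
    simpa using this
  have h1 : ∀ i a, |B i (Sum.inl a) - B' i (Sum.inl a)| ≤ (4 * n * (l + 1) ^ 2 + l) * ε := by
    intro i a
    obtain ⟨v, hv, hvK, hvM⟩ := hPA a
    have hvJ : ∀ b, |v (e (Sum.inl b))| ≤ 1 := by
      rintro (b | j)
      · rw [hvK]; split_ifs <;> simp
      · rw [hvM]; exact hA j a
    have hb := fun i => abs_sub_le_of_dPP_graphSub_lt e (by simp [hP]) hB (hxB ▸ hx) hv i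
    have hb' := fun i => abs_sub_le_of_dPP_graphSub_lt e (by simp [hP]) hB' (hxB' ▸ hx') hv i
    rw [hlc] at hb hb'
    have hvn := eucNorm_nonneg v
    have hnorm : eucNorm v ≤ 2 * n * (l + 1) := by
      have hN : ∀ i, |v (e (Sum.inr i))| ≤ l + 1 + (l + 1) * (ε * eucNorm v) := by
        intro i
        have hs := abs_sum_mul_le (hB i) hvJ zero_le_one
        rw [hlc, mul_one, mul_one] at hs
        have := hb i
        rw [abs_le] at this hs ⊢
        constructor <;> linarith
      have := eucNorm_le_of_split e (v := v) (c := l + 1 + (l + 1) * (ε * eucNorm v))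
        (by positivity) (fun b => (hvJ b).trans (by nlinarith [mul_nonneg hε.le hvn, mul_nonneg hl0 (mul_nonneg hε.le hvn)])) hN
      nlinarith
    have hsplit : ∀ B : Fin N → (Fin k ⊕ Fin m) → ℝ, ∑ b, B i b * v (e (Sum.inl b))
        = B i (Sum.inl a) + ∑ j, B i (Sum.inr j) * A j a := by
      intro B
      rw [Fintype.sum_sum_type]
      simp [hvK, hvM]
    have e1 := hb i
    have e2 := hb' i
    rw [hsplit] at e1 e2
    have e3 : |∑ j, (B i (Sum.inr j) - B' i (Sum.inr j)) * A j a| ≤ m * (ε * 1) := by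
      simpa using abs_sum_mul_le (h2 i) (fun j => hA j a) hε.le
    simp only [sub_mul, Finset.sum_sub_distrib, mul_one] at e3
    have hm : (m : ℝ) * ε ≤ l * ε := by
      have : (m : ℝ) ≤ l := by simp [hl]
      gcongr
    have e4 : (l + 1) * (ε * eucNorm v) ≤ 2 * n * (l + 1) ^ 2 * ε := by
      calc (l + 1) * (ε * eucNorm v) ≤ (l + 1) * (ε * (2 * n * (l + 1))) := by gcongr
        _ = _ := by ring
    rw [abs_le] at e1 e2 e3 ⊢
    constructor <;> linarith
  have hall : ∀ i b, |B i b - B' i b| ≤ (4 * n * (l + 1) ^ 2 + l + 1) * ε := by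
    rintro i (a | j)
    · exact (h1 i a).trans (mul_le_mul_of_nonneg_right (by linarith) hε.le)
    · refine (h2 i j).trans ?_
      nlinarith [mul_nonneg (by positivity : 0 ≤ 4 * (n : ℝ) * (l + 1) ^ 2 + l) hε.le]
  have := dPP_graphSub_le (P := graphSub e B) e (B := B')
    (c := l * ((4 * n * (l + 1) ^ 2 + l + 1) * ε)) (by rw [finrank_graphSub]) (by positivity) (by
      intro v hv i
      rw [(mem_graphSub e).mp hv i, ← Finset.sum_sub_distrib]
      simp only [← sub_mul]
      refine (abs_sum_mul_le (hall i) (fun a => abs_le_eucNorm v _) (by positivity)).trans ?_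
      rw [hlc, mul_assoc l])
  rw [dGr, hxB, hxB']
  refine this.trans (le_of_eq ?_)
  rw [cellConst, hl']
  ring

theorem one_le_eucNorm_castVec {n : ℕ} {v : Fin n → ℤ} (hv : v ≠ 0) : 1 ≤ eucNorm (castVec v) := by
  obtain ⟨i, hi⟩ := Function.ne_iff.mp hv
  refine le_trans ?_ (abs_le_eucNorm (castVec v) i)
  rw [castVec]
  exact_mod_cast Int.one_le_abs hi

theorem exists_pos_small (a b : ℝ) (ha : 0 ≤ a) (hb : 0 ≤ b) {δ : ℝ≥0∞} (hδ : 0 < δ) :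
    ∃ η : ℝ, 0 < η ∧ η ≤ 1 ∧ a * η ≤ 1 / 2 ∧ ENNReal.ofReal (b * η) ≤ δ := by
  obtain ⟨r, hr0, hrδ⟩ := ENNReal.lt_iff_exists_real_btwn.mp hδ
  have hr : 0 < r := by simpa using hrδ.1
  refine ⟨min 1 (min (1 / (2 * (a + 1))) (r / (b + 1))), by positivity, min_le_left _ _, ?_, ?_⟩
  · calc a * _ ≤ a * (1 / (2 * (a + 1))) := by
          gcongr
          exact (min_le_right _ _).trans (min_le_left _ _)
      _ ≤ 1 / 2 := by
          rw [mul_one_div, div_le_div_iff₀ (by positivity) (by norm_num)]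
          linarith
  · refine (ENNReal.ofReal_le_ofReal ?_).trans hrδ.2.le
    calc b * _ ≤ b * (r / (b + 1)) := by
          gcongr
          exact (min_le_right _ _).trans (min_le_right _ _)
      _ ≤ r := by
          rw [mul_div_assoc', div_le_iff₀ (by positivity)]
          nlinarith

/-- A set of subspaces, all of which are approximated by rational subspaces to a summable order,
has finite Hausdorff measure. -/
theorem hMeasD_ne_top_of_approx {n k m N : ℕ} (hn : n = k + m + N) {p q : ℝ} (hp : 0 < p)
    (hq : (n : ℝ) < q) {E : Set (Grass n (k + m))}
    (hE : ∀ x ∈ E, ∀ η > 0, ∃ b : Fin k → Fin n → ℤ, LinearIndependent ℝ (fun i => castVec (b i)) ∧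
      dPP (Submodule.span ℝ (Set.range fun i => castVec (b i))) x.1
        < η * (∏ i, eucNorm (castVec (b i))) ^ (-(q / p))) :
    hMeasD dGr (p + (m * N : ℕ)) E ≠ ⊤ := by
  have hq0 : 0 < q := lt_of_le_of_lt (Nat.cast_nonneg n) hq
  set s : ℝ := p + (m * N : ℕ) with hs
  have hs0 : 0 < s := by positivity
  set C := cellConst n (k + m) with hC
  have hC0 : 0 ≤ C := cellConst_nonneg _ _
  set T : ℝ≥0∞ := ∑' b : Fin k → Fin n → ℤ,
    ∏ i, ENNReal.ofReal (eucNorm (castVec (b i)) ^ (-q)) with hT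
  have hTtop : T ≠ ⊤ := tsum_prod_ne_top (tsum_ofReal_eucNorm_rpow_ne_top hq) k
  set K : ℝ := Fintype.card ((Fin k ⊕ Fin m) ⊕ Fin N ≃ Fin n) * 3 ^ (m * N) * C ^ s with hK
  have hK0 : 0 ≤ K := by positivity
  suffices hMeasD dGr s E ≤ ENNReal.ofReal K * T from
    ne_top_of_le_ne_top (ENNReal.mul_ne_top ENNReal.ofReal_ne_top hTtop) this
  refine hMeasD_le_of_covers hs0 fun δ hδ => ?_
  obtain ⟨η, hη0, hη1, hηn, hηδ⟩ := exists_pos_small (n * (k + m + 1)) C (by positivity) hC0 hδ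
  let I := {b : Fin k → Fin n → ℤ // LinearIndependent ℝ (fun i => castVec (b i))}
  have hprod : ∀ b : I, 1 ≤ ∏ i, eucNorm (castVec (b.1 i)) := fun b =>
    Finset.prod_induction _ (1 ≤ ·) (fun _ _ => one_le_mul_of_one_le_of_one_le) le_rfl
      fun i _ => one_le_eucNorm_castVec fun h0 =>
      b.2.ne_zero i (castVec_eq_zero.mpr h0)
  let ε : I → ℝ := fun b => η * (∏ i, eucNorm (castVec (b.1 i))) ^ (-(q / p))
  have hε0 : ∀ b, 0 < ε b := fun b =>
    mul_pos hη0 (Real.rpow_pos_of_pos (zero_lt_one.trans_le (hprod b)) _)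
  have hεη : ∀ b, ε b ≤ η := fun b => by
    refine mul_le_of_le_one_right hη0.le (Real.rpow_le_one_of_one_le_of_nonpos (hprod b) ?_)
    have : 0 < q / p := by positivity
    linarith
  let P : I → Submodule ℝ (Fin n → ℝ) := fun b =>
    Submodule.span ℝ (Set.range fun i => castVec (b.1 i))
  have hP : ∀ b, Module.finrank ℝ (P b) = k := fun b => by
    simpa using finrank_span_eq_card b.2
  have hεs : ∀ b, n * ((k + m + 1) * ε b) ≤ 1 / 2 := fun b => by
    refine le_trans ?_ hηn
    rw [← mul_assoc]
    have := hεη b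
    gcongr
  let G : I → ℕ := fun b => ⌊2 / ε b⌋₊ + 1
  let U : (Σ b : I, ((Fin k ⊕ Fin m) ⊕ Fin N ≃ Fin n) × (Fin N → Fin m → Fin (G b))) →
      Set (Grass n (k + m)) := fun i => nbhdCell (P i.1) (ε i.1) i.2.1 fun a j => i.2.2 a j
  have hdiam : ∀ i, ediamD dGr (U i) ≤ ENNReal.ofReal (C * ε i.1) := fun i =>
    ediamD_nbhdCell_le (hP i.1) (hε0 i.1) (hεs i.1) _ _
  refine ⟨_, inferInstance, U, fun x hx => ?_, fun i => ?_, ?_⟩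
  · obtain ⟨b, hb, hbx⟩ := hE x hx η hη0
    obtain ⟨e, g, hxg, hg⟩ := mem_nbhdCell (N := N) hn (hP ⟨b, hb⟩) (hε0 ⟨b, hb⟩) (hεs ⟨b, hb⟩) hbx
    exact Set.mem_iUnion.mpr ⟨⟨⟨b, hb⟩, e, fun i j => ⟨g i j, hg i j⟩⟩, hxg⟩
  · refine (hdiam i).trans (le_trans (ENNReal.ofReal_le_ofReal ?_) hηδ)
    exact mul_le_mul_of_nonneg_left (hεη _) hC0
  · rw [ENNReal.tsum_sigma']
    have hinner : ∀ b : I, ∑' c, ediamD dGr (U ⟨b, c⟩) ^ s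
        ≤ ENNReal.ofReal K * ∏ i, ENNReal.ofReal (eucNorm (castVec (b.1 i)) ^ (-q)) := by
      intro b
      calc ∑' c, ediamD dGr (U ⟨b, c⟩) ^ s
          ≤ ∑' _c : ((Fin k ⊕ Fin m) ⊕ Fin N ≃ Fin n) × (Fin N → Fin m → Fin (G b)),
              ENNReal.ofReal (C * ε b) ^ s :=
            ENNReal.tsum_le_tsum fun c => ENNReal.rpow_le_rpow (hdiam ⟨b, c⟩) hs0.le
        _ = ENNReal.ofReal (Fintype.card ((Fin k ⊕ Fin m) ⊕ Fin N ≃ Fin n) * (G b : ℝ) ^ (m * N)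
              * (C * ε b) ^ s) := by
            rw [tsum_fintype, Finset.sum_const, Finset.card_univ, Fintype.card_prod,
              nsmul_eq_mul, ENNReal.ofReal_rpow_of_nonneg (mul_nonneg hC0 (hε0 b).le) hs0.le,
              ENNReal.ofReal_mul (by positivity)]
            congr 1
            simp only [Fintype.card_pi, Fintype.card_fin, Finset.prod_const, Finset.card_univ]
            rw [ENNReal.ofReal_mul (by positivity), ENNReal.ofReal_natCast,
              ENNReal.ofReal_pow (by positivity), ENNReal.ofReal_natCast]
            push_cast
            rw [pow_mul]
        _ ≤ ENNReal.ofReal (K * (∏ i, eucNorm (castVec (b.1 i))) ^ (-q)) := by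
            refine ENNReal.ofReal_le_ofReal ?_
            have hG : (G b : ℝ) ≤ 3 / ε b := by
              have h1 : (⌊2 / ε b⌋₊ : ℝ) ≤ 2 / ε b :=
                Nat.floor_le (div_nonneg zero_le_two (hε0 b).le)
              have h2 : 1 ≤ 1 / ε b := (one_le_div (hε0 b)).mpr ((hεη b).trans hη1)
              simp only [G, Nat.cast_add, Nat.cast_one]
              have : 3 / ε b = 2 / ε b + 1 / ε b := by ring
              linarith
            have hε' := hε0 b
            have hεp : ε b ^ p ≤ (∏ i, eucNorm (castVec (b.1 i))) ^ (-q) := by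
              have hp1 := zero_lt_one.trans_le (hprod b)
              simp only [ε]
              rw [Real.mul_rpow hη0.le (Real.rpow_nonneg hp1.le _), ← Real.rpow_mul hp1.le,
                show -(q / p) * p = -q by field_simp]
              exact mul_le_of_le_one_left (Real.rpow_nonneg hp1.le _)
                (Real.rpow_le_one hη0.le hη1 hp.le)
            have hsplit : (3 / ε b) ^ (m * N) * (C * ε b) ^ s = 3 ^ (m * N) * C ^ s * ε b ^ p := by
              rw [Real.mul_rpow hC0 hε'.le, hs, Real.rpow_add hε', Real.rpow_natCast, div_pow]
              field_simp
            calc _ ≤ Fintype.card ((Fin k ⊕ Fin m) ⊕ Fin N ≃ Fin n) * (3 / ε b) ^ (m * N)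
                    * (C * ε b) ^ s := by gcongr
              _ = K * ε b ^ p := by rw [mul_assoc, hsplit, hK]; ring
              _ ≤ _ := by gcongr
        _ = _ := by
            rw [ENNReal.ofReal_mul hK0, ← Real.finsetProd_rpow _ _ fun i _ => eucNorm_nonneg _,
              ENNReal.ofReal_prod_of_nonneg fun i _ => Real.rpow_nonneg (eucNorm_nonneg _) _]
    refine (ENNReal.tsum_le_tsum hinner).trans ?_
    rw [ENNReal.tsum_mul_left]
    gcongr
    exact ENNReal.tsum_comp_le_tsum_of_injective Subtype.val_injective
      fun b : Fin k → Fin n → ℤ => ∏ i, ENNReal.ofReal (eucNorm (castVec (b i)) ^ (-q))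

/-! ### The lower order -/

theorem gammaE_nonneg {ψ : ℝ → ℝ} (hψpos : ∀ t > 0, 0 < ψ t)
    (hψdec : ∀ s t : ℝ, 0 < s → s ≤ t → ψ t ≤ ψ s) : (0 : EReal) ≤ gammaE ψ := by
  have hlim : Tendsto (fun t : ℝ => ((-Real.log (ψ 1) / Real.log t : ℝ) : EReal)) atTop
      (nhds ((0 : ℝ) : EReal)) :=
    (continuous_coe_real_ereal.tendsto 0).comp
      (Real.tendsto_log_atTop.const_div_atTop (-Real.log (ψ 1)))
  rw [← EReal.coe_zero, ← hlim.liminf_eq]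
  refine liminf_le_liminf ?_
  filter_upwards [eventually_gt_atTop (1 : ℝ)] with t ht
  have h1 := Real.log_pos ht
  have h2 := Real.log_le_log (hψpos t (by linarith)) (hψdec 1 t one_pos ht.le)
  rw [EReal.coe_le_coe_iff]
  gcongr

theorem exists_le_rpow_of_lt_gammaE {ψ : ℝ → ℝ} (hψpos : ∀ t > 0, 0 < ψ t)
    (hψdec : ∀ s t : ℝ, 0 < s → s ≤ t → ψ t ≤ ψ s) {g : ℝ} (hg : (g : EReal) < gammaE ψ) :
    ∃ C > 0, ∀ t ≥ 1, ψ t ≤ C * t ^ (-g) := by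
  have hev := eventually_lt_of_lt_liminf hg
  obtain ⟨T, hT⟩ := eventually_atTop.mp (hev.and (eventually_gt_atTop (1 : ℝ)))
  have hT1 := (hT T le_rfl).2
  refine ⟨max 1 (ψ 1 * T ^ |g|), by positivity, fun t ht => ?_⟩
  have ht0 : 0 < t := by linarith
  rcases le_or_gt T t with h | h
  · obtain ⟨h1, h2⟩ := hT t h
    rw [EReal.coe_lt_coe_iff, lt_div_iff₀ (Real.log_pos h2)] at h1
    have h3 : ψ t ≤ t ^ (-g) := by
      rw [← Real.exp_log (hψpos t ht0), Real.rpow_def_of_pos ht0, Real.exp_le_exp]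
      linarith
    exact h3.trans (le_mul_of_one_le_left (by positivity) (le_max_left _ _))
  · have h3 : 1 ≤ T ^ |g| * t ^ (-g) := by
      have h4 : t ^ |g| ≤ T ^ |g| := Real.rpow_le_rpow ht0.le h.le (abs_nonneg g)
      have h5 : 1 ≤ t ^ |g| * t ^ (-g) := by
        rw [← Real.rpow_add ht0]
        exact Real.one_le_rpow ht (by linarith [le_abs_self g])
      exact h5.trans (by gcongr)
    calc ψ t ≤ ψ 1 := hψdec 1 t one_pos ht
      _ ≤ ψ 1 * (T ^ |g| * t ^ (-g)) :=
          le_mul_of_one_le_right (hψpos 1 one_pos).le h3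
      _ = ψ 1 * T ^ |g| * t ^ (-g) := by ring
      _ ≤ _ := by gcongr; exact le_max_right _ _

theorem mem_compl_Elk {n k l : ℕ} {ψ : ℝ → ℝ} {x : Grass n l} : x ∈ (Elk n k l ψ)ᶜ ↔
    ∀ C > 0, ∃ f : Fin k → Fin n → ℤ, LinearIndependent ℝ (fun i => castVec (f i)) ∧
      (∀ m : Fin n → ℤ, castVec m ∈ Submodule.span ℝ (Set.range fun i => castVec (f i)) →
          ∃ c : Fin k → ℤ, m = fun j => ∑ i, c i * f i j) ∧
      dPP (Submodule.span ℝ (Set.range fun i => castVec (f i))) x.1 <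
        C * (heightB f) ^ (-(n : ℝ) / ((k : ℝ) * ((n : ℝ) - (l : ℝ)))) * ψ (heightB f) := by
  simp only [Elk, Set.mem_compl_iff, Set.mem_ofPred_eq]
  push Not
  exact Iff.rfl

theorem hMeasD_compl_Elk_ne_top {n k m N : ℕ} (hk : 1 ≤ k) (hn : n = k + m + N)
    {ψ : ℝ → ℝ} (hψpos : ∀ t > 0, 0 < ψ t)
    (hψdec : ∀ s t : ℝ, 0 < s → s ≤ t → ψ t ≤ ψ s) {g p : ℝ} (hg : (g : EReal) < gammaE ψ)
    (hp : 0 < p) (hpg : (n : ℝ) < p * (n / (k * N) + g)) :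
    hMeasD dGr (p + (m * N : ℕ)) (Elk n k (k + m) ψ)ᶜ ≠ ⊤ := by
  obtain ⟨C₁, hC₁, hψ⟩ := exists_le_rpow_of_lt_gammaE hψpos hψdec hg
  set τ : ℝ := n / (k * N) + g with hτ
  have hτ0 : 0 < τ := by
    by_contra! h
    have := mul_nonpos_of_nonneg_of_nonpos hp.le h
    linarith [(Nat.cast_nonneg n : (0 : ℝ) ≤ n)]
  refine hMeasD_ne_top_of_approx hn hp hpg fun x hx η hη => ?_
  have hk0 : (0 : ℝ) < k := by exact_mod_cast hk
  have hn0 : (0 : ℝ) < n := by exact_mod_cast (by omega : 0 < n)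
  set C₂ : ℝ := (n * k) ^ k * (2 * k) ^ k with hC₂
  have hC₂0 : 0 < C₂ := by positivity
  obtain ⟨f, hf, -, hfx⟩ := mem_compl_Elk.mp hx (η / (C₁ * C₂ ^ τ)) (by positivity)
  obtain ⟨hH, b, hb, hspan, hprod⟩ := exists_reduced_basis hf
  refine ⟨b, hb, ?_⟩
  rw [hspan]
  refine hfx.trans_le ?_
  set H := heightB f
  have hH0 : 0 < H := by linarith
  have hexp : -(n : ℝ) / (k * ((n : ℝ) - ((k + m : ℕ) : ℝ))) = -(n / (k * N)) := by
    rw [hn]; push_cast; rw [neg_div]; congr 3; ring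
  have hpr0 : 0 < ∏ i, eucNorm (castVec (b i)) :=
    Finset.prod_pos fun i _ => eucNorm_pos (hb.ne_zero i)
  have hHle : H ^ (-τ) ≤ C₂ ^ τ * (∏ i, eucNorm (castVec (b i))) ^ (-τ) := by
    have h1 : ∏ i, eucNorm (castVec (b i)) ≤ C₂ * H := by rw [hC₂, mul_assoc]; exact hprod
    have h2 := Real.rpow_le_rpow_of_nonpos hpr0 h1 (by linarith : -τ ≤ 0)
    rw [Real.mul_rpow hC₂0.le hH0.le, Real.rpow_neg hC₂0.le] at h2
    rwa [inv_mul_le_iff₀ (by positivity)] at h2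
  rw [hexp, show p * τ / p = τ by field_simp]
  calc η / (C₁ * C₂ ^ τ) * H ^ (-(n / (k * N) : ℝ)) * ψ H
      ≤ η / (C₁ * C₂ ^ τ) * H ^ (-(n / (k * N) : ℝ)) * (C₁ * H ^ (-g)) := by
        gcongr; exact hψ H hH
    _ = η / C₂ ^ τ * H ^ (-τ) := by
        rw [hτ, show -(n / (k * N) + g : ℝ) = -(n / (k * N) : ℝ) + -g by ring, Real.rpow_add hH0]
        field_simp
    _ ≤ η / C₂ ^ τ * (C₂ ^ τ * (∏ i, eucNorm (castVec (b i))) ^ (-τ)) := by gcongr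
    _ = _ := by field_simp

open MeasureTheory

/-! ### Mass distribution along fibres -/

theorem volume_closedBall_mat {N m : ℕ} (x : Fin N → Fin m → ℝ) {r : ℝ} (hr : 0 ≤ r) :
    volume (Metric.closedBall x r) = ENNReal.ofReal (2 * r) ^ (m * N) := by
  rw [volume_pi_closedBall _ hr]
  simp_rw [Real.volume_pi_closedBall _ hr]
  rw [Finset.prod_const, Finset.card_univ, Fintype.card_fin, Fintype.card_fin, pow_mul,
    ENNReal.ofReal_pow (by positivity)]

/-- The chart of the Grassmannian given by graphs over a set of coordinates. -/
def chart {n k m N : ℕ} (e : (Fin k ⊕ Fin m) ⊕ Fin N ≃ Fin n) (B₁ : Fin N → Fin k → ℝ)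
    (B₂ : Fin N → Fin m → ℝ) : Grass n (k + m) :=
  ⟨graphSub e fun i => Sum.elim (B₁ i) (B₂ i), by rw [finrank_graphSub]; simp⟩

theorem mem_closedBall_mat {N k : ℕ} {B : Fin N → Fin k → ℝ} {r : ℝ} (hr : 0 ≤ r) :
    B ∈ Metric.closedBall 0 r ↔ ∀ i a, |B i a| ≤ r := by
  simp [pi_norm_le_iff_of_nonneg hr]

theorem dist_mat_le_iff {N k : ℕ} {B B' : Fin N → Fin k → ℝ} {r : ℝ} (hr : 0 ≤ r) :
    dist B B' ≤ r ↔ ∀ i a, |B i a - B' i a| ≤ r := by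
  simp [dist_pi_le_iff hr, Real.dist_eq]

theorem abs_sub_le_of_dPP_graphSub_graphSub_lt {n : ℕ} {α β : Type*} [Fintype α] [DecidableEq α]
    (e : α ⊕ β ≃ Fin n) {B B' : β → α → ℝ}
    (hB : ∀ i a, |B i a| ≤ 1) (hB' : ∀ i a, |B' i a| ≤ 1) {η : ℝ}
    (h : dPP (graphSub e B') (graphSub e B) < η) (i : β) (a : α) :
    |B' i a - B i a| ≤ (Fintype.card α + 1) * (n * η) := by
  have hv := graphPt_mem e B' (Pi.single a 1)
  have h1 := abs_sub_le_of_dPP_graphSub_lt e (by rw [finrank_graphSub]) hB h hv i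
  simp only [graphPt_inl, graphPt_inr, Pi.single_apply, mul_ite, mul_one, mul_zero,
    Finset.sum_ite_eq', Finset.mem_univ, if_true] at h1
  have hnorm : eucNorm (graphPt e B' (Pi.single a 1)) ≤ n * 1 := by
    refine eucNorm_le_of_split e zero_le_one (fun b => ?_) (fun j => ?_)
    · rw [graphPt_inl, Pi.single_apply]; split_ifs <;> simp
    · simp only [graphPt_inr, Pi.single_apply, mul_ite, mul_one, mul_zero,
        Finset.sum_ite_eq', Finset.mem_univ, if_true]
      exact hB' j a
  rcases le_or_gt 0 η with hη | hη
  · refine h1.trans ?_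
    have : η * eucNorm (graphPt e B' (Pi.single a 1)) ≤ η * (n * 1) := by gcongr
    have h3 : (0 : ℝ) ≤ Fintype.card α + 1 := by positivity
    nlinarith
  · exfalso
    have h0 : 0 ≤ dPP (graphSub e B') (graphSub e B) := by
      rw [dPP]
      split_ifs
      all_goals
        refine Real.sSup_nonneg ?_
        rintro _ ⟨v, -, -, rfl⟩
        refine Real.sInf_nonneg ?_
        rintro _ ⟨w, -, -, rfl⟩
        exact dLL_nonneg _ _
    linarith

theorem dist_le_of_dGr_chart_lt {n k m N : ℕ} (e : (Fin k ⊕ Fin m) ⊕ Fin N ≃ Fin n)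
    {B₁ B₁' : Fin N → Fin k → ℝ} {B₂ B₂' : Fin N → Fin m → ℝ}
    (h₁ : B₁ ∈ Metric.closedBall 0 1) (h₁' : B₁' ∈ Metric.closedBall 0 1)
    (h₂ : B₂ ∈ Metric.closedBall 0 1) (h₂' : B₂' ∈ Metric.closedBall 0 1) {η : ℝ} (hη : 0 ≤ η)
    (h : dGr (chart e B₁ B₂) (chart e B₁' B₂') < η) :
    dist B₁ B₁' ≤ (k + m + 1) * (n * η) ∧ dist B₂ B₂' ≤ (k + m + 1) * (n * η) := by
  rw [mem_closedBall_mat zero_le_one] at h₁ h₁' h₂ h₂'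
  have key := abs_sub_le_of_dPP_graphSub_graphSub_lt e (B := fun i => Sum.elim (B₁' i) (B₂' i))
    (B' := fun i => Sum.elim (B₁ i) (B₂ i))
    (by rintro i (a | a); exacts [h₁' i a, h₂' i a]) (by rintro i (a | a); exacts [h₁ i a, h₂ i a]) h
  simp only [Fintype.card_sum, Fintype.card_fin, Nat.cast_add] at key
  rw [dist_mat_le_iff (by positivity), dist_mat_le_iff (by positivity)]
  exact ⟨fun i a => key i (Sum.inl a), fun i a => key i (Sum.inr a)⟩

/-- A lower bound, uniform over all covers, for the `s`-dimensional Hausdorff content of `A`. -/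
def HasContentLB {X : Type*} [PseudoMetricSpace X] (s : ℝ) (η : ℝ≥0∞) (A : Set X) : Prop :=
  ∀ (U : ℕ → Set X) (u : ℕ → ℝ), (∀ i, 0 < u i) → (∀ i, ∀ x ∈ U i, ∀ y ∈ U i, dist x y ≤ u i) →
    A ⊆ ⋃ i, U i → η ≤ ∑' i, ⨆ _ : (U i).Nonempty, ENNReal.ofReal (u i) ^ s

/-- Integrating content bounds over a family of fibres. -/
theorem content_lower_bound_of_fibres {X : Type*} {m N : ℕ} [PseudoMetricSpace X] {s : ℝ}
    (hs : 0 ≤ s) {η : ℝ≥0∞}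
    {G : Set (Fin N → Fin m → ℝ)}
    (hGvol : volume (Metric.closedBall 0 1 \ G) ≤ 1 / 2) {A : Set (X × (Fin N → Fin m → ℝ))}
    (hA : ∀ y ∈ Metric.closedBall 0 1 ∩ G, HasContentLB s η {x | (x, y) ∈ A})
    (U : ℕ → Set (X × (Fin N → Fin m → ℝ))) (u : ℕ → ℝ) (hu : ∀ i, 0 < u i)
    (hU : ∀ i, ∀ z ∈ U i, ∀ w ∈ U i, dist z w ≤ u i) (hcov : A ⊆ ⋃ i, U i) :
    η * (1 / 2) ≤ 2 ^ (m * N) * ∑' i, ENNReal.ofReal (u i) ^ (s + (m * N : ℕ)) := by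
  classical
  let c : ℕ → Fin N → Fin m → ℝ := fun i => if h : (U i).Nonempty then h.some.2 else 0
  let F : (Fin N → Fin m → ℝ) → ℝ≥0∞ := fun y =>
    ∑' i, (Metric.closedBall (c i) (u i)).indicator (fun _ => ENNReal.ofReal (u i) ^ s) y
  have hFm : Measurable F := by
    refine Measurable.tsum fun i => measurable_const.indicator measurableSet_closedBall
  have hsub : Metric.closedBall 0 1 ⊆ {y | η ≤ F y} ∪ (Metric.closedBall 0 1 \ G) := by
    intro y hy
    by_cases hyG : y ∈ G
    · left
      have := hA y ⟨hy, hyG⟩ (fun i => {x | (x, y) ∈ U i}) u hu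
        (fun i x hx x' hx' => (le_max_left _ _).trans (hU i _ hx _ hx')) (by
          intro x hx
          simpa using hcov hx)
      refine this.trans (ENNReal.tsum_le_tsum fun i => iSup_le fun ⟨x, hx⟩ => ?_)
      have hne : (U i).Nonempty := ⟨_, hx⟩
      rw [Set.indicator_of_mem]
      rw [Metric.mem_closedBall]
      simp only [c, dif_pos hne]
      exact (le_max_right _ _).trans (hU i _ hx _ hne.some_mem)
    · exact Or.inr ⟨hy, hyG⟩
  have hvol : (1 : ℝ≥0∞) / 2 ≤ volume {y | η ≤ F y} := by
    have h1 := (measure_mono hsub).trans (measure_union_le (μ := volume) _ _)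
    rw [volume_closedBall_mat _ zero_le_one] at h1
    have h2 : (1 : ℝ≥0∞) ≤ ENNReal.ofReal (2 * 1) ^ (m * N) := by
      refine one_le_pow₀ ?_
      simp
    have h3 := (h2.trans h1).trans (add_le_add_right hGvol _)
    by_contra! hlt
    have : volume {y | η ≤ F y} + 1 / 2 < 1 / 2 + 1 / 2 :=
      ENNReal.add_lt_add_right (by simp) hlt
    rw [ENNReal.add_halves] at this
    exact absurd h3 (not_le.mpr this)
  calc η * (1 / 2) ≤ η * volume {y | η ≤ F y} := by gcongr
    _ ≤ ∫⁻ y, F y := mul_meas_ge_le_lintegral hFm η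
    _ = ∑' i, ∫⁻ y, (Metric.closedBall (c i) (u i)).indicator
          (fun _ => ENNReal.ofReal (u i) ^ s) y :=
        lintegral_tsum fun i =>
          (measurable_const.indicator measurableSet_closedBall).aemeasurable
    _ = ∑' i, 2 ^ (m * N) * ENNReal.ofReal (u i) ^ (s + (m * N : ℕ)) := by
        refine tsum_congr fun i => ?_
        rw [lintegral_indicator_const measurableSet_closedBall, volume_closedBall_mat _ (hu i).le,
          ENNReal.ofReal_mul zero_le_two, mul_pow, ENNReal.rpow_add_of_nonneg _ _ hs (by positivity),
          ENNReal.rpow_natCast]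
        simp only [ENNReal.ofReal_ofNat]
        ring
    _ = _ := ENNReal.tsum_mul_left

/-- Uniform content bounds for the fibres of a set in a chart of the Grassmannian give a lower
bound for its Hausdorff dimension. -/
theorem hMeasD_eq_top_of_fibres {n k m N : ℕ} (e : (Fin k ⊕ Fin m) ⊕ Fin N ≃ Fin n) {s : ℝ}
    (hs : 0 ≤ s) {η : ℝ≥0∞} (hη : η ≠ 0) {G : Set (Fin N → Fin m → ℝ)}
    (hGvol : volume (Metric.closedBall 0 1 \ G) ≤ 1 / 2) {E : Set (Grass n (k + m))}
    (hE : ∀ y ∈ Metric.closedBall 0 1 ∩ G,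
      HasContentLB s η {x | x ∈ Metric.closedBall 0 1 ∧ chart e x y ∈ E})
    {s' : ℝ} (hs'0 : 0 < s') (hs' : s' < s + (m * N : ℕ)) : hMeasD dGr s' E = ⊤ := by
  set S : ℝ := s + (m * N : ℕ) with hS
  by_contra hM
  set M := hMeasD dGr s' E with hMdef
  set C : ℝ := (k + m + 1) * (n + 1) with hC
  have hC0 : 0 < C := by positivity
  let K : ℝ≥0∞ := 2 ^ (m * N) * (ENNReal.ofReal C ^ S * (2 ^ s' * (M + 1 + 1)))
  have hK : K ≠ ⊤ := by
    refine ENNReal.mul_ne_top (by simp) (ENNReal.mul_ne_top ?_ (ENNReal.mul_ne_top ?_ ?_))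
    · exact ENNReal.rpow_ne_top_of_nonneg (by positivity) ENNReal.ofReal_ne_top
    · exact ENNReal.rpow_ne_top_of_nonneg hs'0.le (by simp)
    · simp [hM]
  have key : ∀ δ : ℝ, 0 < δ → η * (1 / 2) ≤ ENNReal.ofReal (2 * δ) ^ (S - s') * K := by
    intro δ hδ
    have hlt : (⨅ (t : ℕ → Set (Grass n (k + m))) (_ : E ⊆ ⋃ i, t i)
        (_ : ∀ i, ediamD dGr (t i) ≤ ENNReal.ofReal δ), ∑' i, ediamD dGr (t i) ^ s') < M + 1 :=
      lt_of_le_of_lt (le_iSup₂_of_le (f := fun (δ : ℝ≥0∞) (_ : 0 < δ) =>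
        ⨅ (t : ℕ → Set (Grass n (k + m))) (_ : E ⊆ ⋃ i, t i)
        (_ : ∀ i, ediamD dGr (t i) ≤ δ), ∑' i, ediamD dGr (t i) ^ s') (ENNReal.ofReal δ)
        (by simpa using hδ) le_rfl) (ENNReal.lt_add_right hM one_ne_zero)
    simp only [iInf_lt_iff] at hlt
    obtain ⟨t, hcov, hmesh, hsum⟩ := hlt
    let tiny : ℕ → ℝ := fun i => min δ (((1 / 2 : ℝ) ^ (i + 1)) ^ (1 / s'))
    have htiny0 : ∀ i, 0 < tiny i := fun i => by positivity
    have htiny : ∀ i, ENNReal.ofReal (tiny i) ^ s' ≤ (2⁻¹ : ℝ≥0∞) ^ (i + 1) := by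
      intro i
      rw [ENNReal.ofReal_rpow_of_pos (htiny0 i)]
      have h1 : tiny i ^ s' ≤ (1 / 2 : ℝ) ^ (i + 1) := by
        calc tiny i ^ s' ≤ (((1 / 2 : ℝ) ^ (i + 1)) ^ (1 / s')) ^ s' :=
              Real.rpow_le_rpow (htiny0 i).le (min_le_right _ _) hs'0.le
          _ = _ := by
              rw [← Real.rpow_mul (by positivity), one_div_mul_cancel hs'0.ne', Real.rpow_one]
      refine (ENNReal.ofReal_le_ofReal h1).trans (le_of_eq ?_)
      rw [ENNReal.ofReal_pow (by norm_num), one_div, ENNReal.ofReal_inv_of_pos two_pos]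
      simp
    have hdtop : ∀ i, ediamD dGr (t i) ≠ ⊤ := fun i =>
      ne_top_of_le_ne_top ENNReal.ofReal_ne_top (hmesh i)
    let v : ℕ → ℝ := fun i => (ediamD dGr (t i)).toReal + tiny i
    have hv0 : ∀ i, 0 < v i := fun i => add_pos_of_nonneg_of_pos ENNReal.toReal_nonneg (htiny0 i)
    have hdv : ∀ i, ∀ x ∈ t i, ∀ y ∈ t i, dGr x y < v i := by
      intro i x hx y hy
      have := ofReal_le_ediamD (d := dGr) hx hy
      rw [ENNReal.ofReal_le_iff_le_toReal (hdtop i)] at this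
      exact lt_add_of_le_of_pos this (htiny0 i)
    have hmain := content_lower_bound_of_fibres hs hGvol (A := {z | z.1 ∈ Metric.closedBall 0 1 ∧
        z.2 ∈ Metric.closedBall 0 1 ∧ chart e z.1 z.2 ∈ E}) (η := η) (by
          intro y hy
          convert hE y hy using 1
          ext x
          exact ⟨fun h => ⟨h.1, h.2.2⟩, fun h => ⟨h.1, hy.1, h.2⟩⟩)
      (fun i => {z | z.1 ∈ Metric.closedBall 0 1 ∧
        z.2 ∈ Metric.closedBall 0 1 ∧ chart e z.1 z.2 ∈ t i}) (fun i => C * v i)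
      (fun i => mul_pos hC0 (hv0 i)) (by
        rintro i z ⟨hz1, hz2, hz⟩ w ⟨hw1, hw2, hw⟩
        have := dist_le_of_dGr_chart_lt e hz1 hw1 hz2 hw2 (hv0 i).le (hdv i _ hz _ hw)
        have hle : (k + m + 1) * (n * v i) ≤ C * v i := by
          rw [hC, mul_assoc]
          have := hv0 i
          gcongr
          linarith
        exact max_le (this.1.trans hle) (this.2.trans hle)) (by
        rintro z ⟨hz1, hz2, hz⟩
        obtain ⟨i, hi⟩ := Set.mem_iUnion.mp (hcov hz)
        exact Set.mem_iUnion.mpr ⟨i, hz1, hz2, hi⟩)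
    have hterm : ∀ i, ENNReal.ofReal (C * v i) ^ S ≤ ENNReal.ofReal C ^ S *
        (ENNReal.ofReal (2 * δ) ^ (S - s') *
          (2 ^ s' * (ediamD dGr (t i) ^ s' + (2⁻¹ : ℝ≥0∞) ^ (i + 1)))) := by
      intro i
      have hSpos : 0 ≤ S := by positivity
      have hS' : 0 ≤ S - s' := by linarith
      rw [ENNReal.ofReal_mul hC0.le, ENNReal.mul_rpow_of_nonneg _ _ hSpos]
      gcongr
      have hvd : v i ≤ 2 * δ := by
        have h1 := ENNReal.toReal_mono ENNReal.ofReal_ne_top (hmesh i)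
        rw [ENNReal.toReal_ofReal hδ.le] at h1
        have h2 : tiny i ≤ δ := min_le_left _ _
        simp only [v]
        linarith
      have hsplit : ENNReal.ofReal (v i) ^ S
          = ENNReal.ofReal (v i) ^ (S - s') * ENNReal.ofReal (v i) ^ s' := by
        rw [← ENNReal.rpow_add_of_nonneg _ _ hS' hs'0.le, sub_add_cancel]
      rw [hsplit]
      gcongr
      have hv : ENNReal.ofReal (v i) = ediamD dGr (t i) + ENNReal.ofReal (tiny i) := by
        simp only [v]
        rw [ENNReal.ofReal_add ENNReal.toReal_nonneg (htiny0 i).le, ENNReal.ofReal_toReal (hdtop i)]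
      rw [hv]
      calc (ediamD dGr (t i) + ENNReal.ofReal (tiny i)) ^ s'
          ≤ (2 * max (ediamD dGr (t i)) (ENNReal.ofReal (tiny i))) ^ s' := by
            gcongr
            rw [two_mul]
            exact add_le_add (le_max_left _ _) (le_max_right _ _)
        _ = 2 ^ s' * max (ediamD dGr (t i)) (ENNReal.ofReal (tiny i)) ^ s' :=
            ENNReal.mul_rpow_of_nonneg _ _ hs'0.le
        _ ≤ _ := by
            gcongr
            rcases le_total (ediamD dGr (t i)) (ENNReal.ofReal (tiny i)) with h | h
            · rw [max_eq_right h]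
              exact (htiny i).trans le_add_self
            · rw [max_eq_left h]
              exact le_self_add
    refine hmain.trans ?_
    calc 2 ^ (m * N) * ∑' i, ENNReal.ofReal (C * v i) ^ (s + (m * N : ℕ))
        ≤ 2 ^ (m * N) * ∑' i, ENNReal.ofReal C ^ S * (ENNReal.ofReal (2 * δ) ^ (S - s') *
          (2 ^ s' * (ediamD dGr (t i) ^ s' + (2⁻¹ : ℝ≥0∞) ^ (i + 1)))) := by
          gcongr with i
          exact hterm i
      _ = 2 ^ (m * N) * (ENNReal.ofReal C ^ S * (ENNReal.ofReal (2 * δ) ^ (S - s') *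
          (2 ^ s' * (∑' i, ediamD dGr (t i) ^ s' + ∑' i : ℕ, (2⁻¹ : ℝ≥0∞) ^ (i + 1))))) := by
          simp only [ENNReal.tsum_mul_left, ENNReal.tsum_add]
      _ ≤ 2 ^ (m * N) * (ENNReal.ofReal C ^ S * (ENNReal.ofReal (2 * δ) ^ (S - s') *
          (2 ^ s' * (M + 1 + 1)))) := by
          gcongr
          rw [ENNReal.tsum_geometric_add_one]
          simp
      _ = _ := by simp only [K]; ring
  have hlim : Tendsto (fun δ : ℝ => ENNReal.ofReal (2 * δ) ^ (S - s') * K) (nhdsWithin 0 (Set.Ioi 0))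
      (nhds 0) := by
    have h1 : Tendsto (fun δ : ℝ => ENNReal.ofReal (2 * δ) ^ (S - s')) (nhds 0) (nhds 0) := by
      have : Continuous fun δ : ℝ => ENNReal.ofReal (2 * δ) ^ (S - s') :=
        ENNReal.continuous_rpow_const.comp
          (ENNReal.continuous_ofReal.comp (continuous_const.mul continuous_id))
      have h2 := this.tendsto 0
      simpa [ENNReal.zero_rpow_of_pos (sub_pos.mpr hs')] using h2
    have := ENNReal.Tendsto.mul_const (h1.mono_left (nhdsWithin_le_nhds (s := Set.Ioi 0))) (Or.inr hK)
    simpa using this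
  have hle := ge_of_tendsto hlim (eventually_mem_nhdsWithin.mono fun δ hδ => key δ hδ)
  simp at hle
  exact hη hle

/-- The content constant of the nested ball construction in dimension `d`. -/
def nestConst (d : ℕ) : ℝ := 1 / (8 * 6 ^ d)

theorem nestConst_pos (d : ℕ) : 0 < nestConst d := by unfold nestConst; positivity

theorem nestConst_lt_one (d : ℕ) : nestConst d < 1 := by
  unfold nestConst
  rw [div_lt_one (by positivity)]
  have : (1 : ℝ) ≤ 6 ^ d := one_le_pow₀ (by norm_num)
  linarith

/-- The total weight of the members of a cover meeting a set `B`. -/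
def coverWeight {X : Type*} (s : ℝ) (U : ℕ → Set X) (u : ℕ → ℝ) (B : Set X) : ℝ≥0∞ :=
  ∑' i, ⨆ _ : (U i ∩ B).Nonempty, ENNReal.ofReal (u i) ^ s

theorem ofReal_rpow_le_coverWeight {X : Type*} {s : ℝ} {U : ℕ → Set X} {u : ℕ → ℝ} {B : Set X}
    {i : ℕ} (h : (U i ∩ B).Nonempty) : ENNReal.ofReal (u i) ^ s ≤ coverWeight s U u B := by
  refine le_trans ?_ (ENNReal.le_tsum i)
  simp [h]

theorem min_mul_pow_le {d : ℕ} {s u ρ r r' η : ℝ} (hsd : s ≤ d) (hu : 0 < u)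
    (hur : u ≤ r) (hρ : 0 < ρ) (hr' : 0 < r') (hη : 0 < η) :
    min 1 (u ^ s / (η * r' ^ s)) * (2 * (u + 2 * ρ)) ^ d ≤
      u ^ s * (6 ^ d * r ^ ((d : ℝ) - s) + (6 * ρ) ^ d / (η * r' ^ s)) := by
  have hr : 0 < r := hu.trans_le hur
  have hA : 0 < u ^ s := Real.rpow_pos_of_pos hu s
  have hB : 0 < r' ^ s := Real.rpow_pos_of_pos hr' s
  have hC : 0 < r ^ ((d : ℝ) - s) := Real.rpow_pos_of_pos hr _
  rcases le_total ρ u with h | h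
  · calc min 1 (u ^ s / (η * r' ^ s)) * (2 * (u + 2 * ρ)) ^ d
        ≤ 1 * (6 * u) ^ d := by
          refine mul_le_mul (min_le_left _ _) (pow_le_pow_left₀ (by positivity) ?_ d)
            (by positivity) zero_le_one
          linarith
      _ = u ^ s * (6 ^ d * u ^ ((d : ℝ) - s)) := by
          have : u ^ d = u ^ s * u ^ ((d : ℝ) - s) := by
            rw [← Real.rpow_add hu]; simp
          rw [mul_pow, this]; ring
      _ ≤ u ^ s * (6 ^ d * r ^ ((d : ℝ) - s)) := by
          gcongr
      _ ≤ _ := by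
          gcongr
          have : 0 ≤ (6 * ρ) ^ d / (η * r' ^ s) := by positivity
          linarith
  · calc min 1 (u ^ s / (η * r' ^ s)) * (2 * (u + 2 * ρ)) ^ d
        ≤ (u ^ s / (η * r' ^ s)) * (6 * ρ) ^ d := by
          refine mul_le_mul (min_le_right _ _) (pow_le_pow_left₀ (by positivity) ?_ d)
            (by positivity) (by positivity)
          linarith
      _ = u ^ s * ((6 * ρ) ^ d / (η * r' ^ s)) := by ring
      _ ≤ _ := by
          gcongr
          have : 0 ≤ 6 ^ d * r ^ ((d : ℝ) - s) := by positivity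
          linarith

theorem exists_subball {N k : ℕ} {s : ℝ} (hs : 0 < s) (hsd : s ≤ (k * N : ℕ))
    {U : ℕ → Set (Fin N → Fin k → ℝ)} {u : ℕ → ℝ} (hu : ∀ i, 0 < u i)
    (hU : ∀ i, ∀ x ∈ U i, ∀ y ∈ U i, dist x y ≤ u i)
    {b : Fin N → Fin k → ℝ} {r r' ρ : ℝ} (hr' : 0 < r') (hr'ρ : r' ≤ ρ) (hρr : 4 * ρ ≤ r)
    (hdec : 8 * (6 * ρ) ^ (k * N) * r ^ s ≤ r' ^ s * r ^ (k * N))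
    {Bad : Set (Fin N → Fin k → ℝ)} (hBad : volume Bad ≤ ENNReal.ofReal (r ^ (k * N) / 2))
    {S : Set (Fin N → Fin k → ℝ)}
    (hS : ∀ x ∈ Metric.closedBall b (r / 2), x ∉ Bad → ∃ a ∈ S, dist x a ≤ ρ)
    (hw : coverWeight s U u (Metric.closedBall b r) ≤ ENNReal.ofReal (nestConst (k * N) * r ^ s)) :
    ∃ a ∈ S, Metric.closedBall a r' ⊆ Metric.closedBall b r ∧
      coverWeight s U u (Metric.closedBall a r') ≤
        ENNReal.ofReal (nestConst (k * N) * r' ^ s) := by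
  classical
  set d := k * N with hd
  set η := nestConst d with hη
  have hη0 : 0 < η := nestConst_pos d
  have hρ : 0 < ρ := hr'.trans_le hr'ρ
  have hr : 0 < r := by linarith
  have hrs : 0 < r ^ s := Real.rpow_pos_of_pos hr s
  have hr's : 0 < r' ^ s := Real.rpow_pos_of_pos hr' s
  have hmeet : ∀ i, (U i ∩ Metric.closedBall b r).Nonempty → u i ≤ r := by
    intro i hi
    have h1 := (ofReal_rpow_le_coverWeight (s := s) (u := u) hi).trans hw
    rw [ENNReal.ofReal_rpow_of_pos (hu i), ENNReal.ofReal_le_ofReal_iff (by positivity)] at h1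
    have h2 : u i ^ s ≤ r ^ s := h1.trans (by nlinarith [nestConst_lt_one d])
    exact (Real.rpow_le_rpow_iff (hu i).le hr.le hs).mp h2
  let c : ℕ → Fin N → Fin k → ℝ := fun i =>
    if h : (U i ∩ Metric.closedBall b r).Nonempty then h.some else 0
  let w : ℕ → ℝ := fun i => min 1 (u i ^ s / (η * r' ^ s))
  let W : ℕ → ℝ≥0∞ := fun i =>
    ⨆ _ : (U i ∩ Metric.closedBall b r).Nonempty, ENNReal.ofReal (w i)
  let F : (Fin N → Fin k → ℝ) → ℝ≥0∞ := fun x =>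
    ∑' i, (Metric.closedBall (c i) (u i + 2 * ρ)).indicator (fun _ => W i) x
  have hFm : Measurable F :=
    Measurable.tsum fun i => measurable_const.indicator measurableSet_closedBall
  have hFint : ∫⁻ x, F x ≤ ENNReal.ofReal (r ^ d / 4) := by
    set K : ℝ := 6 ^ d * r ^ ((d : ℝ) - s) + (6 * ρ) ^ d / (η * r' ^ s) with hK
    have hK0 : 0 ≤ K := by positivity
    calc ∫⁻ x, F x = ∑' i, W i * volume (Metric.closedBall (c i) (u i + 2 * ρ)) := by
          rw [lintegral_tsum fun i =>
            (measurable_const.indicator measurableSet_closedBall).aemeasurable]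
          congr 1; ext i
          rw [lintegral_indicator measurableSet_closedBall, lintegral_const]
          simp
      _ ≤ ∑' i, (⨆ _ : (U i ∩ Metric.closedBall b r).Nonempty, ENNReal.ofReal (u i) ^ s) *
            ENNReal.ofReal K := by
          refine ENNReal.tsum_le_tsum fun i => ?_
          by_cases hi : (U i ∩ Metric.closedBall b r).Nonempty
          · simp only [W, hi, iSup_pos]
            rw [volume_closedBall_mat _ (by have := hu i; positivity),
              ← ENNReal.ofReal_pow (by have := hu i; positivity),
              ENNReal.ofReal_rpow_of_pos (hu i), ← ENNReal.ofReal_mul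
                (le_min zero_le_one (by have := hu i; positivity)),
              ← ENNReal.ofReal_mul (by have := hu i; positivity)]
            exact ENNReal.ofReal_le_ofReal
              (min_mul_pow_le hsd (hu i) (hmeet i hi) hρ hr' hη0)
          · simp [W, hi]
      _ = coverWeight s U u (Metric.closedBall b r) * ENNReal.ofReal K := ENNReal.tsum_mul_right
      _ ≤ ENNReal.ofReal (η * r ^ s) * ENNReal.ofReal K := by gcongr
      _ = ENNReal.ofReal (η * r ^ s * K) := (ENNReal.ofReal_mul (by positivity)).symm
      _ ≤ ENNReal.ofReal (r ^ d / 4) := by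
          refine ENNReal.ofReal_le_ofReal ?_
          have h1 : r ^ s * r ^ ((d : ℝ) - s) = r ^ d := by
            rw [← Real.rpow_add hr]; simp
          have h2 : η * 6 ^ d = 1 / 8 := by
            simp only [hη, nestConst]; field_simp
          have h3 : r ^ s * ((6 * ρ) ^ d / r' ^ s) ≤ r ^ d / 8 := by
            rw [mul_div_assoc', div_le_iff₀ hr's]; linarith
          calc η * r ^ s * K = (η * 6 ^ d) * (r ^ s * r ^ ((d : ℝ) - s)) +
                r ^ s * ((6 * ρ) ^ d / r' ^ s) := by
                rw [hK]; field_simp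
            _ ≤ 1 / 8 * r ^ d + r ^ d / 8 := by rw [h1, h2]; linarith
            _ = _ := by ring
  obtain ⟨x, hxb, hxBad, hxF⟩ : ∃ x ∈ Metric.closedBall b (r / 2), x ∉ Bad ∧ F x < 1 := by
    by_contra hcon
    push Not at hcon
    have hsub : Metric.closedBall b (r / 2) ⊆ Bad ∪ {x | 1 ≤ F x} := by
      intro x hx
      by_cases hxB : x ∈ Bad
      · exact Or.inl hxB
      · exact Or.inr (hcon x hx hxB)
    have h1 : volume {x | 1 ≤ F x} ≤ ENNReal.ofReal (r ^ d / 4) := by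
      have := mul_meas_ge_le_lintegral (μ := volume) hFm 1
      rw [one_mul] at this
      exact this.trans hFint
    have h2 := (measure_mono (μ := volume) hsub).trans (measure_union_le _ _)
    rw [volume_closedBall_mat _ (by positivity), ← ENNReal.ofReal_pow (by positivity)] at h2
    have h3 := h2.trans (add_le_add hBad h1)
    have hrd : 0 < r ^ d := by positivity
    rw [← ENNReal.ofReal_add (by positivity) (by positivity),
      ENNReal.ofReal_le_ofReal_iff (by positivity)] at h3
    rw [show 2 * (r / 2) = r by ring] at h3
    linarith
  obtain ⟨a, haS, hxa⟩ := hS x hxb hxBad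
  have hsub : Metric.closedBall a r' ⊆ Metric.closedBall b r := by
    apply Metric.closedBall_subset_closedBall'
    rw [Metric.mem_closedBall] at hxb
    have := dist_triangle a x b
    rw [dist_comm a x] at this
    linarith
  refine ⟨a, haS, hsub, ?_⟩
  have hterm : ∀ i, (⨆ _ : (U i ∩ Metric.closedBall a r').Nonempty, ENNReal.ofReal (u i) ^ s) ≤
      (Metric.closedBall (c i) (u i + 2 * ρ)).indicator (fun _ => W i) x *
        ENNReal.ofReal (η * r' ^ s) := by
    intro i
    refine iSup_le fun hi => ?_
    obtain ⟨z, hzU, hza⟩ := hi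
    have hne : (U i ∩ Metric.closedBall b r).Nonempty := ⟨z, hzU, hsub hza⟩
    have hci : c i ∈ U i := by
      simp only [c, hne, dif_pos]
      exact hne.some_mem.1
    have hxc : x ∈ Metric.closedBall (c i) (u i + 2 * ρ) := by
      rw [Metric.mem_closedBall] at hza ⊢
      have h1 := dist_triangle x a (c i)
      have h2 := dist_triangle a z (c i)
      have h3 := hU i z hzU _ hci
      rw [dist_comm a z] at h2
      linarith
    have hW : (Metric.closedBall (c i) (u i + 2 * ρ)).indicator (fun _ => W i) x =
        ENNReal.ofReal (w i) := by
      rw [Set.indicator_of_mem hxc]; simp [W, hne]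
    have hlt : ENNReal.ofReal (w i) < 1 := by
      rw [← hW]
      exact (ENNReal.le_tsum (f := fun i =>
        (Metric.closedBall (c i) (u i + 2 * ρ)).indicator (fun _ => W i) x) i).trans_lt hxF
    have hw1 : w i < 1 := by
      rw [← ENNReal.ofReal_one] at hlt
      exact (ENNReal.ofReal_lt_ofReal_iff one_pos).mp hlt
    have hweq : w i = u i ^ s / (η * r' ^ s) := by
      rcases min_choice 1 (u i ^ s / (η * r' ^ s)) with h | h
      · simp only [w] at hw1; rw [h] at hw1; exact absurd hw1 (lt_irrefl _)
      · exact h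
    rw [hW, hweq, ENNReal.ofReal_rpow_of_pos (hu i), ← ENNReal.ofReal_mul
      (by have := hu i; positivity), div_mul_cancel₀ _ (by positivity)]
  calc coverWeight s U u (Metric.closedBall a r')
      ≤ ∑' i, (Metric.closedBall (c i) (u i + 2 * ρ)).indicator (fun _ => W i) x *
        ENNReal.ofReal (η * r' ^ s) := ENNReal.tsum_le_tsum hterm
    _ = F x * ENNReal.ofReal (η * r' ^ s) := ENNReal.tsum_mul_right
    _ ≤ 1 * ENNReal.ofReal (η * r' ^ s) := by gcongr
    _ = _ := one_mul _

/-- A limsup set of balls whose centres are sufficiently dense off small exceptional sets has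
positive Hausdorff content. -/
theorem hasContentLB_limsup {N k : ℕ} {s : ℝ} (hs : 0 < s) (hsd : s ≤ (k * N : ℕ))
    {r ρ : ℕ → ℝ} (hr : ∀ j, 0 < r j) (hrρ : ∀ j, r j ≤ ρ j)
    {S : ℕ → Set (Fin N → Fin k → ℝ)}
    (H : ∀ (b : Fin N → Fin k → ℝ) (t : ℝ), 0 < t →
      Metric.closedBall b t ⊆ Metric.closedBall 0 1 → ∀ j₀, ∃ j ≥ j₀, 4 * ρ j ≤ t ∧
        8 * (6 * ρ j) ^ (k * N) * t ^ s ≤ r j ^ s * t ^ (k * N) ∧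
        ∃ Bad : Set (Fin N → Fin k → ℝ), volume Bad ≤ ENNReal.ofReal (t ^ (k * N) / 2) ∧
          ∀ x ∈ Metric.closedBall b (t / 2), x ∉ Bad → ∃ a ∈ S j, dist x a ≤ ρ j) :
    HasContentLB s (ENNReal.ofReal (nestConst (k * N)))
      {x | x ∈ Metric.closedBall 0 1 ∧ ∀ j₀, ∃ j ≥ j₀, ∃ a ∈ S j, dist x a ≤ r j} := by
  intro U u hu hU hcov
  by_contra hlt
  push Not at hlt
  let Good : ((Fin N → Fin k → ℝ) × ℝ × ℕ) → Prop := fun q =>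
    0 < q.2.1 ∧ Metric.closedBall q.1 q.2.1 ⊆ Metric.closedBall 0 1 ∧
      coverWeight s U u (Metric.closedBall q.1 q.2.1) ≤
        ENNReal.ofReal (nestConst (k * N) * q.2.1 ^ s)
  have hstep : ∀ q : {q // Good q}, ∃ q' : {q // Good q},
      Metric.closedBall q'.1.1 q'.1.2.1 ⊆ Metric.closedBall q.1.1 q.1.2.1 ∧
      q'.1.2.1 ≤ q.1.2.1 / 2 ∧ q.1.2.2 < q'.1.2.2 ∧ q'.1.2.1 = r q'.1.2.2 ∧
      q'.1.1 ∈ S q'.1.2.2 := by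
    rintro ⟨⟨b, t, J⟩, ht, hsub, hwt⟩
    obtain ⟨j, hj, h4, hdec, Bad, hBad, hnear⟩ := H b t ht hsub (J + 1)
    obtain ⟨a, haS, hsub', hw'⟩ := exists_subball hs hsd hu hU (hr j) (hrρ j) h4 hdec hBad hnear hwt
    refine ⟨⟨⟨a, r j, j⟩, hr j, hsub'.trans hsub, hw'⟩, hsub', ?_, hj, rfl, haS⟩
    have := hrρ j
    have := hr j
    change r j ≤ t / 2
    linarith
  choose nxt hnxt using hstep
  have hstart : Good (0, 1, 0) := by
    refine ⟨one_pos, le_rfl, ?_⟩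
    simp only [Real.one_rpow, mul_one]
    refine le_trans ?_ hlt.le
    refine ENNReal.tsum_le_tsum fun i => iSup_le fun hi => ?_
    have : (U i).Nonempty := hi.mono Set.inter_subset_left
    simp [this]
  let Q : ℕ → {q // Good q} := fun i => Nat.rec ⟨_, hstart⟩ (fun _ q => nxt q) i
  have hQ : ∀ i, Q (i + 1) = nxt (Q i) := fun i => rfl
  have hrad : ∀ i, (Q i).1.2.1 ≤ (1 / 2) ^ i := by
    intro i
    induction i with
    | zero => simp [Q]
    | succ i ih =>
      have := (hnxt (Q i)).2.1
      rw [← hQ] at this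
      rw [pow_succ]; linarith
  have hidx : ∀ i, i ≤ (Q i).1.2.2 := by
    intro i
    induction i with
    | zero => simp
    | succ i ih =>
      have := (hnxt (Q i)).2.2.1
      rw [← hQ] at this
      omega
  obtain ⟨x, hx⟩ := IsCompact.nonempty_iInter_of_sequence_nonempty_isCompact_isClosed
    (fun i => Metric.closedBall (Q i).1.1 (Q i).1.2.1)
    (fun i => (hnxt (Q i)).1)
    (fun i => Metric.nonempty_closedBall.mpr (Q i).2.1.le)
    (isCompact_closedBall _ _) (fun i => Metric.isClosed_closedBall)
  rw [Set.mem_iInter] at hx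
  have hxA : x ∈ ⋃ i, U i := by
    refine hcov ⟨(Q 0).2.2.1 (hx 0), fun j₀ => ?_⟩
    have h := hnxt (Q j₀)
    rw [← hQ] at h
    refine ⟨(Q (j₀ + 1)).1.2.2, (Nat.le_succ _).trans (hidx _), (Q (j₀ + 1)).1.1, h.2.2.2.2, ?_⟩
    rw [← h.2.2.2.1]
    exact hx (j₀ + 1)
  obtain ⟨i, hi⟩ := Set.mem_iUnion.mp hxA
  have hsmall : ∀ p, u i ≤ (1 / 2) ^ p := by
    intro p
    have h1 := (ofReal_rpow_le_coverWeight (s := s) (u := u)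
      (⟨x, hi, hx p⟩ : (U i ∩ Metric.closedBall (Q p).1.1 (Q p).1.2.1).Nonempty)).trans
      (Q p).2.2.2
    have hpos := (Q p).2.1
    have hpos' := Real.rpow_pos_of_pos hpos s
    have hη0 := nestConst_pos (k * N)
    rw [ENNReal.ofReal_rpow_of_pos (hu i), ENNReal.ofReal_le_ofReal_iff (by positivity)] at h1
    have h2 : u i ^ s ≤ (Q p).1.2.1 ^ s := h1.trans (by nlinarith [nestConst_lt_one (k * N)])
    exact ((Real.rpow_le_rpow_iff (hu i).le hpos.le hs).mp h2).trans (hrad p)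
  have hlim := ge_of_tendsto' (tendsto_pow_atTop_nhds_zero_of_lt_one (by norm_num)
    (by norm_num : (1 / 2 : ℝ) < 1)) hsmall
  exact absurd (hu i) (not_lt.mpr hlim)

theorem card_Icc_ceil_floor_le {A L : ℝ} (hL : 0 ≤ L) :
    ((Finset.Icc ⌈A - L⌉ ⌊A + L⌋).card : ℝ) ≤ 2 * L + 1 := by
  rw [Int.card_Icc]
  have h1 := Int.floor_le (A + L)
  have h2 := Int.le_ceil (A - L)
  rcases le_total 0 (⌊A + L⌋ + 1 - ⌈A - L⌉) with h | h
  · have : (((⌊A + L⌋ + 1 - ⌈A - L⌉).toNat : ℤ) : ℝ) = ((⌊A + L⌋ + 1 - ⌈A - L⌉ : ℤ) : ℝ) := by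
      rw [Int.toNat_of_nonneg h]
    rw [Int.cast_natCast] at this
    rw [this]; push_cast; linarith
  · rw [Int.toNat_of_nonpos h]; simp; linarith

/-- Measure of the points of an interval whose image under an affine map is close to an integer. -/
theorem volume_near_int_le {y b c r η : ℝ} (hy : y ≠ 0) (hr : 0 ≤ r) (hη0 : 0 ≤ η)
    (hη : η ≤ 1 / 2) :
    volume {t : ℝ | |t - b| ≤ r ∧ ∃ z : ℤ, |t * y + c - z| ≤ η} ≤
      ENNReal.ofReal (2 * η / |y| * (2 * r * |y| + 2)) := by
  have hY : 0 < |y| := abs_pos.mpr hy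
  set A := b * y + c
  set L := r * |y| + η
  have hL : 0 ≤ L := by positivity
  have hsub : {t : ℝ | |t - b| ≤ r ∧ ∃ z : ℤ, |t * y + c - z| ≤ η} ⊆
      ⋃ z ∈ Finset.Icc ⌈A - L⌉ ⌊A + L⌋, Metric.closedBall (((z : ℝ) - c) / y) (η / |y|) := by
    rintro t ⟨ht, z, hz⟩
    have h1 : |(t - b) * y| ≤ r * |y| := by rw [abs_mul]; gcongr
    have h2 : |(z : ℝ) - A| ≤ L := by
      have : (z : ℝ) - A = (t - b) * y - (t * y + c - z) := by simp only [A]; ring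
      rw [this]
      exact (abs_sub _ _).trans (add_le_add h1 hz)
    rw [abs_le] at h2
    refine Set.mem_biUnion (x := z) ?_ ?_
    · rw [Finset.mem_coe, Finset.mem_Icc]
      exact ⟨Int.ceil_le.mpr (by linarith [h2.1]), Int.le_floor.mpr (by linarith [h2.2])⟩
    · rw [Metric.mem_closedBall, Real.dist_eq, le_div_iff₀ hY, ← abs_mul]
      have : (t - ((z : ℝ) - c) / y) * y = t * y + c - z := by field_simp; ring
      rwa [this]
  refine (measure_mono hsub).trans ((measure_biUnion_finset_le _ _).trans ?_)
  simp only [Real.volume_closedBall, Finset.sum_const, nsmul_eq_mul]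
  rw [← ENNReal.ofReal_natCast, ← ENNReal.ofReal_mul (by positivity)]
  refine ENNReal.ofReal_le_ofReal ?_
  have := card_Icc_ceil_floor_le (A := A) hL
  calc ((Finset.Icc ⌈A - L⌉ ⌊A + L⌋).card : ℝ) * (2 * (η / |y|))
      ≤ (2 * r * |y| + 2) * (2 * (η / |y|)) := by
        gcongr
        simp only [L] at this ⊢
        linarith
    _ = _ := by ring

/-- The points of a cube in `ℝ^k` where a nonzero linear form with coefficients `y` is within
`η` of an integer, after a shift. -/
def nearIntRow {k : ℕ} (b : Fin k → ℝ) (r η σ : ℝ) (y : Fin k → ℝ) : Set (Fin k → ℝ) :=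
  {x | (∀ a, |x a - b a| ≤ r) ∧ ∃ z : ℤ, |∑ a, x a * y a + σ - z| ≤ η}

theorem measurableSet_nearIntRow {k : ℕ} (b : Fin k → ℝ) (r η σ : ℝ) (y : Fin k → ℝ) :
    MeasurableSet (nearIntRow b r η σ y) := by
  have h : nearIntRow b r η σ y = (⋂ a, {x | |x a - b a| ≤ r}) ∩
      ⋃ z : ℤ, {x | |∑ a, x a * y a + σ - z| ≤ η} := by
    ext x; simp [nearIntRow]
  rw [h]
  refine (MeasurableSet.iInter fun a => measurableSet_le (by fun_prop) measurable_const).inter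
    (MeasurableSet.iUnion fun z => measurableSet_le (by fun_prop) measurable_const)

theorem volume_nearIntRow_le {k : ℕ} (b : Fin k → ℝ) {r η σ : ℝ} {y : Fin k → ℝ} (a : Fin k)
    (hy : y a ≠ 0) (hr : 0 < r) (hη0 : 0 ≤ η) (hη : η ≤ 1 / 2) :
    volume (nearIntRow b r η σ y) ≤
      ENNReal.ofReal ((2 * r) ^ k * (2 * η * (1 + 1 / (r * |y a|)))) := by
  obtain ⟨k, rfl⟩ : ∃ k', k = k' + 1 := ⟨k - 1, by have := a.pos; omega⟩
  have hY : 0 < |y a| := abs_pos.mpr hy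
  have hmp := (volume_preserving_piFinSuccAbove (fun _ : Fin (k + 1) => ℝ) a).symm
  rw [← hmp.measure_preimage (measurableSet_nearIntRow b r η σ y).nullMeasurableSet]
  set T := (MeasurableEquiv.piFinSuccAbove (fun _ : Fin (k + 1) => ℝ) a).symm ⁻¹'
    nearIntRow b r η σ y with hT
  have hTm : MeasurableSet T := hmp.measurable (measurableSet_nearIntRow b r η σ y)
  rw [Measure.volume_eq_prod, Measure.prod_apply_symm hTm]
  have hsec : ∀ w : Fin k → ℝ, volume ((fun t => (t, w)) ⁻¹' T) ≤
      (Metric.closedBall (fun i => b (a.succAbove i)) r).indicator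
        (fun _ => ENNReal.ofReal (2 * η / |y a| * (2 * r * |y a| + 2))) w := by
    intro w
    by_cases hw : w ∈ Metric.closedBall (fun i => b (a.succAbove i)) r
    · rw [Set.indicator_of_mem hw]
      refine le_trans (measure_mono ?_) (volume_near_int_le (b := b a)
        (c := ∑ i, w i * y (a.succAbove i) + σ) hy hr.le hη0 hη)
      rintro t ⟨h1, z, hz⟩
      simp only [MeasurableEquiv.piFinSuccAbove_symm_apply, Fin.insertNthEquiv_apply] at h1 hz
      refine ⟨?_, z, ?_⟩
      · simpa using h1 a
      · rw [Fin.sum_univ_succAbove _ a] at hz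
        simp only [Fin.insertNth_apply_same, Fin.insertNth_apply_succAbove] at hz
        rw [← add_assoc]; exact hz
    · rw [Set.indicator_of_notMem hw]
      refine le_of_eq ?_
      convert measure_empty (μ := (volume : Measure ℝ))
      ext t
      simp only [Set.mem_preimage, Set.mem_empty_iff_false, iff_false]
      rintro ⟨h1, -⟩
      apply hw
      rw [Metric.mem_closedBall, dist_pi_le_iff hr.le]
      intro i
      have := h1 (a.succAbove i)
      simp only [MeasurableEquiv.piFinSuccAbove_symm_apply, Fin.insertNthEquiv_apply,
        Fin.insertNth_apply_succAbove] at this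
      rwa [Real.dist_eq]
  refine (lintegral_mono hsec).trans ?_
  rw [lintegral_indicator measurableSet_closedBall, lintegral_const, Measure.restrict_apply_univ,
    Real.volume_pi_closedBall _ hr.le, ← ENNReal.ofReal_mul (by positivity)]
  refine ENNReal.ofReal_le_ofReal (le_of_eq ?_)
  simp only [Fintype.card_fin]
  field_simp
  ring

theorem volume_nearInt_le {N k : ℕ} (b : Fin N → Fin k → ℝ) {r η : ℝ} {σ : Fin N → ℝ}
    {y : Fin k → ℝ} (a : Fin k) (hy : y a ≠ 0) (hr : 0 < r) (hη0 : 0 ≤ η) (hη : η ≤ 1 / 2) :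
    volume {x : Fin N → Fin k → ℝ | x ∈ Metric.closedBall b r ∧
        ∀ i, ∃ z : ℤ, |∑ a, x i a * y a + σ i - z| ≤ η} ≤
      ENNReal.ofReal (((2 * r) ^ k * (2 * η * (1 + 1 / (r * |y a|)))) ^ N) := by
  have h : {x : Fin N → Fin k → ℝ | x ∈ Metric.closedBall b r ∧
        ∀ i, ∃ z : ℤ, |∑ a, x i a * y a + σ i - z| ≤ η} ⊆
      Set.pi Set.univ fun i => nearIntRow (b i) r η (σ i) y := by
    rintro x ⟨hx, hz⟩ i -
    refine ⟨fun a => ?_, hz i⟩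
    rw [Metric.mem_closedBall, dist_mat_le_iff hr.le] at hx
    exact hx i a
  refine (measure_mono h).trans ?_
  rw [volume_pi_pi]
  have hpos : 0 ≤ (2 * r) ^ k * (2 * η * (1 + 1 / (r * |y a|))) := by positivity
  calc ∏ i, volume (nearIntRow (b i) r η (σ i) y)
      ≤ ∏ _i : Fin N, ENNReal.ofReal ((2 * r) ^ k * (2 * η * (1 + 1 / (r * |y a|)))) :=
        Finset.prod_le_prod' fun i _ => volume_nearIntRow_le (b i) a hy hr hη0 hη
    _ = _ := by
        rw [Finset.prod_const, Finset.card_univ, Fintype.card_fin, ENNReal.ofReal_pow hpos]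

/-- Integer points of the cube `[-Q, Q]^k`. -/
def intBox (k Q : ℕ) : Finset (Fin k → ℤ) :=
  Fintype.piFinset fun _ => Finset.Icc (-(Q : ℤ)) Q

theorem mem_intBox {k Q : ℕ} {y : Fin k → ℤ} : y ∈ intBox k Q ↔ ∀ a, |y a| ≤ Q := by
  simp [intBox, Fintype.mem_piFinset, abs_le]

theorem card_intBox (k Q : ℕ) : (intBox k Q).card = (2 * Q + 1) ^ k := by
  simp only [intBox, Fintype.card_piFinset, Int.card_Icc, Finset.prod_const, Finset.card_univ,
    Fintype.card_fin]
  congr 1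
  omega

theorem volume_nearInt_int_le {N k : ℕ} (b : Fin N → Fin k → ℝ) {r η : ℝ} (σ : Fin N → ℝ)
    {y : Fin k → ℤ} (hy : y ≠ 0) (hr : 0 < r) (hη0 : 0 ≤ η) (hη : η ≤ 1 / 2) :
    volume {x : Fin N → Fin k → ℝ | x ∈ Metric.closedBall b r ∧
        ∀ i, ∃ z : ℤ, |∑ a, x i a * (y a : ℝ) + σ i - z| ≤ η} ≤
      ENNReal.ofReal (((2 * r) ^ k * (2 * η)) ^ N *
        (2 ^ N + if y ∈ intBox k ⌈1 / r⌉₊ then (1 + 1 / r) ^ N else 0)) := by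
  by_cases hbig : ∃ a, 1 / r ≤ |(y a : ℝ)|
  · obtain ⟨a, ha⟩ := hbig
    have hpos : 0 < |(y a : ℝ)| := (by positivity : 0 < 1 / r).trans_le ha
    refine (volume_nearInt_le b a (abs_pos.mp hpos) hr hη0 hη).trans
      (ENNReal.ofReal_le_ofReal ?_)
    rw [← mul_assoc, mul_pow ((2 * r) ^ k * (2 * η))]
    gcongr
    have h1 : 1 / (r * |(y a : ℝ)|) ≤ 1 := by
      rw [div_le_one (by positivity)]
      rw [div_le_iff₀ hr] at ha
      linarith
    calc (1 + 1 / (r * |(y a : ℝ)|)) ^ N ≤ 2 ^ N :=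
          pow_le_pow_left₀ (by positivity) (by linarith) N
      _ ≤ _ := by
          have : (0 : ℝ) ≤ if y ∈ intBox k ⌈1 / r⌉₊ then (1 + 1 / r) ^ N else 0 := by
            split_ifs <;> positivity
          linarith
  · push Not at hbig
    have hmem : y ∈ intBox k ⌈1 / r⌉₊ := by
      rw [mem_intBox]
      intro a
      have : ((|y a| : ℤ) : ℝ) ≤ ((⌈1 / r⌉₊ : ℤ) : ℝ) := by
        rw [Int.cast_abs, Int.cast_natCast]
        exact (hbig a).le.trans (Nat.le_ceil _)
      exact_mod_cast this
    obtain ⟨a, ha⟩ := Function.ne_iff.mp hy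
    have h1 : (1 : ℝ) ≤ |(y a : ℝ)| := by
      rw [← Int.cast_abs]
      exact_mod_cast Int.one_le_abs ha
    refine (volume_nearInt_le b a (by exact_mod_cast ha) hr hη0 hη).trans
      (ENNReal.ofReal_le_ofReal ?_)
    rw [if_pos hmem, ← mul_assoc, mul_pow ((2 * r) ^ k * (2 * η))]
    gcongr
    calc (1 + 1 / (r * |(y a : ℝ)|)) ^ N ≤ (1 + 1 / r) ^ N := by
          gcongr
          exact le_mul_of_one_le_right hr.le h1
      _ ≤ _ := by
          have : (0 : ℝ) ≤ 2 ^ N := by positivity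
          linarith

/-- The matrices `x` in a ball for which some integer vector `(y₁, y₂)` of size at most `Q` with
`y₁ ≠ 0` makes `x y₁ + B₂ y₂` close to an integer vector. -/
def nearSet {N k m : ℕ} (b : Fin N → Fin k → ℝ) (r : ℝ) (B₂ : Fin N → Fin m → ℝ) (Q : ℕ)
    (η : ℝ) : Set (Fin N → Fin k → ℝ) :=
  {x | x ∈ Metric.closedBall b r ∧ ∃ y₁ ∈ intBox k Q, y₁ ≠ 0 ∧ ∃ y₂ ∈ intBox m Q, ∀ i, ∃ z : ℤ,
    |∑ a, x i a * (y₁ a : ℝ) + ∑ a, B₂ i a * (y₂ a : ℝ) - z| ≤ η}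

theorem volume_nearSet_le {N k m : ℕ} (b : Fin N → Fin k → ℝ) {r η : ℝ}
    (B₂ : Fin N → Fin m → ℝ) (Q : ℕ) (hr : 0 < r) (hη0 : 0 ≤ η) (hη : η ≤ 1 / 2) :
    volume (nearSet b r B₂ Q η) ≤ ENNReal.ofReal ((2 * Q + 1) ^ m *
      (((2 * r) ^ k * (2 * η)) ^ N *
        (2 ^ N * (2 * Q + 1) ^ k + (1 + 1 / r) ^ N * (2 * ⌈1 / r⌉₊ + 1) ^ k))) := by
  classical
  have hsub : nearSet b r B₂ Q η ⊆ ⋃ y₂ ∈ intBox m Q, ⋃ y₁ ∈ (intBox k Q).filter (· ≠ 0),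
      {x : Fin N → Fin k → ℝ | x ∈ Metric.closedBall b r ∧
        ∀ i, ∃ z : ℤ, |∑ a, x i a * (y₁ a : ℝ) + ∑ a, B₂ i a * (y₂ a : ℝ) - z| ≤ η} := by
    rintro x ⟨hx, y₁, h1, h10, y₂, h2, h⟩
    exact Set.mem_biUnion h2 (Set.mem_biUnion (by simp [h1, h10]) ⟨hx, h⟩)
  refine (measure_mono hsub).trans ((measure_biUnion_finset_le _ _).trans ?_)
  set W := ((2 * r) ^ k * (2 * η)) ^ N with hW
  have hW0 : 0 ≤ W := by positivity
  have hterm0 : ∀ y : Fin k → ℤ, (0 : ℝ) ≤ W * (2 ^ N + if y ∈ intBox k ⌈1 / r⌉₊ then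
      (1 + 1 / r) ^ N else 0) := by
    intro y; split_ifs <;> positivity
  have hinner : ∀ y₂ ∈ intBox m Q, volume (⋃ y₁ ∈ (intBox k Q).filter (· ≠ 0),
      {x : Fin N → Fin k → ℝ | x ∈ Metric.closedBall b r ∧
        ∀ i, ∃ z : ℤ, |∑ a, x i a * (y₁ a : ℝ) + ∑ a, B₂ i a * (y₂ a : ℝ) - z| ≤ η}) ≤
      ENNReal.ofReal (W * (2 ^ N * (2 * Q + 1) ^ k + (1 + 1 / r) ^ N * (2 * ⌈1 / r⌉₊ + 1) ^ k)) := by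
    intro y₂ _
    refine (measure_biUnion_finset_le _ _).trans ?_
    calc _ ≤ ∑ y ∈ (intBox k Q).filter (· ≠ 0), ENNReal.ofReal (W * (2 ^ N +
            if y ∈ intBox k ⌈1 / r⌉₊ then (1 + 1 / r) ^ N else 0)) := by
          refine Finset.sum_le_sum fun y hy => ?_
          exact volume_nearInt_int_le b _ (Finset.mem_filter.mp hy).2 hr hη0 hη
      _ ≤ ∑ y ∈ intBox k Q, ENNReal.ofReal (W * (2 ^ N +
            if y ∈ intBox k ⌈1 / r⌉₊ then (1 + 1 / r) ^ N else 0)) :=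
          Finset.sum_le_sum_of_subset (Finset.filter_subset _ _)
      _ = ENNReal.ofReal (∑ y ∈ intBox k Q, (W * (2 ^ N +
            if y ∈ intBox k ⌈1 / r⌉₊ then (1 + 1 / r) ^ N else 0))) :=
          (ENNReal.ofReal_sum_of_nonneg fun y _ => hterm0 y).symm
      _ ≤ _ := by
          refine ENNReal.ofReal_le_ofReal ?_
          rw [← Finset.mul_sum, Finset.sum_add_distrib, Finset.sum_const, card_intBox,
            nsmul_eq_mul, ← Finset.sum_filter, Finset.sum_const, nsmul_eq_mul]
          refine mul_le_mul_of_nonneg_left (add_le_add (le_of_eq ?_) ?_) hW0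
          · push_cast; ring
          · rw [mul_comm]
            have h1 : ((intBox k Q).filter (· ∈ intBox k ⌈1 / r⌉₊)).card ≤
                (2 * ⌈1 / r⌉₊ + 1) ^ k := by
              rw [← card_intBox]
              exact Finset.card_le_card fun y hy => (Finset.mem_filter.mp hy).2
            gcongr
            exact_mod_cast h1
  refine (Finset.sum_le_sum hinner).trans ?_
  rw [Finset.sum_const, card_intBox, nsmul_eq_mul, ← ENNReal.ofReal_natCast,
    ← ENNReal.ofReal_mul (by positivity)]
  push_cast
  exact le_rfl

/-- The natural approximation scale `κ Q^{-l/N}`. -/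
def apxScale (κ : ℝ) (l N Q : ℕ) : ℝ := κ * (Q : ℝ) ^ (-((l : ℝ) / N))

theorem apxScale_pos {κ : ℝ} (hκ : 0 < κ) (l N : ℕ) {Q : ℕ} (hQ : 1 ≤ Q) :
    0 < apxScale κ l N Q := by
  have : (0 : ℝ) < Q := by exact_mod_cast hQ
  unfold apxScale; positivity

theorem apxScale_le {κ : ℝ} (hκ : 0 < κ) (l N : ℕ) {Q : ℕ} (hQ : 1 ≤ Q) :
    apxScale κ l N Q ≤ κ := by
  have : (1 : ℝ) ≤ Q := by exact_mod_cast hQ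
  unfold apxScale
  refine mul_le_of_le_one_right hκ.le (Real.rpow_le_one_of_one_le_of_nonpos this ?_)
  rw [neg_nonpos]; positivity

theorem apxScale_pow {κ : ℝ} (l : ℕ) {N Q : ℕ} (hN : N ≠ 0) :
    apxScale κ l N Q ^ N = κ ^ N / (Q : ℝ) ^ l := by
  have hN' : (N : ℝ) ≠ 0 := by exact_mod_cast hN
  rw [apxScale, mul_pow, ← Real.rpow_natCast ((Q : ℝ) ^ _), ← Real.rpow_mul (by positivity),
    neg_mul, div_mul_cancel₀ _ hN', Real.rpow_neg (by positivity), Real.rpow_natCast]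
  rfl

/-- For a suitable scale constant, the exceptional sets fill at most half of every ball, once
`Q` is large. -/
theorem exists_scale_volume_nearSet_le (N k m : ℕ) (hN : N ≠ 0) (hk : 1 ≤ k) :
    ∃ κ : ℝ, 0 < κ ∧ κ ≤ 1 / 2 ∧ ∀ r : ℝ, 0 < r → ∀ᶠ Q : ℕ in atTop,
      ∀ (b : Fin N → Fin k → ℝ) (B₂ : Fin N → Fin m → ℝ),
        volume (nearSet b r B₂ Q (apxScale κ (k + m) N Q)) ≤
          ENNReal.ofReal (r ^ (k * N) / 2) := by
  set M : ℝ := 2 * (3 ^ m * 2 ^ (k * N) * 2 ^ N * (2 ^ N * 3 ^ k + 1)) with hM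
  have hM0 : 0 < M := by positivity
  set κ : ℝ := min (1 / 2) (1 / M) with hκ
  have hκ0 : 0 < κ := by positivity
  refine ⟨κ, hκ0, min_le_left _ _, fun r hr => ?_⟩
  set K : ℝ := (1 + 1 / r) ^ N * (2 * ⌈1 / r⌉₊ + 1) ^ k with hK
  have hev : ∀ᶠ Q : ℕ in atTop, K ≤ (Q : ℝ) ∧ 1 ≤ Q :=
    (tendsto_natCast_atTop_atTop.eventually_ge_atTop K).and (eventually_ge_atTop 1)
  filter_upwards [hev] with Q hQ b B₂
  obtain ⟨hKQ, hQ1⟩ := hQ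
  have hQ1' : (1 : ℝ) ≤ Q := by exact_mod_cast hQ1
  have hη0 := apxScale_pos hκ0 (k + m) N hQ1
  have hη := (apxScale_le hκ0 (k + m) N hQ1).trans (min_le_left _ _)
  refine (volume_nearSet_le b B₂ Q hr hη0.le hη).trans (ENNReal.ofReal_le_ofReal ?_)
  have h3 : (2 * (Q : ℝ) + 1) ≤ 3 * Q := by linarith
  have hKk : K ≤ (Q : ℝ) ^ k := hKQ.trans (le_self_pow₀ hQ1' (by omega))
  have hκN : κ ^ N ≤ 1 / M := by
    calc κ ^ N ≤ κ := pow_le_of_le_one hκ0.le ((min_le_left _ _).trans (by norm_num)) hN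
      _ ≤ _ := min_le_right _ _
  calc (2 * (Q : ℝ) + 1) ^ m * (((2 * r) ^ k * (2 * apxScale κ (k + m) N Q)) ^ N *
        (2 ^ N * (2 * Q + 1) ^ k + K))
      ≤ (3 * Q) ^ m * (((2 * r) ^ k * (2 * apxScale κ (k + m) N Q)) ^ N *
        (2 ^ N * (3 * Q) ^ k + Q ^ k)) := by gcongr
    _ = (3 * Q) ^ m * ((2 ^ (k * N) * r ^ (k * N)) * (2 ^ N * (κ ^ N / (Q : ℝ) ^ (k + m))) *
        (2 ^ N * (3 * Q) ^ k + Q ^ k)) := by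
        rw [mul_pow ((2 * r) ^ k), ← pow_mul, mul_pow 2 r, mul_pow 2 (apxScale _ _ _ _),
          apxScale_pow _ hN]
    _ = κ ^ N * (M / 2 * r ^ (k * N)) := by
        rw [hM]; field_simp; ring
    _ ≤ 1 / M * (M / 2 * r ^ (k * N)) := by gcongr
    _ = _ := by field_simp

/-- The matrices in the unit ball admitting a short nonzero integer vector with nearly integral
image form a set of small measure. -/
theorem tendsto_volume_nearSet_zero (N k m : ℕ) (hN : N ≠ 0) (hk : 1 ≤ k) {κ : ℝ} (hκ0 : 0 < κ)
    (hκ : κ ≤ 1 / 2) {ε : ℝ} (hε : 0 < ε) :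
    ∀ᶠ Q : ℕ in atTop,
      volume (nearSet (0 : Fin N → Fin m → ℝ) 1 (0 : Fin N → Fin 0 → ℝ) Q
        (apxScale κ (k + m) N Q)) ≤ ENNReal.ofReal ε := by
  set M : ℝ := 2 ^ (m * N) * 2 ^ N * (2 ^ N * 3 ^ m + 2 ^ N * 3 ^ m) with hM
  have hev : ∀ᶠ Q : ℕ in atTop, M / ε ≤ (Q : ℝ) ∧ 1 ≤ Q :=
    (tendsto_natCast_atTop_atTop.eventually_ge_atTop _).and (eventually_ge_atTop 1)
  filter_upwards [hev] with Q hQ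
  obtain ⟨hKQ, hQ1⟩ := hQ
  have hQ1' : (1 : ℝ) ≤ Q := by exact_mod_cast hQ1
  have hη0 := apxScale_pos hκ0 (k + m) N hQ1
  have hη := (apxScale_le hκ0 (k + m) N hQ1).trans hκ
  refine (volume_nearSet_le 0 0 Q one_pos hη0.le hη).trans (ENNReal.ofReal_le_ofReal ?_)
  have hQk : (Q : ℝ) ≤ (Q : ℝ) ^ k := le_self_pow₀ hQ1' (by omega)
  have hQm : (1 : ℝ) ≤ (Q : ℝ) ^ m := one_le_pow₀ hQ1'
  have hκN : κ ^ N ≤ 1 := pow_le_one₀ hκ0.le (hκ.trans (by norm_num))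
  have hone : ((⌈(1 : ℝ) / 1⌉₊ : ℕ) : ℝ) = 1 := by simp
  rw [hone]
  calc (2 * (Q : ℝ) + 1) ^ 0 * (((2 * 1) ^ m * (2 * apxScale κ (k + m) N Q)) ^ N *
        (2 ^ N * (2 * Q + 1) ^ m + (1 + 1 / 1) ^ N * (2 * 1 + 1) ^ m))
      = (2 ^ (m * N) * (2 ^ N * (κ ^ N / (Q : ℝ) ^ (k + m)))) *
        (2 ^ N * (2 * Q + 1) ^ m + 2 ^ N * 3 ^ m * 1) := by
        rw [mul_pow ((2 * 1 : ℝ) ^ m), ← pow_mul, mul_pow 2 (apxScale _ _ _ _),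
          apxScale_pow _ hN]
        norm_num
    _ ≤ (2 ^ (m * N) * (2 ^ N * (1 / (Q : ℝ) ^ (k + m)))) *
        (2 ^ N * (3 * Q) ^ m + 2 ^ N * 3 ^ m * Q ^ m) := by
        gcongr
        linarith
    _ = M / Q ^ k := by rw [hM]; field_simp; ring
    _ ≤ M / Q := by
        gcongr
    _ ≤ ε := by
        rw [div_le_iff₀ hε] at hKQ
        rw [div_le_iff₀ (by linarith)]
        linarith

theorem abs_sub_lt_of_floor_mul_eq {M : ℕ} {x y : ℝ} (hM : 0 < M) (hx : 0 ≤ x) (hy : 0 ≤ y)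
    (h : ⌊(M : ℝ) * x⌋₊ = ⌊(M : ℝ) * y⌋₊) : |x - y| ≤ 1 / M := by
  have hM' : (0 : ℝ) < M := by exact_mod_cast hM
  have h1 := Nat.floor_le (mul_nonneg hM'.le hx)
  have h2 := Nat.floor_le (mul_nonneg hM'.le hy)
  have h3 := Nat.lt_floor_add_one ((M : ℝ) * x)
  have h4 := Nat.lt_floor_add_one ((M : ℝ) * y)
  rw [h] at h1 h3
  rw [le_div_iff₀ hM', ← abs_of_pos hM', ← abs_mul, abs_le]
  constructor <;> nlinarith

/-- Pigeonhole principle: in the absence of short integer vectors with nearly integral image,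
there is one which is long only in a prescribed coordinate. -/
theorem exists_long_coordinate {ι : Type*} [Fintype ι] [DecidableEq ι] {N k Q R M : ℕ} (hk : 1 ≤ k)
    (hR : 1 ≤ R) (hM : 0 < M)
    (hcard : M ^ N * (R * k) ^ (Fintype.card ι - 1) < (R * Q + 1) ^ Fintype.card ι)
    (B : Fin N → ι → ℝ)
    (hB : ∀ y : ι → ℤ, y ≠ 0 → (∀ a, |y a| ≤ Q) →
      ¬ ∀ i, ∃ z : ℤ, |∑ a, B i a * (y a : ℝ) - z| ≤ 1 / M) (a₀ : ι) :
    ∃ y : ι → ℤ, (∀ a, |y a| ≤ R * Q) ∧ (Q : ℤ) < |y a₀| ∧ (∀ b ≠ a₀, k * |y b| ≤ Q) ∧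
      ∀ i, ∃ z : ℤ, |∑ a, B i a * (y a : ℝ) - z| ≤ 1 / M := by
  have hM' : (0 : ℝ) < M := by exact_mod_cast hM
  let L : (ι → Fin (R * Q + 1)) → Fin N → ℝ := fun y i => ∑ a, B i a * ((y a : ℕ) : ℝ)
  let w := Q / k + 1
  have hw0 : 0 < w := Nat.succ_pos _
  have hw : Q < k * w := by
    have := Nat.lt_mul_div_succ Q hk
    simpa [w] using this
  let f : (ι → Fin (R * Q + 1)) → (Fin N → Fin M) × ({b // b ≠ a₀} → Fin (R * k)) := fun y =>
    (fun i => ⟨⌊(M : ℝ) * Int.fract (L y i)⌋₊, by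
        rw [Nat.floor_lt (mul_nonneg hM'.le (Int.fract_nonneg _))]
        have := Int.fract_lt_one (L y i)
        nlinarith⟩,
      fun b => ⟨(y b : ℕ) / w, by
        have h1 := Nat.lt_succ_iff.mp (y b).2
        rw [Nat.div_lt_iff_lt_mul hw0]
        calc (y b : ℕ) ≤ R * Q := h1
          _ < R * (k * w) := by gcongr
          _ = _ := by ring⟩)
  have hc : Fintype.card ((Fin N → Fin M) × ({b // b ≠ a₀} → Fin (R * k))) <
      Fintype.card (ι → Fin (R * Q + 1)) := by
    have h2 : Fintype.card {b // b ≠ a₀} = Fintype.card ι - 1 := by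
      rw [Fintype.card_subtype_compl, Fintype.card_subtype_eq]
    simpa [h2] using hcard
  obtain ⟨y, y', hne, hf⟩ := Fintype.exists_ne_map_eq_of_card_lt f hc
  have hf1 : ∀ i, ⌊(M : ℝ) * Int.fract (L y i)⌋₊ = ⌊(M : ℝ) * Int.fract (L y' i)⌋₊ := fun i => by
    have := congrFun (congrArg Prod.fst hf) i
    exact congrArg Fin.val this
  have hf2 : ∀ b, b ≠ a₀ → (y b : ℕ) / w = (y' b : ℕ) / w := fun b hb => by
    have := congrFun (congrArg Prod.snd hf) ⟨b, hb⟩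
    exact congrArg Fin.val this
  let v : ι → ℤ := fun a => ((y a : ℕ) : ℤ) - ((y' a : ℕ) : ℤ)
  have hv0 : v ≠ 0 := by
    intro h
    apply hne
    ext a
    have := congrFun h a
    simp only [v, Pi.zero_apply] at this
    omega
  have hvR : ∀ a, |v a| ≤ R * Q := by
    intro a
    have h1 : (((y a : ℕ) : ℤ)) ≤ R * Q := by exact_mod_cast Nat.lt_succ_iff.mp (y a).2
    have h2 : (((y' a : ℕ) : ℤ)) ≤ R * Q := by exact_mod_cast Nat.lt_succ_iff.mp (y' a).2
    rw [abs_le]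
    simp only [v]
    constructor <;> omega
  have hvb : ∀ b ≠ a₀, k * |v b| ≤ Q := by
    intro b hb
    have h := hf2 b hb
    have e1 := Nat.div_add_mod (y b : ℕ) w
    have e2 := Nat.div_add_mod (y' b : ℕ) w
    have l1 := Nat.mod_lt (y b : ℕ) hw0
    have l2 := Nat.mod_lt (y' b : ℕ) hw0
    rw [h] at e1
    have h3 : |v b| ≤ ((Q / k : ℕ) : ℤ) := by
      rw [abs_le]
      simp only [v]
      constructor <;> omega
    calc (k : ℤ) * |v b| ≤ k * ((Q / k : ℕ) : ℤ) := by gcongr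
      _ ≤ Q := by exact_mod_cast Nat.mul_div_le Q k
  have hvB : ∀ i, ∃ z : ℤ, |∑ a, B i a * (v a : ℝ) - z| ≤ 1 / M := by
    intro i
    refine ⟨⌊L y i⌋ - ⌊L y' i⌋, ?_⟩
    have hs : ∑ a, B i a * (v a : ℝ) = L y i - L y' i := by
      simp only [L, v, ← Finset.sum_sub_distrib]
      refine Finset.sum_congr rfl fun a _ => ?_
      push_cast; ring
    have := abs_sub_lt_of_floor_mul_eq hM (Int.fract_nonneg _) (Int.fract_nonneg _) (hf1 i)
    rw [hs]
    push_cast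
    simp only [Int.fract] at this
    calc _ = |L y i - ⌊L y i⌋ - (L y' i - ⌊L y' i⌋)| := by congr 1; ring
      _ ≤ _ := this
  refine ⟨v, hvR, ?_, hvb, hvB⟩
  by_contra hlt
  push Not at hlt
  refine hB v hv0 (fun a => ?_) hvB
  by_cases ha : a = a₀
  · rw [ha]; exact hlt
  · have h1 := hvb a ha
    have h2 : |v a| ≤ k * |v a| := le_mul_of_one_le_left (abs_nonneg _) (by exact_mod_cast hk)
    exact h2.trans h1

/-- Inverse bound for diagonally dominant matrices. -/
theorem abs_le_of_diag_dominant {k : ℕ} {Y : Fin k → Fin k → ℝ} {Q δ : ℝ} (hQ : 0 < Q)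
    (hd : ∀ a, Q ≤ |Y a a|) (ho : ∀ a b, b ≠ a → k * |Y a b| ≤ Q) {x : Fin k → ℝ}
    (hx : ∀ a, |∑ b, Y a b * x b| ≤ δ) (b : Fin k) : |x b| ≤ k * δ / Q := by
  have hk : (0 : ℝ) < k := by exact_mod_cast b.pos
  obtain ⟨a, -, ha⟩ := Finset.exists_max_image Finset.univ (fun b => |x b|) ⟨b, Finset.mem_univ b⟩
  refine (ha b (Finset.mem_univ b)).trans ?_
  rw [le_div_iff₀ hQ]
  have hsplit := Finset.add_sum_erase Finset.univ (fun b => Y a b * x b) (Finset.mem_univ a)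
  have h1 : |Y a a * x a| ≤ δ + |∑ b ∈ Finset.univ.erase a, Y a b * x b| := by
    have : Y a a * x a = ∑ b, Y a b * x b - ∑ b ∈ Finset.univ.erase a, Y a b * x b := by
      rw [← hsplit]; ring
    rw [this]
    exact (abs_sub _ _).trans (add_le_add (hx a) le_rfl)
  have h2 : |∑ b ∈ Finset.univ.erase a, Y a b * x b| ≤ (k - 1) * (Q / k * |x a|) := by
    calc _ ≤ ∑ b ∈ Finset.univ.erase a, |Y a b * x b| := Finset.abs_sum_le_sum_abs _ _
      _ ≤ ∑ _b ∈ Finset.univ.erase a, Q / k * |x a| := by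
          refine Finset.sum_le_sum fun b hb => ?_
          rw [abs_mul]
          refine mul_le_mul ?_ (ha b (Finset.mem_univ b)) (abs_nonneg _) (by positivity)
          rw [le_div_iff₀ hk, mul_comm]
          exact ho a b (Finset.ne_of_mem_erase hb)
      _ = _ := by
          rw [Finset.sum_const, Finset.card_erase_of_mem (Finset.mem_univ a), Finset.card_univ,
            Fintype.card_fin, nsmul_eq_mul, Nat.cast_sub (by have := b.pos; omega), Nat.cast_one]
  rw [abs_mul] at h1
  have h3 : Q * |x a| ≤ |Y a a| * |x a| := by gcongr; exact hd a
  have h4 : (k - 1) * (Q / k * |x a|) = Q * |x a| - Q * |x a| / k := by field_simp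
  have h5 : Q * |x a| / k ≤ δ := by linarith
  rw [div_le_iff₀ hk] at h5
  linarith

/-- The matrices `A` such that `A` and `B₂` together describe a subspace containing `k` integer
vectors with entries at most `T`, independent in the first `k` coordinates. -/
def ratCenters {N k m : ℕ} (B₂ : Fin N → Fin m → ℝ) (T : ℝ) : Set (Fin N → Fin k → ℝ) :=
  {A | ∃ (Y : Fin k → Fin k → ℤ) (Y₂ : Fin k → Fin m → ℤ) (Z : Fin k → Fin N → ℤ),
    (∀ a b, |(Y a b : ℝ)| ≤ T) ∧ (∀ a b, |(Y₂ a b : ℝ)| ≤ T) ∧ (∀ a i, |(Z a i : ℝ)| ≤ T) ∧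
    (Matrix.of fun a b => (Y a b : ℝ)).det ≠ 0 ∧
    ∀ a i, ∑ b, A i b * (Y a b : ℝ) + ∑ b, B₂ i b * (Y₂ a b : ℝ) = Z a i}

theorem zero_mem_ratCenters {N k m : ℕ} (B₂ : Fin N → Fin m → ℝ) :
    (0 : Fin N → Fin k → ℝ) ∈ ratCenters B₂ 1 := by
  refine ⟨fun a b => if a = b then 1 else 0, 0, 0, fun a b => ?_, fun a b => by simp,
    fun a i => by simp, ?_, fun a i => by simp⟩
  · dsimp only; split_ifs <;> simp
  · have : (Matrix.of fun a b : Fin k => ((if a = b then (1 : ℤ) else 0 : ℤ) : ℝ)) = 1 := by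
      ext a b; simp [Matrix.one_apply]
    rw [this]; simp

theorem exists_primitive_of_ratCenters {n k m N : ℕ} (e : (Fin k ⊕ Fin m) ⊕ Fin N ≃ Fin n)
    {B₁ A : Fin N → Fin k → ℝ} {B₂ : Fin N → Fin m → ℝ} {T r : ℝ} (hT : 0 ≤ T) (hr : 0 ≤ r)
    (hA : A ∈ ratCenters B₂ T) (hB : dist B₁ A ≤ r) :
    ∃ f : Fin k → Fin n → ℤ, LinearIndependent ℝ (fun i => castVec (f i)) ∧
      (∀ m : Fin n → ℤ, castVec m ∈ Submodule.span ℝ (Set.range fun i => castVec (f i)) →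
          ∃ c : Fin k → ℤ, m = fun j => ∑ i, c i * f i j) ∧
      heightB f ≤ Fintype.card (WedgeIdx n k) * (k.factorial * T ^ k) ∧
      dPP (Submodule.span ℝ (Set.range fun i => castVec (f i))) (chart e B₁ B₂).1 ≤
        n * (k * r) := by
  obtain ⟨Y, Y₂, Z, hY, hY₂, hZ, hdet, hrel⟩ := hA
  let p : Fin k → Fin n → ℤ := fun a j => Sum.elim (Sum.elim (Y a) (Y₂ a)) (Z a) (e.symm j)
  have hp1 : ∀ a b, castVec (p a) (e (Sum.inl (Sum.inl b))) = Y a b := fun a b => by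
    simp [p, castVec]
  have hp2 : ∀ a b, castVec (p a) (e (Sum.inl (Sum.inr b))) = Y₂ a b := fun a b => by
    simp [p, castVec]
  have hp3 : ∀ a i, castVec (p a) (e (Sum.inr i)) = Z a i := fun a b => by
    simp [p, castVec]
  have hLI : LinearIndependent ℝ fun i => castVec (p i) := by
    rw [Fintype.linearIndependent_iff]
    intro t ht
    have h0 : t = 0 := by
      refine Matrix.eq_zero_of_vecMul_eq_zero hdet ?_
      ext b
      have := congrFun ht (e (Sum.inl (Sum.inl b)))
      simp only [Finset.sum_apply, Pi.smul_apply, smul_eq_mul, hp1, Pi.zero_apply] at this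
      simpa [Matrix.vecMul, dotProduct] using this
    intro i; rw [h0]; rfl
  obtain ⟨f, hfLI, hspan, hprim, hH⟩ := exists_primitive_basis hLI
  refine ⟨f, hfLI, hprim, hH.trans (heightB_le_of_abs_le hT fun a j => ?_), ?_⟩
  · have : ∀ j, |castVec (p a) j| ≤ T := by
      rw [forall_fin_iff e]
      refine ⟨?_, fun i => by rw [hp3]; exact hZ a i⟩
      rintro (b | b)
      · rw [hp1]; exact hY a b
      · rw [hp2]; exact hY₂ a b
    exact this j
  · rw [hspan]
    refine dPP_graphSub_le e ?_ (by positivity) ?_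
    · refine (finrank_range_le_card _).trans ?_
      simp
    · intro v hv i
      have hlin : v (e (Sum.inr i)) = ∑ b, A i b * v (e (Sum.inl (Sum.inl b))) +
          ∑ b, B₂ i b * v (e (Sum.inl (Sum.inr b))) := by
        induction hv using Submodule.span_induction with
        | mem x hx =>
          obtain ⟨a, rfl⟩ := hx
          simp only [hp1, hp2, hp3]
          exact (hrel a i).symm
        | zero => simp
        | add x y _ _ hx hy =>
          simp only [Pi.add_apply, hx, hy, mul_add, Finset.sum_add_distrib]; ring
        | smul c x _ hx =>
          simp only [Pi.smul_apply, smul_eq_mul, hx, mul_add, Finset.mul_sum]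
          congr 1 <;> exact Finset.sum_congr rfl fun b _ => by ring
      rw [Fintype.sum_sum_type, hlin]
      simp only [Sum.elim_inl, Sum.elim_inr]
      have hdiff : ∀ b, |A i b - B₁ i b| ≤ r := fun b => by
        rw [abs_sub_comm]; exact (dist_mat_le_iff hr).mp hB i b
      have := abs_sum_mul_le (B := fun b => A i b - B₁ i b)
        (y := fun b => v (e (Sum.inl (Sum.inl b)))) hdiff (fun b => abs_le_eucNorm v _) hr
      rw [Fintype.card_fin, ← mul_assoc] at this
      refine le_trans (le_of_eq ?_) this
      congr 1
      simp only [sub_mul, Finset.sum_sub_distrib]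
      ring

/-- Generic matrices are close to the centres `ratCenters`. -/
theorem exists_mem_ratCenters {N k m : ℕ} (hN : N ≠ 0) (hk : 1 ≤ k) {κ : ℝ} (hκ0 : 0 < κ)
    (hκ : κ ≤ 1 / 2) : ∃ T : ℝ, 1 ≤ T ∧ ∀ Q : ℕ, 1 ≤ Q →
      ∀ (b B₁ : Fin N → Fin k → ℝ) (r : ℝ) (B₂ : Fin N → Fin m → ℝ),
        B₁ ∈ Metric.closedBall 0 1 → B₂ ∈ Metric.closedBall 0 1 → B₁ ∈ Metric.closedBall b r →
        B₁ ∉ nearSet b r B₂ Q (apxScale κ (k + m) N Q) →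
        B₂ ∉ nearSet (0 : Fin N → Fin m → ℝ) 1 (0 : Fin N → Fin 0 → ℝ) Q
          (apxScale κ (k + m) N Q) →
        ∃ A ∈ ratCenters B₂ (T * Q), dist B₁ A ≤ k * apxScale κ (k + m) N Q / Q := by
  obtain ⟨R, hR⟩ := exists_nat_ge (max 1 ((2 / κ) ^ N * (k : ℝ) ^ (k + m - 1)))
  have hR1' : (1 : ℝ) ≤ R := (le_max_left _ _).trans hR
  have hR1 : 1 ≤ R := by exact_mod_cast hR1'
  have hR2 := (le_max_right _ _).trans hR
  refine ⟨(k + m + 1) * R, by nlinarith [(Nat.cast_nonneg (k + m) : (0 : ℝ) ≤ ((k + m : ℕ) : ℝ)),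
    (by push_cast; ring : ((k + m : ℕ) : ℝ) = k + m)], ?_⟩
  intro Q hQ b B₁ r B₂ hB₁ hB₂ hB₁b hn1 hn2
  set η := apxScale κ (k + m) N Q with hη
  have hη0 : 0 < η := apxScale_pos hκ0 _ _ hQ
  have hη1 : η ≤ 1 / 2 := (apxScale_le hκ0 _ _ hQ).trans hκ
  have hQ' : (1 : ℝ) ≤ Q := by exact_mod_cast hQ
  set M := ⌈1 / η⌉₊ with hM
  have hM1 : 1 / η ≤ M := Nat.le_ceil _
  have hM0' : (0 : ℝ) < M := (by positivity : 0 < 1 / η).trans_le hM1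
  have hM0 : 0 < M := by exact_mod_cast hM0'
  have hMη : 1 / (M : ℝ) ≤ η := by
    rw [div_le_iff₀ hM0']
    rw [div_le_iff₀ hη0] at hM1
    linarith
  have hM2 : (M : ℝ) ≤ 2 / η := by
    have := (Nat.ceil_lt_add_one (by positivity : 0 ≤ 1 / η)).le
    have h1 : 1 ≤ 1 / η := by rw [le_div_iff₀ hη0]; linarith
    calc (M : ℝ) ≤ 1 / η + 1 := this
      _ ≤ 1 / η + 1 / η := by linarith
      _ = _ := by ring
  have hcard : M ^ N * (R * k) ^ (Fintype.card (Fin k ⊕ Fin m) - 1) <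
      (R * Q + 1) ^ Fintype.card (Fin k ⊕ Fin m) := by
    have hc : Fintype.card (Fin k ⊕ Fin m) = k + m := by simp
    rw [hc]
    have hreal : (M : ℝ) ^ N * (R * k) ^ (k + m - 1) < (R * Q + 1) ^ (k + m) := by
      have hl : k + m ≠ 0 := by omega
      calc (M : ℝ) ^ N * (R * k) ^ (k + m - 1)
          ≤ (2 / η) ^ N * (R * k) ^ (k + m - 1) := by gcongr
        _ = ((2 / κ) ^ N * (k : ℝ) ^ (k + m - 1)) * R ^ (k + m - 1) * Q ^ (k + m) := by
            rw [div_pow, div_pow, hη, apxScale_pow _ hN]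
            field_simp
            rw [mul_pow, mul_comm]
        _ ≤ R * R ^ (k + m - 1) * Q ^ (k + m) := by gcongr
        _ = (R * Q) ^ (k + m) := by rw [mul_pow, mul_pow_sub_one hl]
        _ < _ := pow_lt_pow_left₀ (by linarith) (by positivity) hl
    exact_mod_cast hreal
  let B : Fin N → (Fin k ⊕ Fin m) → ℝ := fun i => Sum.elim (B₁ i) (B₂ i)
  have hB1 : ∀ i a, |B i a| ≤ 1 := by
    rintro i (a | a)
    · exact (mem_closedBall_mat zero_le_one).mp hB₁ i a
    · exact (mem_closedBall_mat zero_le_one).mp hB₂ i a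
  have hBsum : ∀ i (y : Fin k ⊕ Fin m → ℤ), ∑ a, B i a * (y a : ℝ) =
      ∑ a, B₁ i a * (y (Sum.inl a) : ℝ) + ∑ a, B₂ i a * (y (Sum.inr a) : ℝ) := by
    intro i y
    rw [Fintype.sum_sum_type]
    simp [B]
  have hno : ∀ y : Fin k ⊕ Fin m → ℤ, y ≠ 0 → (∀ a, |y a| ≤ Q) →
      ¬ ∀ i, ∃ z : ℤ, |∑ a, B i a * (y a : ℝ) - z| ≤ 1 / M := by
    intro y hy0 hyQ hz
    by_cases h1 : (fun a => y (Sum.inl a)) = 0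
    · apply hn2
      refine ⟨hB₂, fun a => y (Sum.inr a), mem_intBox.mpr fun a => hyQ _, ?_, 0,
        mem_intBox.mpr fun a => a.elim0, fun i => ?_⟩
      · intro h2
        apply hy0
        ext (a | a)
        · exact congrFun h1 a
        · exact congrFun h2 a
      · obtain ⟨z, hz⟩ := hz i
        refine ⟨z, le_trans (le_of_eq ?_) (hz.trans hMη)⟩
        have h1' : ∀ a, y (Sum.inl a) = 0 := fun a => congrFun h1 a
        rw [hBsum]
        simp [h1']
    · apply hn1
      refine ⟨hB₁b, fun a => y (Sum.inl a), mem_intBox.mpr fun a => hyQ _, h1,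
        fun a => y (Sum.inr a), mem_intBox.mpr fun a => hyQ _, fun i => ?_⟩
      obtain ⟨z, hz⟩ := hz i
      refine ⟨z, ?_⟩
      rw [hBsum] at hz
      exact hz.trans hMη
  choose y hyR hyd hyo hyz using fun a : Fin k =>
    exists_long_coordinate hk hR1 hM0 hcard B hno (Sum.inl a)
  choose z hz using hyz
  let Yr : Matrix (Fin k) (Fin k) ℝ := Matrix.of fun a b => (y a (Sum.inl b) : ℝ)
  have hQ0 : (0 : ℝ) < Q := by linarith
  have hdiag : ∀ a, (Q : ℝ) ≤ |Yr a a| := by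
    intro a
    simp only [Yr, Matrix.of_apply]
    rw [← Int.cast_abs]
    exact_mod_cast (hyd a).le
  have hoff : ∀ a b, b ≠ a → k * |Yr a b| ≤ Q := by
    intro a b hb
    simp only [Yr, Matrix.of_apply]
    rw [← Int.cast_abs]
    exact_mod_cast hyo a (Sum.inl b) (by simpa using hb)
  have hdet : Yr.det ≠ 0 := by
    intro h0
    obtain ⟨v, hv0, hv⟩ := Matrix.exists_mulVec_eq_zero_iff.mpr h0
    apply hv0
    ext c
    have := abs_le_of_diag_dominant (δ := 0) hQ0 hdiag hoff (x := v)
      (fun a => by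
        have := congrFun hv a
        simp only [Matrix.mulVec, dotProduct, Pi.zero_apply] at this
        rw [this, abs_zero]) c
    simpa using this
  have hyT : ∀ a c, |(y a c : ℝ)| ≤ R * Q := by
    intro a c
    rw [← Int.cast_abs]
    exact_mod_cast hyR a c
  have hRQ : (1 : ℝ) ≤ R * Q := by nlinarith
  have hT : (R : ℝ) * Q ≤ (k + m + 1) * R * Q := by
    have : (0 : ℝ) ≤ k + m := by positivity
    nlinarith
  let rhs : Fin N → Fin k → ℝ := fun i a => z a i - ∑ b, B₂ i b * (y a (Sum.inr b) : ℝ)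
  let A : Fin N → Fin k → ℝ := fun i => Yr⁻¹.mulVec (rhs i)
  have hA : ∀ i a, ∑ b, Yr a b * A i b = rhs i a := by
    intro i a
    have h1 : Yr.mulVec (A i) = rhs i := by
      simp only [A]
      rw [Matrix.mulVec_mulVec, Matrix.mul_nonsing_inv _ (isUnit_iff_ne_zero.mpr hdet),
        Matrix.one_mulVec]
    exact congrFun h1 a
  refine ⟨A, ⟨fun a b => y a (Sum.inl b), fun a b => y a (Sum.inr b), z,
    fun a b => (hyT _ _).trans hT, fun a b => (hyT _ _).trans hT, fun a i => ?_, hdet,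
    fun a i => ?_⟩, ?_⟩
  · have h1 := abs_sum_mul_le (hB1 i) (hyT a) zero_le_one
    have h2 := hz a i
    simp only [Fintype.card_sum, Fintype.card_fin, one_mul] at h1
    push_cast at h1
    have h3 : |(z a i : ℝ)| ≤ |∑ c, B i c * (y a c : ℝ)| + |∑ c, B i c * (y a c : ℝ) - z a i| := by
      have h4 : (z a i : ℝ) = ∑ c, B i c * (y a c : ℝ) - (∑ c, B i c * (y a c : ℝ) - z a i) := by
        ring
      conv_lhs => rw [h4]
      exact abs_sub _ _
    calc |(z a i : ℝ)| ≤ (k + m) * (R * Q) + η := by linarith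
      _ ≤ _ := by nlinarith
  · have h1 := hA i a
    simp only [Yr, Matrix.of_apply, rhs] at h1
    have h2 : ∑ b, A i b * (y a (Sum.inl b) : ℝ) = ∑ b, (y a (Sum.inl b) : ℝ) * A i b :=
      Finset.sum_congr rfl fun b _ => mul_comm _ _
    rw [h2, h1]; ring
  · rw [dist_mat_le_iff (by positivity)]
    intro i c
    refine abs_le_of_diag_dominant hQ0 hdiag hoff (x := fun c => B₁ i c - A i c) (fun a => ?_) c
    refine le_trans (le_of_eq ?_) ((hz a i).trans hMη)
    congr 1
    rw [hBsum]
    simp only [mul_sub, Finset.sum_sub_distrib, hA, rhs]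
    simp only [Yr, Matrix.of_apply]
    have h2 : ∑ b, B₁ i b * (y a (Sum.inl b) : ℝ) = ∑ b, (y a (Sum.inl b) : ℝ) * B₁ i b :=
      Finset.sum_congr rfl fun b _ => mul_comm _ _
    rw [h2]; ring

theorem eventually_mul_rpow_neg_lt (K : ℝ) {p q : ℝ} (h : p < q) :
    ∀ᶠ Q : ℕ in atTop, K * (Q : ℝ) ^ (-q) < (Q : ℝ) ^ (-p) := by
  have h1 : Tendsto (fun Q : ℕ => K * (Q : ℝ) ^ (-(q - p))) atTop (nhds (K * 0)) :=
    ((tendsto_rpow_neg_atTop (sub_pos.mpr h)).comp tendsto_natCast_atTop_atTop).const_mul K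
  rw [mul_zero] at h1
  filter_upwards [h1.eventually_lt_const one_pos, eventually_ge_atTop 1] with Q hQ hQ1
  have hQ0 : (0 : ℝ) < Q := by exact_mod_cast hQ1
  have h2 : (Q : ℝ) ^ (-q) = (Q : ℝ) ^ (-(q - p)) * (Q : ℝ) ^ (-p) := by
    rw [← Real.rpow_add hQ0]; congr 1; ring
  rw [h2, ← mul_assoc]
  have := Real.rpow_pos_of_pos hQ0 (-p)
  nlinarith

/-- Along a sequence of scales, `ψ` is not much smaller than its lower order predicts. -/
theorem frequently_rpow_le_of_gammaE_lt {ψ : ℝ → ℝ} (hψpos : ∀ t > 0, 0 < ψ t)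
    (hψdec : ∀ s t : ℝ, 0 < s → s ≤ t → ψ t ≤ ψ s) {k : ℕ} (hk : 1 ≤ k) {C : ℝ} (hC : 0 < C)
    {g : ℝ} (hg : gammaE ψ < (g : EReal)) :
    ∃ᶠ Q : ℕ in atTop, (Q : ℝ) ^ (-(k * g)) ≤ ψ (C * (Q : ℝ) ^ k) := by
  obtain ⟨g₀', h1, h2⟩ := EReal.lt_iff_exists_real_btwn.mp hg
  have hg₀g : g₀' < g := by exact_mod_cast h2
  have hg₀0 : 0 ≤ g₀' := by
    have := (gammaE_nonneg hψpos hψdec).trans h1.le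
    exact_mod_cast this
  set g₀ := g₀'
  have hfr := frequently_lt_of_liminf_lt (by isBoundedDefault) h1
  have hk' : (0 : ℝ) < k := by exact_mod_cast hk
  have hev := eventually_mul_rpow_neg_lt ((C * 2 ^ k) ^ g₀)
    (mul_lt_mul_of_pos_left hg₀g hk')
  obtain ⟨Q₁, hQ₁⟩ := eventually_atTop.mp hev
  rw [frequently_atTop]
  intro Q₀
  set J := max (max Q₀ Q₁) 1
  obtain ⟨t, ht, hψt⟩ := (frequently_atTop.mp hfr) (max 2 (C * (J : ℝ) ^ k))
  have ht2 : 2 ≤ t := (le_max_left _ _).trans ht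
  have htJ : C * (J : ℝ) ^ k ≤ t := (le_max_right _ _).trans ht
  have ht0 : 0 < t := by linarith
  have hψt' : t ^ (-g₀) ≤ ψ t := by
    have h3 : -Real.log (ψ t) / Real.log t < g₀ := by exact_mod_cast hψt
    have hlog : 0 < Real.log t := Real.log_pos (by linarith)
    rw [div_lt_iff₀ hlog] at h3
    rw [← Real.log_le_log_iff (by positivity) (hψpos t ht0), Real.log_rpow ht0]
    linarith
  set x := (t / C) ^ ((k : ℝ)⁻¹) with hx
  have hx0 : 0 ≤ x := by positivity
  have hxk : x ^ k = t / C := Real.rpow_inv_natCast_pow (by positivity) (by omega)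
  set Q := ⌊x⌋₊ with hQ
  have hJx : (J : ℝ) ≤ x := by
    refine le_of_pow_le_pow_left₀ (n := k) (by omega) hx0 ?_
    rw [hxk, le_div_iff₀ hC]; linarith
  have hJQ : J ≤ Q := Nat.le_floor hJx
  have hQ1 : 1 ≤ Q := (le_max_right _ _).trans hJQ
  have hQ1' : (1 : ℝ) ≤ Q := by exact_mod_cast hQ1
  have hQ0 : (0 : ℝ) < Q := by linarith
  have hle : C * (Q : ℝ) ^ k ≤ t := by
    have : (Q : ℝ) ^ k ≤ x ^ k := pow_le_pow_left₀ hQ0.le (Nat.floor_le hx0) k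
    rw [hxk, le_div_iff₀ hC] at this
    linarith
  have hge : t ≤ (C * 2 ^ k) * (Q : ℝ) ^ k := by
    have h3 : x ≤ 2 * Q := by
      have := (Nat.lt_floor_add_one x).le
      linarith
    have h4 : x ^ k ≤ (2 * Q) ^ k := pow_le_pow_left₀ hx0 h3 k
    rw [hxk, div_le_iff₀ hC, mul_pow] at h4
    linarith
  refine ⟨Q, (le_max_left _ _).trans ((le_max_left _ _).trans hJQ), ?_⟩
  refine le_trans ?_ (hψdec _ t (by positivity) hle)
  refine le_trans ?_ hψt'
  have h5 := hQ₁ Q ((le_max_right _ _).trans ((le_max_left _ _).trans hJQ))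
  have h6 : ((C * 2 ^ k) * (Q : ℝ) ^ k) ^ (-g₀) ≤ t ^ (-g₀) :=
    Real.rpow_le_rpow_of_nonpos ht0 hge (by linarith)
  refine le_trans ?_ h6
  have hC2 : 0 < (C * 2 ^ k) := by positivity
  rw [Real.mul_rpow hC2.le (by positivity), ← Real.rpow_natCast (Q : ℝ) k, ← Real.rpow_mul hQ0.le,
    mul_neg]
  have hK := Real.rpow_pos_of_pos hC2 g₀
  rw [Real.rpow_neg hC2.le, inv_mul_eq_div, le_div_iff₀ hK]
  linarith

theorem hMeasD_compl_Elk_eq_top {n k m N : ℕ} (hk : 1 ≤ k) (hN : 1 ≤ N) (hn : n = k + m + N)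
    {ψ : ℝ → ℝ} (hψpos : ∀ t > 0, 0 < ψ t)
    (hψdec : ∀ s t : ℝ, 0 < s → s ≤ t → ψ t ≤ ψ s) {g s s' : ℝ} (hg : gammaE ψ < (g : EReal))
    (hs : 0 < s) (hsg : s * (n / (k * N) + g) < n) (hs'0 : 0 < s') (hs' : s' < s + (m * N : ℕ)) :
    hMeasD dGr s' (Elk n k (k + m) ψ)ᶜ = ⊤ := by
  have hkpos : (0 : ℝ) < k := by exact_mod_cast hk
  have hk1 : (1 : ℝ) ≤ k := by exact_mod_cast hk
  have hNpos : (0 : ℝ) < N := by exact_mod_cast hN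
  have hN0 : N ≠ 0 := by omega
  have hnpos : (0 : ℝ) < n := by rw [hn]; push_cast; positivity
  have hg0 : 0 < g := by
    have := (gammaE_nonneg hψpos hψdec).trans_lt hg
    exact_mod_cast this
  set α : ℝ := n / (k * N) with hα
  have hα0 : 0 < α := by positivity
  obtain ⟨τ, hτ1, hτ2⟩ : ∃ τ, α + g < τ ∧ s * τ < n := by
    have h1 : α + g < n / s := by rw [lt_div_iff₀ hs]; linarith
    obtain ⟨τ, h2, h3⟩ := exists_between h1
    exact ⟨τ, h2, by rw [lt_div_iff₀ hs] at h3; linarith⟩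
  have hτ0 : 0 < τ := by linarith
  have hsd : s ≤ (k * N : ℕ) := by
    push_cast
    by_contra! h
    have h1 : (k * N : ℝ) * α = n := by rw [hα]; field_simp
    nlinarith
  have hcard : Fintype.card ((Fin k ⊕ Fin m) ⊕ Fin N) = Fintype.card (Fin n) := by simp [hn]
  let e : (Fin k ⊕ Fin m) ⊕ Fin N ≃ Fin n := Fintype.equivOfCardEq hcard
  obtain ⟨κ, hκ0, hκ, hBadvol⟩ := exists_scale_volume_nearSet_le N k m hN0 hk
  obtain ⟨T, hT1, hcent⟩ := exists_mem_ratCenters (m := m) hN0 hk hκ0 hκ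
  set C : ℝ := Fintype.card (WedgeIdx n k) * (k.factorial * T ^ k) + 1 with hC
  have hC0 : 0 < C := by positivity
  have hfr := frequently_rpow_le_of_gammaE_lt hψpos hψdec hk hC0 hg
  -- a sparse sequence of scales
  have hchoose : ∀ j : ℕ, ∃ Q : ℕ, j + 1 ≤ Q ∧ (Q : ℝ) ^ (-(k * g)) ≤ ψ (C * (Q : ℝ) ^ k) ∧
      volume (nearSet (0 : Fin N → Fin m → ℝ) 1 (0 : Fin N → Fin 0 → ℝ) Q
        (apxScale κ (k + m) N Q)) ≤ ENNReal.ofReal ((1 / 2) ^ (j + 2)) := by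
    intro j
    obtain ⟨Q, h1, h2, h3⟩ := (hfr.and_eventually ((eventually_ge_atTop (j + 1)).and
      (tendsto_volume_nearSet_zero N k m hN0 hk hκ0 hκ
        (by positivity : (0 : ℝ) < (1 / 2) ^ (j + 2))))).exists
    exact ⟨Q, h2, h1, h3⟩
  choose Q hQj hQψ hQvol using hchoose
  have hQtend : Tendsto Q atTop atTop :=
    tendsto_atTop_mono (fun j => (Nat.le_succ j).trans (hQj j)) tendsto_id
  have hQ1 : ∀ j, 1 ≤ Q j := fun j => (Nat.le_add_left 1 j).trans (hQj j)
  have hQ1' : ∀ j, (1 : ℝ) ≤ Q j := fun j => by exact_mod_cast hQ1 j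
  have hQ0 : ∀ j, (0 : ℝ) < Q j := fun j => by linarith [hQ1' j]
  let r : ℕ → ℝ := fun j => (Q j : ℝ) ^ (-(k * τ))
  let ρ : ℕ → ℝ := fun j => k * (Q j : ℝ) ^ (-((n : ℝ) / N))
  have hr : ∀ j, 0 < r j := fun j => Real.rpow_pos_of_pos (hQ0 j) _
  have hkα : k * α = n / N := by rw [hα]; field_simp
  have hrρ : ∀ j, r j ≤ ρ j := by
    intro j
    have h1 : r j ≤ (Q j : ℝ) ^ (-((n : ℝ) / N)) := by
      refine Real.rpow_le_rpow_of_exponent_le (hQ1' j) ?_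
      rw [← hkα, neg_le_neg_iff]
      gcongr
      linarith
    have := Real.rpow_pos_of_pos (hQ0 j) (-((n : ℝ) / N))
    simp only [ρ]
    nlinarith
  have hscale : ∀ j, k * apxScale κ (k + m) N (Q j) / Q j ≤ ρ j := by
    intro j
    have h1 : (Q j : ℝ) ^ (-((n : ℝ) / N)) = (Q j : ℝ) ^ (-(((k + m : ℕ) : ℝ) / N)) / Q j := by
      rw [← Real.rpow_sub_one (hQ0 j).ne']
      congr 1
      rw [hn]; push_cast; field_simp; ring
    simp only [ρ, apxScale, h1]
    rw [mul_div_assoc]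
    have := Real.rpow_pos_of_pos (hQ0 j) (-(((k + m : ℕ) : ℝ) / N))
    have := hQ0 j
    gcongr
    nlinarith
  let G : Set (Fin N → Fin m → ℝ) := {y | ∀ j, y ∉ nearSet (0 : Fin N → Fin m → ℝ) 1
    (0 : Fin N → Fin 0 → ℝ) (Q j) (apxScale κ (k + m) N (Q j))}
  have hG : volume (Metric.closedBall 0 1 \ G) ≤ 1 / 2 := by
    have hsub : Metric.closedBall 0 1 \ G ⊆ ⋃ j, nearSet (0 : Fin N → Fin m → ℝ) 1
        (0 : Fin N → Fin 0 → ℝ) (Q j) (apxScale κ (k + m) N (Q j)) := by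
      rintro y ⟨-, hy⟩
      simp only [G, Set.mem_ofPred_eq, not_forall, not_not] at hy
      exact Set.mem_iUnion.mpr hy
    refine (measure_mono hsub).trans ((measure_iUnion_le _).trans
      ((ENNReal.tsum_le_tsum hQvol).trans (le_of_eq ?_)))
    have hsum : HasSum (fun j : ℕ => (1 / 2 : ℝ) ^ (j + 2)) (1 / 2) := by
      have h := hasSum_geometric_two.mul_left (1 / 4 : ℝ)
      have e1 : (fun j : ℕ => (1 / 2 : ℝ) ^ (j + 2)) = fun j => 1 / 4 * (1 / 2) ^ j := by
        ext j
        rw [pow_add]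
        ring
      rw [e1]
      rwa [show (1 / 4 : ℝ) * 2 = 1 / 2 by norm_num] at h
    rw [← ENNReal.ofReal_tsum_of_nonneg (fun j => by positivity) hsum.summable, hsum.tsum_eq,
      ENNReal.ofReal_div_of_pos two_pos]
    simp
  refine hMeasD_eq_top_of_fibres e hs.le (η := ENNReal.ofReal (nestConst (k * N)))
    (by simpa using nestConst_pos (k * N)) hG ?_ hs'0 hs'
  rintro B₂ ⟨hB₂, hB₂G⟩
  have hcont := hasContentLB_limsup (k := k) (N := N) hs hsd hr hrρ
    (S := fun j => ratCenters B₂ (T * Q j)) ?_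
  · -- the limsup set lies in the fibre
    intro U u hu hU hcov
    refine hcont U u hu hU (Set.Subset.trans ?_ hcov)
    rintro B₁ ⟨hB₁, hlim⟩
    refine ⟨hB₁, mem_compl_Elk.mpr fun c hc => ?_⟩
    have hev := hQtend.eventually (eventually_mul_rpow_neg_lt (n * k / (c * C ^ (-α)))
      (mul_lt_mul_of_pos_left hτ1 hkpos))
    obtain ⟨j₀, hj₀⟩ := eventually_atTop.mp hev
    obtain ⟨j, hj, A, hA, hBA⟩ := hlim j₀
    have hTQ : 0 ≤ T * Q j := by have := hQ0 j; positivity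
    obtain ⟨f, hfLI, hfprim, hfH, hfd⟩ := exists_primitive_of_ratCenters e hTQ (hr j).le hA hBA
    refine ⟨f, hfLI, hfprim, hfd.trans_lt ?_⟩
    have hH1 : 1 ≤ heightB f := (exists_reduced_basis hfLI).1
    have hH0 : 0 < heightB f := by linarith
    have hHC : heightB f ≤ C * (Q j : ℝ) ^ k := by
      refine hfH.trans ?_
      rw [mul_pow, hC, add_mul, one_mul]
      have : (0 : ℝ) ≤ (Q j : ℝ) ^ k := by positivity
      linarith
    have hψH : (Q j : ℝ) ^ (-(k * g)) ≤ ψ (heightB f) := (hQψ j).trans (hψdec _ _ hH0 hHC)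
    have hexp : -(n : ℝ) / (k * ((n : ℝ) - ((k + m : ℕ) : ℝ))) = -α := by
      rw [hα, neg_div]; congr 3; rw [hn]; push_cast; ring
    have hHα : C ^ (-α) * (Q j : ℝ) ^ (-(k * α)) ≤ heightB f ^ (-α) := by
      calc C ^ (-α) * (Q j : ℝ) ^ (-(k * α)) = (C * (Q j : ℝ) ^ k) ^ (-α) := by
            rw [Real.mul_rpow hC0.le (by have := hQ0 j; positivity),
              ← Real.rpow_natCast (Q j : ℝ) k, ← Real.rpow_mul (hQ0 j).le, mul_neg]
        _ ≤ _ := Real.rpow_le_rpow_of_nonpos hH0 hHC (by linarith)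
    rw [hexp]
    have hCα : 0 < C ^ (-α) := Real.rpow_pos_of_pos hC0 _
    have hQα : 0 < (Q j : ℝ) ^ (-(k * α)) := Real.rpow_pos_of_pos (hQ0 j) _
    have hQg : 0 < (Q j : ℝ) ^ (-(k * g)) := Real.rpow_pos_of_pos (hQ0 j) _
    have hHα0 : 0 < heightB f ^ (-α) := Real.rpow_pos_of_pos hH0 _
    have hadd : (Q j : ℝ) ^ (-(k * (α + g))) = (Q j : ℝ) ^ (-(k * α)) * (Q j : ℝ) ^ (-(k * g)) := by
      rw [← Real.rpow_add (hQ0 j)]; congr 1; ring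
    have hfin := hj₀ j hj
    rw [hadd, div_mul_eq_mul_div, div_lt_iff₀ (by positivity)] at hfin
    calc (n : ℝ) * (k * r j) = n * k * (Q j : ℝ) ^ (-(k * τ)) := by simp only [r]; ring
      _ < (Q j : ℝ) ^ (-(k * α)) * (Q j : ℝ) ^ (-(k * g)) * (c * C ^ (-α)) := hfin
      _ = c * (C ^ (-α) * (Q j : ℝ) ^ (-(k * α))) * (Q j : ℝ) ^ (-(k * g)) := by ring
      _ ≤ c * heightB f ^ (-α) * ψ (heightB f) := by gcongr
  · -- ubiquity of the centres
    intro b t ht hsub j₀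
    have hn0 : (0 : ℝ) < (n : ℝ) / N := by positivity
    have hev1 := hQtend.eventually (eventually_mul_rpow_neg_lt (4 * k / t) hn0)
    have hev2 := hQtend.eventually (eventually_mul_rpow_neg_lt
      (8 * (6 * k) ^ (k * N) * t ^ s / t ^ (k * N)) (mul_lt_mul_of_pos_left hτ2 hkpos))
    have hev3 := hQtend.eventually (hBadvol t ht)
    obtain ⟨j, hj, h1, h2, h3⟩ :=
      ((eventually_ge_atTop j₀).and (hev1.and (hev2.and hev3))).exists
    have htd : 0 < t ^ (k * N) := by positivity
    refine ⟨j, hj, ?_, ?_, nearSet b t B₂ (Q j) (apxScale κ (k + m) N (Q j)), h3 b B₂, ?_⟩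
    · rw [neg_zero, Real.rpow_zero, div_mul_eq_mul_div, div_lt_one ht] at h1
      simp only [ρ]; linarith
    · have e1 : (r j) ^ s = (Q j : ℝ) ^ (-(k * (s * τ))) := by
        simp only [r]
        rw [← Real.rpow_mul (hQ0 j).le]; congr 1; ring
      have e2 : ((Q j : ℝ) ^ (-((n : ℝ) / N))) ^ (k * N) = (Q j : ℝ) ^ (-(k * (n : ℝ))) := by
        rw [← Real.rpow_natCast _ (k * N), ← Real.rpow_mul (hQ0 j).le]
        congr 1
        push_cast; field_simp
      rw [div_mul_eq_mul_div, div_lt_iff₀ htd, ← e1, ← e2] at h2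
      calc 8 * (6 * ρ j) ^ (k * N) * t ^ s
          = 8 * (6 * k) ^ (k * N) * t ^ s * ((Q j : ℝ) ^ (-((n : ℝ) / N))) ^ (k * N) := by
            simp only [ρ]; rw [← mul_assoc, mul_pow (6 * (k : ℝ))]; ring
        _ ≤ _ := h2.le
    · intro x hx hxBad
      have hxt : x ∈ Metric.closedBall b t :=
        Metric.closedBall_subset_closedBall (by linarith) hx
      obtain ⟨A, hA, hxA⟩ := hcent (Q j) (hQ1 j) b x t B₂ (hsub hxt) hB₂ hxt hxBad (hB₂G j)
      exact ⟨A, hA, hxA.trans (hscale j)⟩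

theorem hMeasD_compl_Elk_eq_top_of_lt {n k m N : ℕ} (hn : n = k + m + N)
    {ψ : ℝ → ℝ} (hψpos : ∀ t > 0, 0 < ψ t) {s' : ℝ} (hs'0 : 0 < s') (hs' : s' < (m * N : ℕ)) :
    hMeasD dGr s' (Elk n k (k + m) ψ)ᶜ = ⊤ := by
  have hcard : Fintype.card ((Fin k ⊕ Fin m) ⊕ Fin N) = Fintype.card (Fin n) := by simp [hn]
  let e : (Fin k ⊕ Fin m) ⊕ Fin N ≃ Fin n := Fintype.equivOfCardEq hcard
  refine hMeasD_eq_top_of_fibres e le_rfl one_ne_zero (G := Set.univ) (by simp) ?_ hs'0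
    (by rwa [zero_add])
  rintro B₂ -
  intro U u hu hU hcov
  have h0 : (0 : Fin N → Fin k → ℝ) ∈ ⋃ i, U i := by
    refine hcov ⟨by simp, mem_compl_Elk.mpr fun c hc => ?_⟩
    obtain ⟨f, hfLI, hfprim, -, hfd⟩ := exists_primitive_of_ratCenters e zero_le_one le_rfl
      (zero_mem_ratCenters B₂) (dist_self _).le
    have hH0 : 0 < heightB f := by linarith [(exists_reduced_basis hfLI).1]
    refine ⟨f, hfLI, hfprim, hfd.trans_lt ?_⟩
    have := hψpos _ hH0
    rw [mul_zero, mul_zero]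
    positivity
  obtain ⟨i, hi⟩ := Set.mem_iUnion.mp h0
  refine le_trans ?_ (ENNReal.le_tsum i)
  have : (U i).Nonempty := ⟨0, hi⟩
  simp [this]

theorem hDimD_eq_of_threshold {X : Type*} {d : X → X → ℝ} {E : Set X} {D : ℝ}
    (hlow : ∀ s : ℝ, 0 < s → s < D → hMeasD d s E = ⊤)
    (hup : ∀ s : ℝ, D < s → hMeasD d s E ≠ ⊤) : hDimD d E = ENNReal.ofReal D := by
  apply le_antisymm
  · refine iSup₂_le fun s hs => ?_
    rw [← ENNReal.ofReal_coe_nnreal]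
    refine ENNReal.ofReal_le_ofReal ?_
    by_contra! h
    exact hup s h hs
  · refine le_of_forall_lt fun a ha => ?_
    obtain ⟨b, hab, hb⟩ := exists_between ha
    have hbt : b ≠ ⊤ := (hb.trans ENNReal.ofReal_lt_top).ne
    lift b to ℝ≥0 using hbt
    refine hab.trans_le (le_iSup₂_of_le b ?_ le_rfl)
    refine hlow b ?_ ?_
    · exact_mod_cast (pos_of_gt hab : (0 : ℝ≥0∞) < b)
    · rw [ENNReal.lt_ofReal_iff_toReal_lt (by simp)] at hb
      simpa using hb

theorem dimH_Elk_compl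
    (n k l : ℕ) (hk : 1 ≤ k) (hkl : k ≤ l) (hln : l < n)
    (ψ : ℝ → ℝ) (hψpos : ∀ t > 0, 0 < ψ t)
    (hψdec : ∀ s t : ℝ, 0 < s → s ≤ t → ψ t ≤ ψ s) :
    (0 : EReal) ≤ gammaE ψ ∧
    (gammaE ψ = ⊤ →
      hDimD dGr (Elk n k l ψ)ᶜ =
        ENNReal.ofReal (((l : ℝ) - (k : ℝ)) * ((n : ℝ) - (l : ℝ)))) ∧
    (∀ c : ℝ, gammaE ψ = (c : EReal) →
      hDimD dGr (Elk n k l ψ)ᶜ =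
        ENNReal.ofReal
          (((l : ℝ) - (k : ℝ)) * ((n : ℝ) - (l : ℝ)) +
            (n : ℝ) / ((n : ℝ) / ((k : ℝ) * ((n : ℝ) - (l : ℝ))) + c))) := by
  obtain ⟨m, rfl⟩ := Nat.exists_eq_add_of_le hkl
  obtain ⟨N, hn⟩ := Nat.exists_eq_add_of_le hln.le
  have hN : 1 ≤ N := by omega
  have e1 : ((k + m : ℕ) : ℝ) - k = m := by push_cast; ring
  have e2 : (n : ℝ) - ((k + m : ℕ) : ℝ) = N := by rw [hn]; push_cast; ring
  have e3 : (m : ℝ) * N = (m * N : ℕ) := by push_cast; ring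
  have hkpos : (0 : ℝ) < k := by exact_mod_cast hk
  have hNpos : (0 : ℝ) < N := by exact_mod_cast hN
  have hnpos : (0 : ℝ) < n := by rw [hn]; push_cast; positivity
  have hα : 0 < (n : ℝ) / (k * N) := by positivity
  have hup : ∀ g p : ℝ, (g : EReal) < gammaE ψ → 0 < p → (n : ℝ) < p * (n / (k * N) + g) →
      hMeasD dGr ((m * N : ℕ) + p) (Elk n k (k + m) ψ)ᶜ ≠ ⊤ := by
    intro g p hg hp hpg
    rw [add_comm ((m * N : ℕ) : ℝ) p]
    exact hMeasD_compl_Elk_ne_top hk hn hψpos hψdec hg hp hpg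
  rw [e1, e2, e3]
  refine ⟨gammaE_nonneg hψpos hψdec, fun htop => ?_, fun c hc => ?_⟩
  · refine hDimD_eq_of_threshold
      (fun s h0 h1 => hMeasD_compl_Elk_eq_top_of_lt hn hψpos h0 h1) fun s hs => ?_
    have hp : 0 < s - (m * N : ℕ) := sub_pos.mpr hs
    have := hup (n / (s - (m * N : ℕ))) (s - (m * N : ℕ)) (by rw [htop]; exact EReal.coe_lt_top _)
      hp (by rw [mul_add, mul_div_cancel₀ _ hp.ne']; nlinarith [mul_pos hp hα])
    rwa [add_sub_cancel] at this
  · have hc0 : 0 ≤ c := by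
      have := gammaE_nonneg hψpos hψdec
      rw [hc] at this
      exact_mod_cast this
    set τ : ℝ := n / (k * N) + c with hτ
    have hτ0 : 0 < τ := by positivity
    refine hDimD_eq_of_threshold (fun s h0 h1 => ?_) fun s hs => ?_
    · obtain ⟨q, hq1, hq2⟩ := exists_between
        (max_lt (by positivity : 0 < n / τ) (sub_lt_iff_lt_add'.mpr h1) : max 0 (s - (m * N : ℕ)) < n / τ)
      have hq0 : 0 < q := (le_max_left _ _).trans_lt hq1
      have hqs : s - (m * N : ℕ) < q := (le_max_right _ _).trans_lt hq1
      rw [lt_div_iff₀ hτ0] at hq2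
      set δ := (n - q * τ) / (2 * q) with hδ
      have hδ0 : 0 < δ := by have := sub_pos.mpr hq2; positivity
      have hqδ : q * δ = (n - q * τ) / 2 := by rw [hδ]; field_simp
      refine hMeasD_compl_Elk_eq_top hk hN hn hψpos hψdec (g := c + δ) (s := q) ?_ hq0 ?_ h0
        (by linarith)
      · rw [hc]; exact_mod_cast (by linarith : c < c + δ)
      · rw [← add_assoc, ← hτ, mul_add, hqδ]; linarith
    · set p := s - (m * N : ℕ) with hpdef
      have hp1 : n / τ < p := lt_sub_iff_add_lt'.mpr hs
      have hp0 : 0 < p := (by positivity : 0 < n / τ).trans hp1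
      rw [div_lt_iff₀ hτ0] at hp1
      set δ := (p * τ - n) / (2 * p) with hδ
      have hδ0 : 0 < δ := by have := sub_pos.mpr hp1; positivity
      have hpδ : p * δ = (p * τ - n) / 2 := by rw [hδ]; field_simp
      have := hup (c - δ) p (by rw [hc]; exact_mod_cast (by linarith : c - δ < c)) hp0
        (by rw [← add_sub_assoc, ← hτ, mul_sub, hpδ]; linarith)
      rwa [hpdef, add_sub_cancel] at this

end
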